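/- arXiv:1506.08317 — 3 statements merged into one kernel-verified Lean document; each statement's English description precedes it below -/
import Mathlib

section
/- Let 1 < r < 2 and A_r > 0, and assume that for every weight w and every f with ∫_ℝ |f| M_r w dx < ∞ one has sup_{λ>0} λ·w({x : |Hf(x)| > λ}) ≤ A_r ∫_ℝ |f| M_r w dx. Let α_r = r/(2−r). Then there is an absolute constant c > 0 such that for every weight w and every f: sup_{λ>0} λ·( w({x : |Hf(x)| > λ}) )^{1/2} ≤ c·A_r·( ∫_ℝ |f(x)|² (M_{α_r}w(x))^{2α_r/r} w(x)^{−α_r} dx )^{1/2}. -/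
open MeasureTheory Set Filter Topology
open scoped ENNReal

noncomputable section

namespace RT

/-- The Hilbert transform `Hf(x)`, defined as the principal-value limit
`lim_{ε→0⁺} ∫_{|x-y|>ε} f(y)/(x-y) dy` (junk value at points where the limit
does not exist). -/
def Hil (f : ℝ → ℝ) (x : ℝ) : ℝ :=
  limUnder (𝓝[>] (0 : ℝ)) fun ε => ∫ y in {y : ℝ | ε < |x - y|}, f y / (x - y)

/-- The (uncentered) Hardy–Littlewood maximal function over bounded intervals:
`Mf(x) = sup_{I ∋ x} (1/|I|) ∫_I |f|`. -/
def HLMax (f : ℝ → ℝ) (x : ℝ) : ℝ≥0∞ :=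
  ⨆ (a : ℝ) (b : ℝ) (_ : a < b) (_ : x ∈ Icc a b),
    (ENNReal.ofReal (b - a))⁻¹ * ∫⁻ y in Ioo a b, ENNReal.ofReal |f y|

/-- `M_r f = (M(|f|^r))^{1/r}`. -/
def Mr (r : ℝ) (f : ℝ → ℝ) (x : ℝ) : ℝ≥0∞ :=
  HLMax (fun y => |f y| ^ r) x ^ (1 / r)

/-- The Orlicz maximal operator
`M_Φ f(x) = sup_{I ∋ x} inf {λ > 0 : (1/|I|) ∫_I Φ(|f|/λ) ≤ 1}`. -/
def MOrlicz (Φ : ℝ → ℝ) (f : ℝ → ℝ) (x : ℝ) : ℝ≥0∞ :=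
  ⨆ (a : ℝ) (b : ℝ) (_ : a < b) (_ : x ∈ Icc a b),
    sInf {lam : ℝ≥0∞ | ∃ l : ℝ, 0 < l ∧ lam = ENNReal.ofReal l ∧
      (∫⁻ y in Ioo a b, ENNReal.ofReal (Φ (|f y| / l))) ≤ ENNReal.ofReal (b - a)}

/-- The centered maximal operator with respect to a weight `v`:
`M^c_v h(x) = sup_{ρ>0} (1/v(B(x,ρ))) ∫_{B(x,ρ)} |h| v`. -/
def Mc (v h : ℝ → ℝ) (x : ℝ) : ℝ≥0∞ :=
  ⨆ (ρ : ℝ) (_ : 0 < ρ),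
    (∫⁻ y in Ioo (x - ρ) (x + ρ), ENNReal.ofReal (v y))⁻¹ *
      ∫⁻ y in Ioo (x - ρ) (x + ρ), ENNReal.ofReal |h y| * ENNReal.ofReal (v y)

/-- A Young function: convex, increasing, `Φ(0) = 0`, `Φ(t)/t → ∞`. -/
structure IsYoung (Φ : ℝ → ℝ) : Prop where
  convexOn : ConvexOn ℝ (Ici 0) Φ
  mono : MonotoneOn Φ (Ici 0)
  map_zero : Φ 0 = 0
  superlinear : Tendsto (fun t => Φ t / t) atTop atTop

/-- A weight: a nonnegative locally integrable function on `ℝ`. -/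
def IsWeight (w : ℝ → ℝ) : Prop :=
  (∀ x, 0 ≤ w x) ∧ LocallyIntegrable w volume

/-! Triadic machinery: intervals are represented by their endpoint pairs,
`(a, b)` corresponding to `[a, b)`. -/

/-- The length of the interval. -/
def len (I : ℝ × ℝ) : ℝ := I.2 - I.1

/-- The set `[a, b)` of the interval `I = (a, b)`. -/
def ivl (I : ℝ × ℝ) : Set ℝ := Ico I.1 I.2

/-- A triadic interval `[3^j n, 3^j (n+1))`, `j, n ∈ ℤ`. -/
def IsTriadic (I : ℝ × ℝ) : Prop :=
  ∃ j n : ℤ, I.1 = (3 : ℝ) ^ j * n ∧ I.2 = (3 : ℝ) ^ j * (n + 1)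

/-- The middle third `I^Δ` of `I`: same center, one third of the length. -/
def mid (I : ℝ × ℝ) : ℝ × ℝ := (I.1 + (I.2 - I.1) / 3, I.2 - (I.2 - I.1) / 3)

/-- `P` assigns to each triadic interval `J ⊆ [0,1)` a triadic interval
adjacent to `J^Δ` (on its left or on its right) with `|P J| = 3^{-k} |J|`. -/
def GoodP (k : ℕ) (P : ℝ × ℝ → ℝ × ℝ) : Prop :=
  ∀ J : ℝ × ℝ, IsTriadic J → ivl J ⊆ Ico (0 : ℝ) 1 →
    IsTriadic (P J) ∧ len (P J) = len J / 3 ^ k ∧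
      ((P J).2 = (mid J).1 ∨ (P J).1 = (mid J).2)

/-- The families `𝒥_l`: `𝒥_1 = {[0,1)}`, and `𝒥_{l+1}` consists of the `3^{k-1}`
triadic subintervals of `J^Δ` of length `|J|/3^k`, for each `J ∈ 𝒥_l`.
(`𝒥_0` is empty.) -/
def Jfam (k : ℕ) : ℕ → Set (ℝ × ℝ)
  | 0 => ∅
  | 1 => {((0 : ℝ), (1 : ℝ))}
  | l + 2 => {J' | IsTriadic J' ∧ ∃ J ∈ Jfam k (l + 1),
      len J' = len J / 3 ^ k ∧ ivl J' ⊆ ivl (mid J)}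

/-- The families `ℐ_l = {P J : J ∈ 𝒥_l}`. -/
def Ifam (k : ℕ) (P : ℝ × ℝ → ℝ × ℝ) (l : ℕ) : Set (ℝ × ℝ) :=
  P '' Jfam k l

/-- `Ω_l = ⋃_{I ∈ ℐ_l} I`. -/
def Omega (k : ℕ) (P : ℝ × ℝ → ℝ × ℝ) (l : ℕ) : Set ℝ :=
  ⋃ I ∈ Ifam k P l, ivl I

/-- The constant `3^k / (3^{k-1} + 1)`. -/
def alpha (k : ℕ) : ℝ := 3 ^ k / (3 ^ (k - 1) + 1)

/-- The Reguera–Thiele weight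
`w_k = ∑_{l=1}^∞ (3^k/(3^{k-1}+1))^l χ_{Ω_l}`. -/
def wk (k : ℕ) (P : ℝ × ℝ → ℝ × ℝ) (x : ℝ) : ℝ :=
  ∑' l : ℕ, alpha k ^ (l + 1) * (Omega k P (l + 1)).indicator (fun _ => (1 : ℝ)) x

/-!
By exhaustion `w` may be replaced by a bounded piece `u = w 1_D`. With `α = r / (2 - r)`, two
arguments bound `λ² u({|Hf| > λ})` by `∫ |f|² (M_α w)^(2α/r) w^(-α)`, and their constants
degenerate at opposite ends of `1 < r < 2`.

* Duality (`r` away from `2`). Put `F = D ∩ {|Hf| > λ}` and `μ = w^α dx`. Since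
  `w^r 1_F = (w^(r-α) 1_F) w^α`, one has `M(w^r 1_F) ≤ M_μ(w^(r-α) 1_F) M(w^α)`, where `M_μ` is the
  maximal function with respect to `μ`. The Cauchy–Schwarz inequality and the boundedness of `M_μ`
  on `L^(2/r)(μ)` turn this into
  `∫ |f| M_r(w 1_F) ≲ (∫ |f|² (M_α w)^(2α/r) w^(-α))^(1/2) w(F)^(1/2)`, and the hypothesis
  applied to the weight `w 1_F` gives the claim after division by `w(F)^(1/2)`.
* A majorant weight (`r` away from `1`). By Coifman–Rochberg, `W = M_α u` satisfies
  `M(W^r) ≤ 6 / (r - 1) W^r`, so that the hypothesis reads as a weak `(1, 1)` bound for `W`. A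
  good-`λ` comparison of `Hf` with the maximal function of `f` with respect to `W dx` upgrades it to
  weak type `(2, 2)`, and `u ≤ W ≤ (M_α w)^(2α/r) w^(-α)` almost everywhere. The good-`λ` inequality
  needs `f` Lipschitz with compact support; general `f` is approximated, the hypothesis for the
  weight `u` controlling the error.
-/

/-! ### The interval maximal function -/

/-- The maximal function of `h ≥ 0` with respect to `μ` over bounded open intervals containing the
point. For `μ = volume` it is `HLMax`; general `μ` is needed for weighted maximal functions. -/
def intervalMax (μ : Measure ℝ) (h : ℝ → ℝ≥0∞) (x : ℝ) : ℝ≥0∞ :=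
  ⨆ (a : ℝ) (b : ℝ) (_ : x ∈ Ioo a b), (μ (Ioo a b))⁻¹ * ∫⁻ y in Ioo a b, h y ∂μ

section IntervalMax

variable {μ : Measure ℝ} {h g : ℝ → ℝ≥0∞} {x a b : ℝ} {t C : ℝ≥0∞}

lemma average_le_intervalMax (μ : Measure ℝ) (h : ℝ → ℝ≥0∞) (hx : x ∈ Ioo a b) :
    (μ (Ioo a b))⁻¹ * ∫⁻ y in Ioo a b, h y ∂μ ≤ intervalMax μ h x :=
  le_iSup_of_le a (le_iSup_of_le b (le_iSup_of_le hx le_rfl))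

lemma intervalMax_le
    (H : ∀ a b, x ∈ Ioo a b → (μ (Ioo a b))⁻¹ * ∫⁻ y in Ioo a b, h y ∂μ ≤ C) :
    intervalMax μ h x ≤ C :=
  iSup_le fun a => iSup_le fun b => iSup_le fun hx => H a b hx

lemma lt_intervalMax_iff :
    t < intervalMax μ h x ↔
      ∃ a b, x ∈ Ioo a b ∧ t < (μ (Ioo a b))⁻¹ * ∫⁻ y in Ioo a b, h y ∂μ := by
  simp only [intervalMax, lt_iSup_iff, exists_prop]

lemma isOpen_lt_intervalMax (μ : Measure ℝ) (h : ℝ → ℝ≥0∞) (t : ℝ≥0∞) :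
    IsOpen {x | t < intervalMax μ h x} := by
  rw [isOpen_iff_mem_nhds]
  intro x hx
  obtain ⟨a, b, hab, hh⟩ := lt_intervalMax_iff.1 hx
  filter_upwards [Ioo_mem_nhds hab.1 hab.2] with y hy
  exact lt_intervalMax_iff.2 ⟨a, b, hy, hh⟩

@[fun_prop]
lemma measurable_intervalMax (μ : Measure ℝ) (h : ℝ → ℝ≥0∞) : Measurable (intervalMax μ h) :=
  measurable_of_Ioi fun t => (isOpen_lt_intervalMax μ h t).measurableSet

lemma intervalMax_mono (hg : ∀ᵐ y ∂μ, h y ≤ g y) (x : ℝ) :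
    intervalMax μ h x ≤ intervalMax μ g x := by
  refine intervalMax_le fun a b hx => le_trans ?_ (average_le_intervalMax μ g hx)
  gcongr 1
  exact lintegral_mono_ae (ae_restrict_of_ae hg)

lemma intervalMax_congr (hg : h =ᵐ[μ] g) (x : ℝ) : intervalMax μ h x = intervalMax μ g x :=
  le_antisymm (intervalMax_mono hg.le x) (intervalMax_mono hg.symm.le x)

lemma intervalMax_add_le (hg : AEMeasurable g μ) (x : ℝ) :
    intervalMax μ (fun y => h y + g y) x ≤ intervalMax μ h x + intervalMax μ g x := by
  refine intervalMax_le fun a b hx => ?_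
  rw [lintegral_add_right' _ hg.restrict, mul_add]
  exact add_le_add (average_le_intervalMax μ h hx) (average_le_intervalMax μ g hx)

lemma intervalMax_const_le (μ : Measure ℝ) (c : ℝ≥0∞) (x : ℝ) :
    intervalMax μ (fun _ => c) x ≤ c := by
  refine intervalMax_le fun a b _ => ?_
  rw [setLIntegral_const, mul_left_comm]
  exact mul_le_of_le_one_right' (ENNReal.inv_mul_le_one _)

lemma mul_measure_le_of_le_average (H : t ≤ (μ (Ioo a b))⁻¹ * ∫⁻ y in Ioo a b, h y ∂μ) :
    t * μ (Ioo a b) ≤ ∫⁻ y in Ioo a b, h y ∂μ := by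
  refine ENNReal.mul_le_of_le_div ?_
  rwa [ENNReal.div_eq_inv_mul]

lemma setLIntegral_le_intervalMax_mul (hx : x ∈ Ioo a b) (hfin : μ (Ioo a b) ≠ ⊤) :
    ∫⁻ y in Ioo a b, h y ∂μ ≤ intervalMax μ h x * μ (Ioo a b) := by
  by_cases h0 : μ (Ioo a b) = 0
  · rw [setLIntegral_measure_zero _ _ h0]
    exact zero_le
  · rw [← ENNReal.div_le_iff h0 hfin, ENNReal.div_eq_inv_mul]
    exact average_le_intervalMax μ h hx

lemma intervalMax_pos (hh : ∫⁻ y, h y ≠ 0) (x : ℝ) : 0 < intervalMax volume h x := by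
  by_contra hcon
  have hzero : ∀ n : ℕ, ∫⁻ y in Ioo (x - (n + 1)) (x + (n + 1)), h y = 0 := fun n => by
    have hx : x ∈ Ioo (x - (n + 1 : ℝ)) (x + (n + 1)) := ⟨by linarith, by linarith⟩
    have := setLIntegral_le_intervalMax_mul (μ := volume) (h := h) hx (by simp)
    rwa [le_zero_iff.1 (not_lt.1 hcon), zero_mul, nonpos_iff_eq_zero] at this
  have hunion : (⋃ n : ℕ, Ioo (x - (n + 1 : ℝ)) (x + (n + 1))) = univ := by
    refine eq_univ_of_forall fun y => mem_iUnion.2 ?_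
    obtain ⟨n, hn⟩ := exists_nat_gt |y - x|
    exact ⟨n, by constructor <;> linarith [abs_lt.1 hn]⟩
  refine hh ?_
  rw [← setLIntegral_univ, ← hunion]
  refine le_zero_iff.1 ((lintegral_iUnion_le _ _).trans ?_)
  simp only [hzero, tsum_zero, le_refl]

lemma HLMax_eq_intervalMax (f : ℝ → ℝ) (x : ℝ) :
    HLMax f x = intervalMax volume (fun y => ENNReal.ofReal |f y|) x := by
  apply le_antisymm
  · refine iSup_le fun a => iSup_le fun b => iSup_le fun _ => iSup_le fun hx => ?_
    set N := ∫⁻ y in Ioo a b, ENNReal.ofReal |f y|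
    have enlarge : ∀ δ : ℝ, 0 < δ → N / ENNReal.ofReal (b - a + δ) ≤
        intervalMax volume (fun y => ENNReal.ofReal |f y|) x := fun δ hδ => by
      have hx' : x ∈ Ioo (a - δ / 2) (b + δ / 2) := ⟨by linarith [hx.1], by linarith [hx.2]⟩
      refine le_trans ?_ (average_le_intervalMax volume _ hx')
      rw [Real.volume_Ioo, show b + δ / 2 - (a - δ / 2) = b - a + δ by ring,
        ENNReal.div_eq_inv_mul]
      exact mul_le_mul_right (lintegral_mono_set (Ioo_subset_Ioo (by linarith) (by linarith))) _
    have hlim : Tendsto (fun δ : ℝ => N / ENNReal.ofReal (b - a + δ)) (𝓝[>] 0)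
        (𝓝 (N / ENNReal.ofReal (b - a))) := by
      have hcont : Continuous fun δ : ℝ => ENNReal.ofReal (b - a + δ) :=
        ENNReal.continuous_ofReal.comp (by fun_prop)
      have h0 := (hcont.tendsto 0).mono_left (nhdsWithin_le_nhds (s := Ioi (0 : ℝ)))
      rw [add_zero] at h0
      exact ENNReal.Tendsto.const_div h0 (Or.inl ENNReal.ofReal_ne_top)
    rw [← ENNReal.div_eq_inv_mul]
    exact le_of_tendsto hlim (eventually_mem_nhdsWithin.mono enlarge)
  · refine intervalMax_le fun a b hx => ?_
    rw [Real.volume_Ioo]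
    exact le_iSup_of_le a (le_iSup_of_le b (le_iSup_of_le (hx.1.trans hx.2)
      (le_iSup_of_le ⟨hx.1.le, hx.2.le⟩ le_rfl)))

lemma Mr_eq_intervalMax {w : ℝ → ℝ} (hw : ∀ x, 0 ≤ w x) {r : ℝ} (hr : 0 ≤ r) (x : ℝ) :
    Mr r w x = intervalMax volume (fun y => ENNReal.ofReal (w y) ^ r) x ^ (1 / r) := by
  simp only [Mr, HLMax_eq_intervalMax, abs_of_nonneg (hw _),
    abs_of_nonneg (Real.rpow_nonneg (hw _) r), ENNReal.ofReal_rpow_of_nonneg (hw _) hr]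

end IntervalMax

section MaximalPower

variable {u w : ℝ → ℝ} {r b : ℝ}

lemma Mr_mono_ae (hu : ∀ x, 0 ≤ u x) (hw : ∀ x, 0 ≤ w x) (hr : 0 ≤ r) (huw : ∀ᵐ x, u x ≤ w x)
    (x : ℝ) : Mr r u x ≤ Mr r w x := by
  rw [Mr_eq_intervalMax hu hr, Mr_eq_intervalMax hw hr]
  refine ENNReal.rpow_le_rpow (intervalMax_mono ?_ x) (by positivity)
  exact huw.mono fun y hy => ENNReal.rpow_le_rpow (ENNReal.ofReal_le_ofReal hy) hr

lemma Mr_le_ofReal (hu : ∀ x, 0 ≤ u x) (hr : 0 < r) (hub : ∀ᵐ x, u x ≤ b) (x : ℝ) :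
    Mr r u x ≤ ENNReal.ofReal b := by
  rw [Mr_eq_intervalMax hu hr.le, one_div, ENNReal.rpow_inv_le_iff hr]
  refine (intervalMax_mono (hub.mono fun y hy => ?_) x).trans (intervalMax_const_le _ _ x)
  exact ENNReal.rpow_le_rpow (ENNReal.ofReal_le_ofReal hy) hr.le

lemma Mr_pos (hu : ∀ x, 0 ≤ u x) (hr : 0 ≤ r) (hint : ∫⁻ y, ENNReal.ofReal (u y) ^ r ≠ 0)
    (x : ℝ) : 0 < Mr r u x := by
  rw [Mr_eq_intervalMax hu hr]
  exact ENNReal.rpow_pos_of_nonneg (intervalMax_pos hint x) (by positivity)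

lemma measurable_Mr (hu : ∀ x, 0 ≤ u x) (hr : 0 ≤ r) : Measurable (Mr r u) := by
  simp only [funext (Mr_eq_intervalMax hu hr)]
  fun_prop

end MaximalPower

/-! ### Covering by intervals, and the weak type (1,1) inequality -/

lemma card_filter_mem_Ioo_le_two {ι : Type*} [DecidableEq ι] {s : Finset ι} {a b : ι → ℝ}
    (hs : ∀ i ∈ s, ¬ Ioo (a i) (b i) ⊆ ⋃ j ∈ s.erase i, Ioo (a j) (b j)) (x : ℝ) :
    (s.filter fun i => x ∈ Ioo (a i) (b i)).card ≤ 2 := by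
  by_contra! hcard
  set F := s.filter fun i => x ∈ Ioo (a i) (b i)
  have hFne : F.Nonempty := Finset.card_pos.1 (by omega)
  obtain ⟨p, hpF, hp⟩ := F.exists_min_image a hFne
  obtain ⟨q, hqF, hq⟩ := F.exists_max_image b hFne
  obtain ⟨k, hkF, hk⟩ : ∃ k ∈ F, k ∉ ({p, q} : Finset ι) := by
    by_contra! hno
    exact absurd ((Finset.card_le_card hno).trans Finset.card_le_two) (by omega)
  simp only [Finset.mem_insert, Finset.mem_singleton, not_or] at hk
  obtain ⟨hps, hpx⟩ := Finset.mem_filter.1 hpF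
  obtain ⟨hqs, hqx⟩ := Finset.mem_filter.1 hqF
  -- The interval `k` is covered by the ones reaching furthest to the left and to the right of `x`.
  refine hs k (Finset.mem_filter.1 hkF).1 fun y hy => ?_
  simp only [mem_iUnion, exists_prop]
  rcases le_or_gt y x with hyx | hyx
  · exact ⟨p, Finset.mem_erase.2 ⟨Ne.symm hk.1, hps⟩, (hp k hkF).trans_lt hy.1, hyx.trans_lt hpx.2⟩
  · exact ⟨q, Finset.mem_erase.2 ⟨Ne.symm hk.2, hqs⟩, hqx.1.trans hyx, hy.2.trans_le (hq k hkF)⟩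

lemma exists_subcover_Ioo_overlap_le_two {ι : Type*} (s : Finset ι) (a b : ι → ℝ) :
    ∃ t : Finset ι, ⋃ i ∈ s, Ioo (a i) (b i) ⊆ ⋃ i ∈ t, Ioo (a i) (b i) ∧
      ∀ x, (t.filter fun i => x ∈ Ioo (a i) (b i)).card ≤ 2 := by
  classical
  induction s using Finset.strongInduction with
  | H s ih =>
  by_cases hred : ∃ i ∈ s, Ioo (a i) (b i) ⊆ ⋃ j ∈ s.erase i, Ioo (a j) (b j)
  · obtain ⟨i, his, hi⟩ := hred
    obtain ⟨t, hcov, ht⟩ := ih (s.erase i) (Finset.erase_ssubset his)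
    refine ⟨t, Subset.trans (iUnion₂_subset fun j hj => ?_) hcov, ht⟩
    rcases eq_or_ne j i with rfl | hji
    · exact hi
    · exact subset_biUnion_of_mem (u := fun j => Ioo (a j) (b j)) (Finset.mem_erase.2 ⟨hji, hj⟩)
  · push Not at hred
    exact ⟨s, Subset.rfl, card_filter_mem_Ioo_le_two hred⟩

section Covering

variable {ι : Type*} {μ ν : Measure ℝ} {a b : ι → ℝ}

lemma measure_biUnion_Ioo_le_two_mul (hμν : ∀ i, μ (Ioo (a i) (b i)) ≤ ν (Ioo (a i) (b i)))
    (s : Finset ι) : μ (⋃ i ∈ s, Ioo (a i) (b i)) ≤ 2 * ν univ := by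
  obtain ⟨t, hcov, ht⟩ := exists_subcover_Ioo_overlap_le_two s a b
  calc μ (⋃ i ∈ s, Ioo (a i) (b i))
      ≤ ∑ i ∈ t, μ (Ioo (a i) (b i)) :=
        (measure_mono hcov).trans (measure_biUnion_finset_le _ _)
    _ ≤ ∑ i ∈ t, ν (Ioo (a i) (b i)) := Finset.sum_le_sum fun i _ => hμν i
    _ = ∫⁻ x, ∑ i ∈ t, (Ioo (a i) (b i)).indicator 1 x ∂ν := by
        rw [lintegral_finsetSum _ fun i _ => measurable_one.indicator measurableSet_Ioo]
        simp only [lintegral_indicator_one measurableSet_Ioo]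
    _ ≤ ∫⁻ _, 2 ∂ν := by
        refine lintegral_mono fun x => ?_
        simp only [indicator_apply, Pi.one_apply, Finset.sum_boole]
        exact_mod_cast ht x
    _ = 2 * ν univ := lintegral_const 2

lemma measure_iUnion_Ioo_le_two_mul (hμν : ∀ i, μ (Ioo (a i) (b i)) ≤ ν (Ioo (a i) (b i))) :
    μ (⋃ i, Ioo (a i) (b i)) ≤ 2 * ν univ := by
  obtain ⟨T, hT, hTe⟩ := TopologicalSpace.isOpen_iUnion_countable
    (fun i => Ioo (a i) (b i)) fun _ => isOpen_Ioo
  have := hT.to_subtype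
  rw [← hTe, biUnion_eq_iUnion, iUnion_eq_iUnion_finset, Directed.measure_iUnion]
  · exact iSup_le (measure_biUnion_Ioo_le_two_mul fun i : T => hμν i)
  · exact Monotone.directed_le fun s s' hss =>
      biUnion_subset_biUnion_left (Finset.coe_subset.2 hss)

end Covering

section WeakType

variable (μ : Measure ℝ) (h : ℝ → ℝ≥0∞) (t : ℝ≥0∞)

lemma mul_measure_lt_intervalMax_le :
    t * μ {x | t < intervalMax μ h x} ≤ 2 * ∫⁻ y, h y ∂μ := by
  let ι := {I : ℝ × ℝ // t < (μ (Ioo I.1 I.2))⁻¹ * ∫⁻ y in Ioo I.1 I.2, h y ∂μ}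
  have hset : {x | t < intervalMax μ h x} = ⋃ I : ι, Ioo I.1.1 I.1.2 := by
    ext x
    simp only [mem_ofPred_eq, lt_intervalMax_iff, mem_iUnion]
    exact ⟨fun ⟨a, b, hx, H⟩ => ⟨⟨(a, b), H⟩, hx⟩, fun ⟨I, hx⟩ => ⟨I.1.1, I.1.2, hx, I.2⟩⟩
  have hcover := measure_iUnion_Ioo_le_two_mul (μ := t • μ) (ν := μ.withDensity h)
    (a := fun I : ι => I.1.1) (b := fun I : ι => I.1.2) fun I => by
      rw [withDensity_apply _ measurableSet_Ioo]
      exact mul_measure_le_of_le_average I.2.le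
  rwa [← hset, withDensity_apply _ .univ, Measure.restrict_univ] at hcover

lemma mul_measure_lt_intervalMax_le_indicator :
    t * μ {x | t < intervalMax μ h x} ≤ 4 * ∫⁻ y, {y | t < 2 * h y}.indicator h y ∂μ := by
  set large := {y | t < 2 * h y}.indicator h
  have hle : ∀ x, intervalMax μ h x ≤ intervalMax μ large x + t / 2 := fun x => by
    calc intervalMax μ h x ≤ intervalMax μ (fun y => large y + t / 2) x := by
          refine intervalMax_mono (Eventually.of_forall fun y => ?_) x
          by_cases hy : t < 2 * h y
          · exact le_add_right (indicator_of_mem (show y ∈ {y | t < 2 * h y} from hy) h).ge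
          · refine le_add_left ?_
            rw [ENNReal.le_div_iff_mul_le (by simp) (by simp), mul_comm]
            exact not_lt.1 hy
      _ ≤ intervalMax μ large x + intervalMax μ (fun _ => t / 2) x :=
          intervalMax_add_le aemeasurable_const x
      _ ≤ _ := by gcongr; exact intervalMax_const_le _ _ _
  have hsub : {x | t < intervalMax μ h x} ⊆ {x | t / 2 < intervalMax μ large x} := fun x hx => by
    by_contra hsmall
    have := (hle x).trans (add_le_add_left (not_lt.1 hsmall) _)
    rw [ENNReal.add_halves] at this
    exact this.not_gt hx
  calc t * μ {x | t < intervalMax μ h x}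
      ≤ t * μ {x | t / 2 < intervalMax μ large x} := by gcongr
    _ = 2 * (t / 2 * μ {x | t / 2 < intervalMax μ large x}) := by
        rw [← mul_assoc, ENNReal.mul_div_cancel (by simp) (by simp)]
    _ ≤ 2 * (2 * ∫⁻ y, large y ∂μ) := by
        gcongr 1
        exact mul_measure_lt_intervalMax_le _ _ _
    _ = 4 * ∫⁻ y, large y ∂μ := by rw [← mul_assoc]; norm_num

end WeakType

/-! ### Layer cake formulas and interpolation -/

lemma setLIntegral_Ioo_mul_rpow {q v : ℝ} (hq : 0 < q) (hv : 0 ≤ v) :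
    ∫⁻ t in Ioo 0 v, ENNReal.ofReal (q * t ^ (q - 1)) = ENNReal.ofReal v ^ q := by
  have hint : IntervalIntegrable (fun t : ℝ => q * t ^ (q - 1)) volume 0 v :=
    (intervalIntegral.intervalIntegrable_rpow' (by linarith)).const_mul q
  have hnonneg : 0 ≤ᵐ[volume.restrict (Ioc 0 v)] fun t : ℝ => q * t ^ (q - 1) := by
    filter_upwards [ae_restrict_mem measurableSet_Ioc] with t ht
    exact mul_nonneg hq.le (Real.rpow_nonneg ht.1.le _)
  rw [setLIntegral_congr Ioo_ae_eq_Ioc, ← ofReal_integral_eq_lintegral_ofReal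
      ((intervalIntegrable_iff_integrableOn_Ioc_of_le hv).1 hint) hnonneg,
    ← intervalIntegral.integral_of_le hv, intervalIntegral.integral_const_mul,
    integral_rpow (Or.inl (by linarith)), ENNReal.ofReal_rpow_of_nonneg hv hq.le,
    sub_add_cancel, Real.zero_rpow hq.ne', sub_zero, mul_div_cancel₀ _ hq.ne']

lemma lintegral_Ioi_indicator_eq_rpow_of_ne_top {q : ℝ} (hq : 0 < q) {u : ℝ≥0∞} (hu : u ≠ ⊤) :
    ∫⁻ t in Ioi (0 : ℝ), {t | ENNReal.ofReal t < u}.indicator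
      (fun t => ENNReal.ofReal (q * t ^ (q - 1))) t = u ^ q := by
  rw [← ENNReal.ofReal_toReal hu, ← setLIntegral_Ioo_mul_rpow hq ENNReal.toReal_nonneg,
    ENNReal.ofReal_toReal hu, ← lintegral_indicator measurableSet_Ioo,
    ← lintegral_indicator measurableSet_Ioi]
  congr 1 with t
  by_cases ht : 0 < t
  · simp only [indicator_apply, mem_Ioi, mem_Ioo, mem_ofPred_eq, ht, true_and, if_true,
      ENNReal.ofReal_lt_iff_lt_toReal ht.le hu]
  · simp only [indicator_apply, mem_Ioi, mem_Ioo, ht, false_and, if_false]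

lemma lintegral_Ioi_indicator_eq_rpow {q : ℝ} (hq : 0 < q) (u : ℝ≥0∞) :
    ∫⁻ t in Ioi (0 : ℝ), {t | ENNReal.ofReal t < u}.indicator
      (fun t => ENNReal.ofReal (q * t ^ (q - 1))) t = u ^ q := by
  rcases eq_or_ne u ⊤ with rfl | hu
  · rw [ENNReal.top_rpow_of_pos hq]
    refine ENNReal.eq_top_of_forall_nnreal_le fun r => ?_
    have hr := lintegral_Ioi_indicator_eq_rpow_of_ne_top hq (u := (r : ℝ≥0∞) ^ (1 / q))
      (ENNReal.rpow_ne_top_of_nonneg (by positivity) ENNReal.coe_ne_top)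
    rw [← ENNReal.rpow_mul, one_div_mul_cancel hq.ne', ENNReal.rpow_one] at hr
    rw [← hr]
    refine lintegral_mono fun t => indicator_le_indicator_of_subset
      (fun s (hs : ENNReal.ofReal s < _) => hs.trans_le le_top) (fun _ => zero_le) t
  · exact lintegral_Ioi_indicator_eq_rpow_of_ne_top hq hu

section Interpolation

variable {α : Type*} [MeasurableSpace α] {μ : Measure α} [SFinite μ] {F h : α → ℝ≥0∞}

lemma lintegral_rpow_eq_lintegral_measure_lt {q : ℝ} (hq : 0 < q) (hF : Measurable F) :
    ∫⁻ x, F x ^ q ∂μ = ∫⁻ t in Ioi (0 : ℝ),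
      ENNReal.ofReal (q * t ^ (q - 1)) * μ {x | ENNReal.ofReal t < F x} := by
  have hmeas : MeasurableSet {z : α × ℝ | ENNReal.ofReal z.2 < F z.1} :=
    measurableSet_lt (by fun_prop) (by fun_prop)
  simp only [← lintegral_Ioi_indicator_eq_rpow hq (F _)]
  rw [lintegral_lintegral_swap]
  · refine lintegral_congr fun t => ?_
    rw [← setLIntegral_const, ← lintegral_indicator (measurableSet_lt measurable_const hF)]
    rfl
  · exact ((by fun_prop : Measurable fun z : α × ℝ =>
      ENNReal.ofReal (q * z.2 ^ (q - 1))).indicator hmeas).aemeasurable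

lemma lintegral_Ioi_mul_indicator {p : ℝ} (hp : 1 < p) (u : ℝ≥0∞) :
    ∫⁻ t in Ioi (0 : ℝ), ENNReal.ofReal (t ^ (p - 2)) *
      {t | ENNReal.ofReal t < 2 * u}.indicator (fun _ => u) t =
      ENNReal.ofReal (2 ^ (p - 1) / (p - 1)) * u ^ p := by
  have hp' : 0 < p - 1 := by linarith
  have hkernel : ∀ t, ENNReal.ofReal (t ^ (p - 2)) *
      {t | ENNReal.ofReal t < 2 * u}.indicator (fun _ => u) t =
      {t | ENNReal.ofReal t < 2 * u}.indicator
        (fun t => ENNReal.ofReal ((p - 1) * t ^ (p - 1 - 1))) t *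
        (ENNReal.ofReal (p - 1)⁻¹ * u) := fun t => by
    rw [show p - 1 - 1 = p - 2 by ring]
    by_cases ht : ENNReal.ofReal t < 2 * u
    · simp only [indicator_apply, mem_ofPred_eq, ht, if_true]
      rw [← mul_assoc, ← ENNReal.ofReal_mul' (inv_nonneg.2 hp'.le), mul_right_comm,
        mul_inv_cancel₀ hp'.ne', one_mul]
    · simp only [indicator_apply, mem_ofPred_eq, ht, if_false, mul_zero, zero_mul]
  have hpow : u ^ p = u ^ (p - 1) * u := by
    rw [← sub_add_cancel p 1, ENNReal.rpow_add_of_nonneg _ _ hp'.le zero_le_one,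
      ENNReal.rpow_one, sub_add_cancel]
  simp only [hkernel]
  rw [lintegral_mul_const, lintegral_Ioi_indicator_eq_rpow hp',
    ENNReal.mul_rpow_of_nonneg _ _ hp'.le, hpow, div_eq_mul_inv,
    ENNReal.ofReal_mul (by positivity), ← ENNReal.ofReal_rpow_of_pos two_pos]
  · simp only [ENNReal.ofReal_ofNat]
    ring
  · exact Measurable.indicator (by fun_prop)
      (measurableSet_lt ENNReal.measurable_ofReal measurable_const)

lemma lintegral_rpow_le_of_mul_measure_lt_le {p : ℝ} (hp : 1 < p) {C : ℝ≥0∞}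
    (hF : Measurable F) (hh : Measurable h)
    (hweak : ∀ t : ℝ, 0 < t → ENNReal.ofReal t * μ {x | ENNReal.ofReal t < F x} ≤
      C * ∫⁻ y, {y | ENNReal.ofReal t < 2 * h y}.indicator h y ∂μ) :
    ∫⁻ x, F x ^ p ∂μ ≤ C * ENNReal.ofReal (p * 2 ^ (p - 1) / (p - 1)) * ∫⁻ x, h x ^ p ∂μ := by
  have hmeas : MeasurableSet {z : ℝ × α | ENNReal.ofReal z.1 < 2 * h z.2} :=
    measurableSet_lt (by fun_prop) (by fun_prop)
  have hsplit : ∀ t : ℝ, 0 < t →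
      ENNReal.ofReal (p * t ^ (p - 1)) = ENNReal.ofReal (p * t ^ (p - 2)) * ENNReal.ofReal t :=
    fun t ht => by
      rw [← ENNReal.ofReal_mul (by positivity), mul_assoc, ← Real.rpow_add_one ht.ne']
      ring_nf
  calc ∫⁻ x, F x ^ p ∂μ
      = ∫⁻ t in Ioi (0 : ℝ),
          ENNReal.ofReal (p * t ^ (p - 1)) * μ {x | ENNReal.ofReal t < F x} :=
        lintegral_rpow_eq_lintegral_measure_lt (by linarith) hF
    _ ≤ ∫⁻ t in Ioi (0 : ℝ), C * ENNReal.ofReal p * ∫⁻ y, ENNReal.ofReal (t ^ (p - 2)) *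
          {y | ENNReal.ofReal t < 2 * h y}.indicator h y ∂μ := by
        refine setLIntegral_mono' measurableSet_Ioi fun t ht => ?_
        rw [lintegral_const_mul' _ _ ENNReal.ofReal_ne_top, hsplit t ht, mul_assoc,
          ENNReal.ofReal_mul (by linarith)]
        calc _ ≤ _ := mul_le_mul_right (hweak t ht) _
          _ = _ := by ring
    _ = C * ENNReal.ofReal p * ∫⁻ y, (∫⁻ t in Ioi (0 : ℝ), ENNReal.ofReal (t ^ (p - 2)) *
          {t | ENNReal.ofReal t < 2 * h y}.indicator (fun _ => h y) t) ∂μ := by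
        have hjoint : Measurable fun z : ℝ × α => ENNReal.ofReal (z.1 ^ (p - 2)) *
            {z : ℝ × α | ENNReal.ofReal z.1 < 2 * h z.2}.indicator (fun z => h z.2) z :=
          (by fun_prop : Measurable fun z : ℝ × α => ENNReal.ofReal (z.1 ^ (p - 2))).mul
            ((hh.comp measurable_snd).indicator hmeas)
        have hinner : Measurable fun t : ℝ => ∫⁻ y, ENNReal.ofReal (t ^ (p - 2)) *
            {y | ENNReal.ofReal t < 2 * h y}.indicator h y ∂μ := hjoint.lintegral_prod_right'
        rw [lintegral_const_mul _ hinner]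
        exact congrArg (C * ENNReal.ofReal p * ·) (lintegral_lintegral_swap hjoint.aemeasurable)
    _ = C * ENNReal.ofReal (p * 2 ^ (p - 1) / (p - 1)) * ∫⁻ x, h x ^ p ∂μ := by
        simp only [lintegral_Ioi_mul_indicator hp]
        rw [lintegral_const_mul _ (by fun_prop), mul_div_assoc, ENNReal.ofReal_mul (by linarith)]
        ring

lemma lintegral_Ioi_Ici_indicator_rpow {θ s : ℝ} (hθ : θ < 1) (hs : 0 < s) :
    ∫⁻ t in Ioi (0 : ℝ), (Ici s).indicator (fun t => ENNReal.ofReal (t ^ (θ - 2))) t =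
      ENNReal.ofReal (s ^ (θ - 1) / (1 - θ)) := by
  have hnonneg : 0 ≤ᵐ[volume.restrict (Ioi s)] fun t : ℝ => t ^ (θ - 2) := by
    filter_upwards [ae_restrict_mem measurableSet_Ioi] with t ht
    exact Real.rpow_nonneg (hs.trans ht).le _
  rw [setLIntegral_indicator measurableSet_Ici,
    inter_eq_left.2 (Ici_subset_Ioi.2 hs), setLIntegral_congr Ioi_ae_eq_Ici.symm,
    ← ofReal_integral_eq_lintegral_ofReal (integrableOn_Ioi_rpow_of_lt (by linarith) hs) hnonneg,
    integral_Ioi_rpow_of_lt (by linarith) hs, show θ - 2 + 1 = -(1 - θ) by ring, neg_div_neg_eq,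
    neg_sub]

lemma setLIntegral_rpow_le_of_mul_measure_lt_le {θ s : ℝ} (hθ : 0 < θ) (hθ' : θ < 1)
    (hs : 0 < s) (hF : Measurable F) {N : ℝ≥0∞}
    (hweak : ∀ t : ℝ, 0 < t → ENNReal.ofReal t * μ {x | ENNReal.ofReal t < F x} ≤ N) (S : Set α) :
    ∫⁻ x in S, F x ^ θ ∂μ ≤
      μ S * ENNReal.ofReal s ^ θ + N * ENNReal.ofReal (θ / (1 - θ) * s ^ (θ - 1)) := by
  rw [lintegral_rpow_eq_lintegral_measure_lt hθ hF]
  have hpointwise : ∀ t ∈ Ioi (0 : ℝ), ENNReal.ofReal (θ * t ^ (θ - 1)) *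
      (μ.restrict S) {x | ENNReal.ofReal t < F x} ≤
      μ S * {t | ENNReal.ofReal t < ENNReal.ofReal s}.indicator
        (fun t => ENNReal.ofReal (θ * t ^ (θ - 1))) t +
      N * ENNReal.ofReal θ * (Ici s).indicator (fun t => ENNReal.ofReal (t ^ (θ - 2))) t := by
    intro t (ht : 0 < t)
    by_cases hts : t < s
    · rw [indicator_of_mem (s := {t | ENNReal.ofReal t < ENNReal.ofReal s})
        ((ENNReal.ofReal_lt_ofReal_iff hs).2 hts), mul_comm]
      refine le_add_right (mul_le_mul_left ?_ _)
      exact (measure_mono (subset_univ _)).trans_eq (Measure.restrict_apply_univ S)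
    · rw [indicator_of_mem (show t ∈ Ici s from not_lt.1 hts)]
      refine le_add_left ?_
      have hsplit : ENNReal.ofReal (θ * t ^ (θ - 1)) =
          ENNReal.ofReal θ * ENNReal.ofReal (t ^ (θ - 2)) * ENNReal.ofReal t := by
        rw [← ENNReal.ofReal_mul hθ.le, ← ENNReal.ofReal_mul (by positivity), mul_assoc,
          ← Real.rpow_add_one ht.ne']
        ring_nf
      calc _ ≤ ENNReal.ofReal θ * ENNReal.ofReal (t ^ (θ - 2)) *
            (ENNReal.ofReal t * μ {x | ENNReal.ofReal t < F x}) := by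
            rw [hsplit, mul_assoc]
            exact mul_le_mul_right (mul_le_mul_right (Measure.restrict_apply_le _ _) _) _
        _ ≤ ENNReal.ofReal θ * ENNReal.ofReal (t ^ (θ - 2)) * N :=
            mul_le_mul_right (hweak t ht) _
        _ = _ := by ring
  refine (setLIntegral_mono' measurableSet_Ioi hpointwise).trans_eq ?_
  rw [lintegral_add_right, lintegral_const_mul, lintegral_const_mul,
    lintegral_Ioi_indicator_eq_rpow hθ, lintegral_Ioi_Ici_indicator_rpow hθ' hs, mul_assoc,
    ← ENNReal.ofReal_mul hθ.le, div_mul_eq_mul_div, mul_div_assoc]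
  · exact Measurable.indicator (by fun_prop) measurableSet_Ici
  · exact Measurable.indicator (by fun_prop)
      (measurableSet_lt ENNReal.measurable_ofReal measurable_const)
  · exact (Measurable.indicator (by fun_prop) measurableSet_Ici).const_mul _

end Interpolation

lemma lintegral_intervalMax_rpow_le {p : ℝ} (hp : 1 < p) (μ : Measure ℝ) [SFinite μ]
    {h : ℝ → ℝ≥0∞} (hh : AEMeasurable h μ) :
    ∫⁻ x, intervalMax μ h x ^ p ∂μ ≤
      ENNReal.ofReal (p * 2 ^ (p + 1) / (p - 1)) * ∫⁻ x, h x ^ p ∂μ := by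
  have hbound := lintegral_rpow_le_of_mul_measure_lt_le hp (measurable_intervalMax μ (hh.mk h))
    hh.measurable_mk fun t _ => mul_measure_lt_intervalMax_le_indicator μ _ _
  have hconst : (4 : ℝ≥0∞) * ENNReal.ofReal (p * 2 ^ (p - 1) / (p - 1)) =
      ENNReal.ofReal (p * 2 ^ (p + 1) / (p - 1)) := by
    rw [← ENNReal.ofReal_ofNat 4, ← ENNReal.ofReal_mul (by norm_num),
      show p + 1 = p - 1 + 2 by ring, Real.rpow_add two_pos, Real.rpow_two]
    ring_nf
  rw [hconst] at hbound
  calc ∫⁻ x, intervalMax μ h x ^ p ∂μ = ∫⁻ x, intervalMax μ (hh.mk h) x ^ p ∂μ := by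
        simp only [intervalMax_congr hh.ae_eq_mk]
    _ ≤ _ := hbound
    _ = _ := by
        congr 1
        exact lintegral_congr_ae (hh.ae_eq_mk.symm.mono fun x hx => by simp only [hx])

/-! ### The Coifman–Rochberg theorem -/

section CoifmanRochberg

variable {g : ℝ → ℝ≥0∞} {a b x y θ : ℝ}

lemma intervalMax_indicator_compl_le (hx : x ∈ Ioo a b) (hy : y ∈ Ioo a b) :
    intervalMax volume ((Ioo (a - (b - a)) (b + (b - a)))ᶜ.indicator g) y ≤
      2 * intervalMax volume g x := by
  refine intervalMax_le fun c d hyc => ?_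
  have hab := hx.1.trans hx.2
  by_cases hsub : Ioo c d ⊆ Ioo (a - (b - a)) (b + (b - a))
  · have hzero : ∫⁻ z in Ioo c d, (Ioo (a - (b - a)) (b + (b - a)))ᶜ.indicator g z = 0 :=
      setLIntegral_eq_zero measurableSet_Ioo fun z hz =>
        indicator_of_notMem (notMem_compl_iff.2 (hsub hz)) _
    rw [hzero, mul_zero]
    exact zero_le
  · have hlong : b - a < d - c := by
      by_contra! hshort
      exact hsub fun z hz => ⟨by linarith [hz.1, hyc.2, hy.1], by linarith [hz.2, hyc.1, hy.2]⟩
    have hx' : x ∈ Ioo (min a c) (max b d) :=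
      ⟨(min_le_left _ _).trans_lt hx.1, hx.2.trans_le (le_max_left _ _)⟩
    have hlen : max b d - min a c ≤ 2 * (d - c) := by
      rcases max_cases b d with ⟨e, _⟩ | ⟨e, _⟩ <;> rcases min_cases a c with ⟨e', _⟩ | ⟨e', _⟩ <;>
        rw [e, e'] <;> linarith [hyc.1, hyc.2, hy.1, hy.2]
    rw [← ENNReal.div_eq_inv_mul, Real.volume_Ioo]
    refine ENNReal.div_le_of_le_mul ?_
    calc ∫⁻ z in Ioo c d, (Ioo (a - (b - a)) (b + (b - a)))ᶜ.indicator g z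
        ≤ ∫⁻ z in Ioo (min a c) (max b d), g z :=
          (lintegral_mono (indicator_le_self _ _)).trans
            (lintegral_mono_set (Ioo_subset_Ioo (min_le_right _ _) (le_max_right _ _)))
      _ ≤ intervalMax volume g x * ENNReal.ofReal (max b d - min a c) := by
          rw [← Real.volume_Ioo]
          exact setLIntegral_le_intervalMax_mul hx' (by simp)
      _ ≤ intervalMax volume g x * (2 * ENNReal.ofReal (d - c)) := by
          rw [← ENNReal.ofReal_ofNat 2, ← ENNReal.ofReal_mul zero_le_two]
          gcongr
      _ = 2 * intervalMax volume g x * ENNReal.ofReal (d - c) := by ring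

lemma intervalMax_rpow_le_of_mem (hg : AEMeasurable g) (hθ : 0 ≤ θ) (hθ' : θ ≤ 1)
    (hx : x ∈ Ioo a b) (hy : y ∈ Ioo a b) :
    intervalMax volume g y ^ θ ≤
      intervalMax volume ((Ioo (a - (b - a)) (b + (b - a))).indicator g) y ^ θ +
        (2 * intervalMax volume g x) ^ θ := by
  set J := Ioo (a - (b - a)) (b + (b - a))
  have hsplit : intervalMax volume g y ≤
      intervalMax volume (J.indicator g) y + 2 * intervalMax volume g x := by
    calc intervalMax volume g y
        = intervalMax volume (fun z => J.indicator g z + Jᶜ.indicator g z) y := by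
          simp only [indicator_self_add_compl_apply]
      _ ≤ _ := intervalMax_add_le (hg.indicator measurableSet_Ioo.compl) y
      _ ≤ _ := by gcongr; exact intervalMax_indicator_compl_le hx hy
  exact (ENNReal.rpow_le_rpow hsplit hθ).trans (ENNReal.rpow_add_le_add_rpow _ _ hθ hθ')

lemma mul_rpow_add_add_le_six_div_mul_rpow {L s : ℝ} (hL : 0 ≤ L) (hs : 0 < s) (hθ' : θ < 1) :
    L * s ^ θ + 6 * L * s * (θ / (1 - θ) * s ^ (θ - 1)) + (2 * s) ^ θ * L ≤
      6 / (1 - θ) * s ^ θ * L := by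
  have hsθ : s * s ^ (θ - 1) = s ^ θ := by
    rw [mul_comm, ← Real.rpow_add_one hs.ne', sub_add_cancel]
  have htwo : (2 : ℝ) ^ θ ≤ 2 :=
    (Real.rpow_le_rpow_of_exponent_le one_le_two hθ'.le).trans_eq (Real.rpow_one 2)
  have h1θ : 0 < 1 - θ := sub_pos.2 hθ'
  calc L * s ^ θ + 6 * L * s * (θ / (1 - θ) * s ^ (θ - 1)) + (2 * s) ^ θ * L
      = (1 + 6 * (θ / (1 - θ)) + 2 ^ θ) * (s ^ θ * L) := by
        rw [Real.mul_rpow zero_le_two hs.le, ← hsθ]; ring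
    _ ≤ 6 / (1 - θ) * (s ^ θ * L) := by
        gcongr
        rw [le_div_iff₀ h1θ, add_mul, add_mul, mul_assoc, div_mul_cancel₀ _ h1θ.ne']
        nlinarith
    _ = 6 / (1 - θ) * s ^ θ * L := by ring

lemma setLIntegral_intervalMax_rpow_le {s : ℝ} (hg : AEMeasurable g) (hθ : 0 < θ) (hθ' : θ < 1)
    (hx : x ∈ Ioo a b) (hs : 0 < s) (hgs : intervalMax volume g x ≤ ENNReal.ofReal s) :
    ∫⁻ y in Ioo a b, intervalMax volume g y ^ θ ≤
      ENNReal.ofReal (6 / (1 - θ)) * ENNReal.ofReal s ^ θ * volume (Ioo a b) := by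
  have hL : 0 < b - a := by linarith [hx.1, hx.2]
  set J := Ioo (a - (b - a)) (b + (b - a))
  have hmass : 2 * ∫⁻ z, J.indicator g z ≤ ENNReal.ofReal (6 * (b - a) * s) := by
    have hxJ : x ∈ J := ⟨by linarith [hx.1], by linarith [hx.2]⟩
    rw [lintegral_indicator measurableSet_Ioo]
    calc 2 * ∫⁻ z in J, g z ≤ 2 * (ENNReal.ofReal s * volume J) := by
          gcongr
          exact (setLIntegral_le_intervalMax_mul hxJ measure_Ioo_lt_top.ne).trans (by gcongr)
      _ = _ := by
          rw [Real.volume_Ioo, ← ENNReal.ofReal_ofNat 2, ← ENNReal.ofReal_mul hs.le,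
            ← ENNReal.ofReal_mul zero_le_two]
          ring_nf
  have hlocal := setLIntegral_rpow_le_of_mul_measure_lt_le hθ hθ' hs
    (measurable_intervalMax volume (J.indicator g))
    (fun t _ => (mul_measure_lt_intervalMax_le _ _ _).trans hmass) (Ioo a b)
  calc ∫⁻ y in Ioo a b, intervalMax volume g y ^ θ
      ≤ ∫⁻ y in Ioo a b, (intervalMax volume (J.indicator g) y ^ θ +
          ENNReal.ofReal (2 * s) ^ θ) := by
        refine setLIntegral_mono' measurableSet_Ioo fun y hy => ?_
        refine (intervalMax_rpow_le_of_mem hg hθ.le hθ'.le hx hy).trans ?_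
        rw [ENNReal.ofReal_mul zero_le_two, ENNReal.ofReal_ofNat]
        gcongr
    _ = (∫⁻ y in Ioo a b, intervalMax volume (J.indicator g) y ^ θ) +
          ENNReal.ofReal (2 * s) ^ θ * volume (Ioo a b) := by
        rw [lintegral_add_right _ measurable_const, setLIntegral_const]
    _ ≤ _ := add_le_add_left hlocal _
    _ ≤ _ := by
        have : 0 < 1 - θ := sub_pos.2 hθ'
        rw [Real.volume_Ioo, ENNReal.ofReal_rpow_of_pos hs,
          ENNReal.ofReal_rpow_of_pos (mul_pos two_pos hs)]
        repeat rw [← ENNReal.ofReal_mul (by positivity)]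
        repeat rw [← ENNReal.ofReal_add (by positivity) (by positivity)]
        exact ENNReal.ofReal_le_ofReal (mul_rpow_add_add_le_six_div_mul_rpow hL.le hs hθ')

theorem intervalMax_intervalMax_rpow_le (hg : AEMeasurable g) (hθ : 0 < θ) (hθ' : θ < 1)
    (x : ℝ) :
    intervalMax volume (fun y => intervalMax volume g y ^ θ) x ≤
      ENNReal.ofReal (6 / (1 - θ)) * intervalMax volume g x ^ θ := by
  set G := intervalMax volume g x
  rcases eq_or_ne G ⊤ with htop | htop
  · rw [htop, ENNReal.top_rpow_of_pos hθ, ENNReal.mul_top]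
    · exact le_top
    · simpa using hθ'
  rcases eq_or_ne G 0 with hzero | hzero
  · have hg0 : g =ᵐ[volume] fun _ => 0 := (lintegral_eq_zero_iff' hg).1 <| by
      by_contra hpos
      exact (intervalMax_pos hpos x).ne' hzero
    have hM0 : ∀ y, intervalMax volume g y = 0 := fun y =>
      le_zero_iff.1 ((intervalMax_congr hg0 y).trans_le (intervalMax_const_le _ _ _))
    simp only [hM0, ENNReal.zero_rpow_of_pos hθ]
    exact (intervalMax_const_le _ _ _).trans zero_le
  · refine intervalMax_le fun a b hx => ?_
    have hlocal := setLIntegral_intervalMax_rpow_le hg hθ hθ' hx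
      (ENNReal.toReal_pos hzero htop) (ENNReal.ofReal_toReal htop).ge
    rw [ENNReal.ofReal_toReal htop] at hlocal
    rw [← ENNReal.div_eq_inv_mul]
    exact ENNReal.div_le_of_le_mul hlocal

end CoifmanRochberg

/-! ### Lebesgue differentiation -/

lemma ae_le_intervalMax_of_lintegral_ne_top {h : ℝ → ℝ≥0∞} (hm : AEMeasurable h volume)
    (hfin : ∫⁻ y, h y ≠ ⊤) : ∀ᵐ x, h x ≤ intervalMax volume h x := by
  filter_upwards [(Besicovitch.vitaliFamily (volume : Measure ℝ)).ae_tendsto_lintegral_div hm hfin]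
    with x hx
  refine le_of_tendsto (hx.comp (Besicovitch.tendsto_filterAt (volume : Measure ℝ) x)) ?_
  filter_upwards [self_mem_nhdsWithin] with ε (hε : 0 < ε)
  rw [Function.comp_apply, Real.closedBall_eq_Icc, ENNReal.div_eq_inv_mul,
    ← setLIntegral_congr Ioo_ae_eq_Icc, ← measure_congr Ioo_ae_eq_Icc]
  exact average_le_intervalMax volume h ⟨by linarith, by linarith⟩

lemma ae_le_intervalMax {h : ℝ → ℝ≥0∞} (hm : AEMeasurable h volume) :
    ∀ᵐ x, h x ≤ intervalMax volume h x := by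
  have htrunc (k : ℕ) : ∀ᵐ x, (Icc (-k : ℝ) k).indicator (fun y => min (h y) k) x ≤
      intervalMax volume h x := by
    filter_upwards [ae_le_intervalMax_of_lintegral_ne_top
      ((hm.min (aemeasurable_const (b := (k : ℝ≥0∞)))).indicator
        (measurableSet_Icc (a := (-k : ℝ)) (b := k))) (by
          rw [lintegral_indicator measurableSet_Icc]
          exact ((lintegral_mono fun _ => min_le_right _ _).trans_lt (by simp; finiteness)).ne)]
      with x hx
    exact hx.trans (intervalMax_mono (.of_forall fun y =>
      (indicator_le_self _ _ y).trans (min_le_left _ _)) x)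
  filter_upwards [ae_all_iff.2 htrunc] with x hx
  obtain ⟨k₀, hk₀⟩ := exists_nat_ge |x|
  have hmin : Tendsto (fun k : ℕ => min (h x) (k : ℝ≥0∞)) atTop (𝓝 (h x)) := by
    simpa using tendsto_const_nhds.min ENNReal.tendsto_nat_nhds_top
  refine le_of_tendsto hmin ?_
  filter_upwards [eventually_ge_atTop k₀] with k hk
  have hxk : x ∈ Icc (-k : ℝ) k := abs_le.1 (hk₀.trans (by exact_mod_cast hk))
  simpa [hxk] using hx k

lemma ae_ofReal_le_Mr {w : ℝ → ℝ} (hwm : AEMeasurable w volume) (hw : ∀ x, 0 ≤ w x) {r : ℝ}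
    (hr : 0 < r) : ∀ᵐ x, ENNReal.ofReal (w x) ≤ Mr r w x := by
  filter_upwards [ae_le_intervalMax (hwm.ennreal_ofReal.pow_const r)] with x hx
  rwa [Mr_eq_intervalMax hw hr.le, one_div, ENNReal.le_rpow_inv_iff hr]

/-! ### Duality -/

section Duality

variable {u : ℝ → ℝ≥0∞} {r α : ℝ} {F : Set ℝ} {x : ℝ}

/-- For `s < 0` the positivity of `t` is what makes this hold at `u = 0`, where `0 ^ s = ⊤`. -/
lemma rpow_mul_rpow_of_pos {u : ℝ≥0∞} (hu : u ≠ ⊤) {s t : ℝ} (ht : 0 < t) (hts : 0 < t + s) :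
    u ^ t * u ^ s = u ^ (t + s) := by
  rcases eq_or_ne u 0 with rfl | h0
  · rw [ENNReal.zero_rpow_of_pos ht, ENNReal.zero_rpow_of_pos hts, zero_mul]
  · rw [ENNReal.rpow_add _ _ h0 hu]

lemma intervalMax_indicator_rpow_le (hu : AEMeasurable u volume) (hut : ∀ x, u x ≠ ⊤)
    (hr : 0 < r) (hα : 0 < α) (hF : MeasurableSet F)
    (hx : intervalMax volume (fun y => u y ^ α) x ≠ ⊤) :
    intervalMax volume (fun y => F.indicator u y ^ r) x ≤
      intervalMax (volume.withDensity fun y => u y ^ α) (F.indicator fun y => u y ^ (r - α)) x *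
        intervalMax volume (fun y => u y ^ α) x := by
  set μ := volume.withDensity fun y => u y ^ α
  refine intervalMax_le fun a b hab => ?_
  have hμI : μ (Ioo a b) = ∫⁻ y in Ioo a b, u y ^ α := withDensity_apply _ measurableSet_Ioo
  have hsplit : ∫⁻ y in Ioo a b, F.indicator u y ^ r =
      ∫⁻ y in Ioo a b, F.indicator (fun y => u y ^ (r - α)) y ∂μ := by
    rw [restrict_withDensity measurableSet_Ioo, lintegral_withDensity_eq_lintegral_mul₀
      (hu.pow_const _).restrict ((hu.pow_const _).indicator hF).restrict]
    refine lintegral_congr fun y => ?_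
    by_cases hy : y ∈ F
    · simp only [Pi.mul_apply, indicator_of_mem hy]
      rw [rpow_mul_rpow_of_pos (hut y) hα (by linarith), add_sub_cancel]
    · simp [indicator_of_notMem hy, hr]
  have hle := average_le_intervalMax volume (fun y => u y ^ α) hab
  rw [← hμI] at hle
  have hμt : μ (Ioo a b) ≠ ⊤ := by
    intro h
    rw [h, ENNReal.mul_top (by simp)] at hle
    exact hx (top_le_iff.1 hle)
  calc (volume (Ioo a b))⁻¹ * ∫⁻ y in Ioo a b, F.indicator u y ^ r
      ≤ (volume (Ioo a b))⁻¹ *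
          (intervalMax μ (F.indicator fun y => u y ^ (r - α)) x * μ (Ioo a b)) := by
        rw [hsplit]; gcongr; exact setLIntegral_le_intervalMax_mul hab hμt
    _ = intervalMax μ (F.indicator fun y => u y ^ (r - α)) x *
          ((volume (Ioo a b))⁻¹ * μ (Ioo a b)) := mul_left_comm _ _ _
    _ ≤ _ := by gcongr

lemma lintegral_intervalMax_withDensity_rpow_le (hu : AEMeasurable u volume)
    (hut : ∀ x, u x ≠ ⊤) (hr : 0 < r) (hr2 : r < 2) (hα : 0 < α) (hαr : (r - α) * (2 / r) + α = 1)
    (hF : MeasurableSet F) :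
    ∫⁻ x, intervalMax (volume.withDensity fun y => u y ^ α)
        (F.indicator fun y => u y ^ (r - α)) x ^ (2 / r) * u x ^ α ≤
      ENNReal.ofReal (2 / r * 2 ^ (2 / r + 1) / (2 / r - 1)) * ∫⁻ x in F, u x := by
  have hp : 1 < 2 / r := (one_lt_div hr).2 hr2
  set μ := volume.withDensity fun y => u y ^ α with hμ
  set h := F.indicator fun y => u y ^ (r - α) with hh
  have hhm : AEMeasurable h volume := (hu.pow_const _).indicator hF
  have hmax := lintegral_intervalMax_rpow_le hp μ
    (hhm.mono_ac (withDensity_absolutelyContinuous _ _))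
  have hright : ∫⁻ x, h x ^ (2 / r) ∂μ = ∫⁻ x in F, u x := by
    rw [hμ, lintegral_withDensity_eq_lintegral_mul₀ (hu.pow_const _) (hhm.pow_const _),
      ← lintegral_indicator hF]
    refine lintegral_congr fun x => ?_
    by_cases hx : x ∈ F
    · simp only [Pi.mul_apply, hh, indicator_of_mem hx]
      rw [← ENNReal.rpow_mul, rpow_mul_rpow_of_pos (hut x) hα (by rw [add_comm, hαr]; norm_num),
        add_comm, hαr, ENNReal.rpow_one]
    · simp only [Pi.mul_apply, hh, indicator_of_notMem hx]
      rw [ENNReal.zero_rpow_of_pos (by positivity), mul_zero]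
  rw [hright, hμ, lintegral_withDensity_eq_lintegral_mul₀ (hu.pow_const _)
    ((measurable_intervalMax μ h).pow_const _).aemeasurable] at hmax
  simpa only [Pi.mul_apply, mul_comm (u _ ^ α)] using hmax

lemma mul_rpow_le_sqrt_mul_sqrt {g K N G v : ℝ≥0∞} (hr : 0 < r) (hα : 0 < α) (hv : v ≠ ⊤)
    (hK : G ≠ ⊤ → K ≤ N * G) (hfin : g ^ 2 * G ^ (2 / r) * v ^ (-α) ≠ ⊤) :
    g * K ^ (1 / r) ≤
      (g ^ 2 * G ^ (2 / r) * v ^ (-α)) ^ (1 / 2 : ℝ) * (N ^ (2 / r) * v ^ α) ^ (1 / 2 : ℝ) := by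
  rcases eq_or_ne g 0 with rfl | hg0
  · simp
  have hvα : v ^ (-α) ≠ 0 := by simp [ENNReal.rpow_neg, hα.le, hv]
  have hG : G ≠ ⊤ := by
    rintro rfl
    rw [ENNReal.top_rpow_of_pos (by positivity), ENNReal.mul_top (pow_ne_zero 2 hg0),
      ENNReal.top_mul hvα] at hfin
    exact hfin rfl
  rcases eq_or_ne G 0 with rfl | hG0
  · have hK0 : K = 0 := by simpa using hK hG
    simp [hK0, hr]
  have hv0 : v ≠ 0 := by
    rintro rfl
    rw [ENNReal.zero_rpow_of_neg (by linarith),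
      ENNReal.mul_top (mul_ne_zero (pow_ne_zero 2 hg0) (by simp [hG0, hG]))] at hfin
    exact hfin rfl
  have hcancel : v ^ (-α * (1 / 2)) * v ^ (α * (1 / 2)) = 1 := by
    rw [← ENNReal.rpow_add _ _ hv0 hv]; ring_nf; simp
  have hsqrt : (g ^ 2) ^ (1 / 2 : ℝ) = g := by
    rw [← ENNReal.rpow_natCast, ← ENNReal.rpow_mul]; norm_num
  calc g * K ^ (1 / r) ≤ g * (N * G) ^ (1 / r) := by gcongr; exact hK hG
    _ = g * (N ^ (1 / r) * G ^ (1 / r)) * (v ^ (-α * (1 / 2)) * v ^ (α * (1 / 2))) := by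
        rw [ENNReal.mul_rpow_of_nonneg _ _ (by positivity), hcancel, mul_one]
    _ = _ := by
        simp only [ENNReal.mul_rpow_of_nonneg _ _ (by norm_num : (0 : ℝ) ≤ 1 / 2), hsqrt,
          ← ENNReal.rpow_mul, show 2 / r * (1 / 2) = 1 / r by ring]
        ring

lemma lintegral_mul_intervalMax_indicator_rpow_le {g : ℝ → ℝ≥0∞} (hg : AEMeasurable g volume)
    (hu : AEMeasurable u volume) (hut : ∀ x, u x ≠ ⊤) (hr : 0 < r) (hr2 : r < 2) (hα : 0 < α)
    (hαr : (r - α) * (2 / r) + α = 1) (hF : MeasurableSet F)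
    (hfin : ∫⁻ x, g x ^ 2 * intervalMax volume (fun y => u y ^ α) x ^ (2 / r) * u x ^ (-α) ≠ ⊤) :
    ∫⁻ x, g x * intervalMax volume (fun y => F.indicator u y ^ r) x ^ (1 / r) ≤
      (∫⁻ x, g x ^ 2 * intervalMax volume (fun y => u y ^ α) x ^ (2 / r) * u x ^ (-α)) ^
          (1 / 2 : ℝ) *
        (ENNReal.ofReal (2 / r * 2 ^ (2 / r + 1) / (2 / r - 1)) * ∫⁻ x in F, u x) ^
          (1 / 2 : ℝ) := by
  set V := fun x => g x ^ 2 * intervalMax volume (fun y => u y ^ α) x ^ (2 / r) * u x ^ (-α)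
  set N := fun x => intervalMax (volume.withDensity fun y => u y ^ α)
    (F.indicator fun y => u y ^ (r - α)) x ^ (2 / r) * u x ^ α
  have hVm : AEMeasurable V volume := by fun_prop
  have hNm : AEMeasurable N volume := by fun_prop
  calc ∫⁻ x, g x * intervalMax volume (fun y => F.indicator u y ^ r) x ^ (1 / r)
      ≤ ∫⁻ x, V x ^ (1 / 2 : ℝ) * N x ^ (1 / 2 : ℝ) := by
        refine lintegral_mono_ae ?_
        filter_upwards [ae_lt_top' hVm hfin] with x hx
        exact mul_rpow_le_sqrt_mul_sqrt hr hα (hut x)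
          (intervalMax_indicator_rpow_le hu hut hr hα hF) hx.ne
    _ ≤ (∫⁻ x, V x) ^ (1 / 2 : ℝ) * (∫⁻ x, N x) ^ (1 / 2 : ℝ) :=
        ENNReal.lintegral_mul_norm_pow_le hVm hNm (by norm_num) (by norm_num) (by norm_num)
    _ ≤ _ := by
        gcongr
        exact lintegral_intervalMax_withDensity_rpow_le hu hut hr hr2 hα hαr hF

end Duality

/-- The weighted square norm `∫ |f|² (M_α w)^{2α/r} w^{-α}` with `α = r / (2 - r)`. -/
def dualNormSq (r : ℝ) (w f : ℝ → ℝ) : ℝ≥0∞ :=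
  ∫⁻ x, ENNReal.ofReal (f x ^ 2) * Mr (r / (2 - r)) w x ^ (2 * (r / (2 - r)) / r) *
    ENNReal.ofReal (w x) ^ (-(r / (2 - r)))

section DualNorm

variable {r : ℝ} {w f : ℝ → ℝ} {F : Set ℝ}

lemma ofReal_sq_eq_ofReal_abs_sq (t : ℝ) : ENNReal.ofReal (t ^ 2) = ENNReal.ofReal |t| ^ 2 := by
  rw [← ENNReal.ofReal_pow (abs_nonneg t), sq_abs]

lemma dualNormSq_eq_lintegral (hr : 0 < r) (hr2 : r < 2) (hw : ∀ x, 0 ≤ w x) :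
    dualNormSq r w f = ∫⁻ x, ENNReal.ofReal |f x| ^ 2 *
      intervalMax volume (fun y => ENNReal.ofReal (w y) ^ (r / (2 - r))) x ^ (2 / r) *
        ENNReal.ofReal (w x) ^ (-(r / (2 - r))) := by
  have h2r : 2 - r ≠ 0 := by linarith
  have hα : 0 < r / (2 - r) := div_pos hr (by linarith)
  refine lintegral_congr fun x => ?_
  rw [Mr_eq_intervalMax hw hα.le, ← ENNReal.rpow_mul, ofReal_sq_eq_ofReal_abs_sq]
  congr 3
  field_simp

lemma lintegral_abs_mul_Mr_indicator_le (hr : 1 < r) (hr2 : r < 2) (hwm : AEMeasurable w volume)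
    (hw : ∀ x, 0 ≤ w x) (hf : AEMeasurable f volume) (hF : MeasurableSet F)
    (hfin : dualNormSq r w f ≠ ⊤) :
    ∫⁻ x, ENNReal.ofReal |f x| * Mr r (F.indicator w) x ≤
      dualNormSq r w f ^ (1 / 2 : ℝ) *
        (ENNReal.ofReal (2 / r * 2 ^ (2 / r + 1) / (2 / r - 1)) *
          ∫⁻ x in F, ENNReal.ofReal (w x)) ^ (1 / 2 : ℝ) := by
  have hr0 : 0 < r := by linarith
  have h2r : 2 - r ≠ 0 := by linarith
  have hind (x : ℝ) : Mr r (F.indicator w) x = intervalMax volume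
      (fun y => F.indicator (fun z => ENNReal.ofReal (w z)) y ^ r) x ^ (1 / r) := by
    rw [Mr_eq_intervalMax (indicator_nonneg fun x _ => hw x) hr0.le]
    congr 3 with y
    by_cases hy : y ∈ F <;> simp [hy]
  rw [dualNormSq_eq_lintegral hr0 hr2 hw] at hfin ⊢
  simp only [hind]
  refine lintegral_mul_intervalMax_indicator_rpow_le (by fun_prop) hwm.ennreal_ofReal
    (fun _ => ENNReal.ofReal_ne_top) hr0 hr2 (div_pos hr0 (by linarith)) ?_ hF hfin
  field_simp
  ring

end DualNorm

/-! ### The Hilbert transform -/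

/-- The truncated Hilbert transform `∫_{|x-y|>ε} f(y)/(x-y) dy`; it is `0` when the integral
diverges. -/
def truncHilbert (f : ℝ → ℝ) (x ε : ℝ) : ℝ :=
  ∫ y in {y : ℝ | ε < |x - y|}, f y / (x - y)

/-- The principal value written as the absolutely convergent integral
`½ ∫ (f(x-s) - f(x+s))/s ds`; this is the Hilbert transform of Lipschitz `f`. -/
def symmHilbert (f : ℝ → ℝ) (x : ℝ) : ℝ :=
  1 / 2 * ∫ s, (f (x - s) - f (x + s)) / s

section HilbertTransform

variable {f φ : ℝ → ℝ} {x L ε : ℝ} {K : NNReal}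

lemma measurableSet_lt_abs_sub (x ε : ℝ) : MeasurableSet {y : ℝ | ε < |x - y|} :=
  measurableSet_lt measurable_const (by fun_prop)

lemma measurableSet_lt_abs (ε : ℝ) : MeasurableSet {s : ℝ | ε < |s|} :=
  measurableSet_lt measurable_const (by fun_prop)

lemma Hil_eq_of_tendsto (h : Tendsto (truncHilbert f x) (𝓝[>] 0) (𝓝 L)) : Hil f x = L :=
  h.limUnder_eq

lemma Hil_eq_zero_of_not_integrableOn (hε : 0 < ε)
    (h : ¬ IntegrableOn (fun y => f y / (x - y)) {y : ℝ | ε < |x - y|}) : Hil f x = 0 := by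
  refine Hil_eq_of_tendsto (tendsto_const_nhds.congr' ?_)
  filter_upwards [Ioo_mem_nhdsGT hε] with δ hδ
  exact (integral_undef fun hc => h (IntegrableOn.mono_set hc fun y hy => hδ.2.trans hy)).symm

lemma Hil_congr_of_not_tendsto {g : ℝ → ℝ}
    (hf : ∀ L, ¬ Tendsto (truncHilbert f x) (𝓝[>] 0) (𝓝 L))
    (hg : ∀ L, ¬ Tendsto (truncHilbert g x) (𝓝[>] 0) (𝓝 L)) : Hil f x = Hil g x := by
  change Classical.epsilon _ = Classical.epsilon _
  congr 1
  funext L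
  exact propext ⟨fun h => absurd h (hf L), fun h => absurd h (hg L)⟩

lemma iUnion_lt_abs_sub (x : ℝ) : ⋃ n : ℕ, {y : ℝ | 1 / ((n : ℝ) + 1) < |x - y|} = {x}ᶜ := by
  ext y
  simp only [mem_iUnion, mem_compl_iff, mem_singleton_iff, mem_ofPred]
  refine ⟨?_, fun hy => exists_nat_one_div_lt (abs_pos.2 (sub_ne_zero.2 (Ne.symm hy)))⟩
  rintro ⟨n, hn⟩ rfl
  rw [sub_self, abs_zero] at hn
  exact hn.not_ge (by positivity)

lemma aemeasurable_of_Hil_ne_zero (h : Hil f x ≠ 0) : AEMeasurable f volume := by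
  have hint (n : ℕ) : IntegrableOn (fun y => f y / (x - y))
      {y : ℝ | 1 / ((n : ℝ) + 1) < |x - y|} := by
    by_contra hc
    exact h (Hil_eq_zero_of_not_integrableOn (by positivity) hc)
  have hquot : AEStronglyMeasurable (fun y => f y / (x - y)) (volume.restrict {x}ᶜ) := by
    rw [← iUnion_lt_abs_sub, aestronglyMeasurable_iUnion_iff]
    exact fun n => (hint n).aestronglyMeasurable
  rw [restrict_compl_singleton] at hquot
  have hprod : AEMeasurable (fun y => f y / (x - y) * (x - y)) volume :=
    hquot.aemeasurable.mul (by fun_prop)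
  refine hprod.congr ?_
  filter_upwards [Measure.ae_ne volume x] with y hy
  exact div_mul_cancel₀ _ (sub_ne_zero.2 hy.symm)

/-- No convergence of `Hil f x` is assumed: the junk values on the two sides agree. -/
lemma abs_Hil_le_add
    (hφ : ∀ ε : ℝ, 0 < ε → IntegrableOn (fun y => φ y / (x - y)) {y : ℝ | ε < |x - y|})
    (hL : Tendsto (truncHilbert φ x) (𝓝[>] 0) (𝓝 L)) :
    |Hil f x| ≤ |L| + |Hil (fun y => f y - φ y) x| := by
  by_cases hf : ∀ ε : ℝ, 0 < ε → IntegrableOn (fun y => f y / (x - y)) {y : ℝ | ε < |x - y|}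
  swap
  · push Not at hf
    obtain ⟨ε, hε, hc⟩ := hf
    rw [Hil_eq_zero_of_not_integrableOn hε hc, abs_zero]
    positivity
  have hsub : ∀ᶠ ε in 𝓝[>] (0 : ℝ), truncHilbert (fun y => f y - φ y) x ε =
      truncHilbert f x ε - truncHilbert φ x ε := by
    filter_upwards [self_mem_nhdsWithin] with ε hε
    simp only [truncHilbert, sub_div]
    exact integral_sub (hf ε hε) (hφ ε hε)
  by_cases hex : ∃ M, Tendsto (truncHilbert f x) (𝓝[>] 0) (𝓝 M)
  · obtain ⟨M, hM⟩ := hex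
    rw [Hil_eq_of_tendsto hM,
      Hil_eq_of_tendsto ((hM.sub hL).congr' (hsub.mono fun _ h => h.symm))]
    simpa using abs_add_le L (M - L)
  · push Not at hex
    rw [Hil_congr_of_not_tendsto hex fun M hM => hex (M + L) ((hM.add hL).congr' ?_)]
    · linarith [abs_nonneg L]
    · filter_upwards [hsub] with ε h
      rw [h, sub_add_cancel]

lemma integrableOn_div_sub (hf : Integrable f) (x : ℝ) (hε : 0 < ε) :
    IntegrableOn (fun y => f y / (x - y)) {y : ℝ | ε < |x - y|} := by
  refine Integrable.mono' (hf.abs.div_const ε).integrableOn ?_ ?_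
  · exact (hf.aestronglyMeasurable.aemeasurable.div (by fun_prop)).aestronglyMeasurable.restrict
  · filter_upwards [ae_restrict_mem (measurableSet_lt_abs_sub x ε)] with y (hy : ε < |x - y|)
    rw [Real.norm_eq_abs, abs_div]
    gcongr

lemma truncHilbert_eq_symm (hf : Integrable f) (x : ℝ) (hε : 0 < ε) :
    truncHilbert f x ε = 1 / 2 * ∫ s in {s : ℝ | ε < |s|}, (f (x - s) - f (x + s)) / s := by
  have hsub := Measure.measurePreserving_sub_left volume x
  have hadd := measurePreserving_add_left volume x
  have esub := (Homeomorph.subLeft x).measurableEmbedding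
  have eadd := (Homeomorph.addLeft x).measurableEmbedding
  have isub := (hsub.integrableOn_comp_preimage esub).2 (integrableOn_div_sub hf x hε)
  have iadd := (hadd.integrableOn_comp_preimage eadd).2 (integrableOn_div_sub hf x hε)
  have tsub := hsub.setIntegral_preimage_emb esub (fun y => f y / (x - y)) {y : ℝ | ε < |x - y|}
  have tadd := hadd.setIntegral_preimage_emb eadd (fun y => f y / (x - y)) {y : ℝ | ε < |x - y|}
  simp only [Function.comp_def, preimage_ofPred_eq, sub_sub_cancel, sub_add_cancel_left, abs_neg]
    at isub iadd tsub tadd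
  have hsum : ∫ s in {s : ℝ | ε < |s|}, (f (x - s) - f (x + s)) / s =
      truncHilbert f x ε + truncHilbert f x ε := by
    rw [truncHilbert]
    nth_rewrite 1 [← tsub]
    rw [← tadd, ← integral_add isub iadd]
    congr 1 with s
    rw [div_neg]
    ring
  rw [hsum]
  ring

lemma norm_symm_quotient_le (hK : LipschitzWith K f) {R D : ℝ} (hR : ∀ y, R ≤ ‖y‖ → f y = 0)
    (hx : |x| ≤ D) (s : ℝ) :
    ‖(f (x - s) - f (x + s)) / s‖ ≤
      (Icc (-(R + D)) (R + D)).indicator (fun _ => (2 * K : ℝ)) s := by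
  by_cases hs : s ∈ Icc (-(R + D)) (R + D)
  · rw [indicator_of_mem hs, norm_div]
    refine div_le_of_le_mul₀ (norm_nonneg s) (by positivity) ?_
    have h := hK.norm_sub_le (x - s) (x + s)
    rw [show x - s - (x + s) = -(2 * s) by ring, norm_neg, norm_mul] at h
    simpa [mul_comm, mul_assoc, mul_left_comm] using h
  · have hs' : R + D < |s| := not_le.1 fun hc => hs (abs_le.1 hc)
    have hsub : R ≤ ‖x - s‖ := by
      have := abs_sub_abs_le_abs_sub s x
      rw [Real.norm_eq_abs, abs_sub_comm]
      linarith
    have hadd : R ≤ ‖x + s‖ := by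
      have := abs_sub_abs_le_abs_sub s (-x)
      rw [abs_neg, sub_neg_eq_add] at this
      rw [Real.norm_eq_abs, add_comm]
      linarith
    rw [indicator_of_notMem hs, hR _ hsub, hR _ hadd, sub_zero, zero_div, norm_zero]

lemma aestronglyMeasurable_symm_quotient (hf : Continuous f) (x : ℝ) :
    AEStronglyMeasurable (fun s => (f (x - s) - f (x + s)) / s) volume := by
  have := hf.measurable
  exact Measurable.aestronglyMeasurable (by fun_prop)

lemma integrable_indicator_Icc_const (a b c : ℝ) :
    Integrable ((Icc a b).indicator fun _ => c) :=
  (integrable_indicator_iff measurableSet_Icc).2 (integrableOn_const (by simp))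

lemma tendsto_truncHilbert_symmHilbert (hK : LipschitzWith K f) (hf : HasCompactSupport f)
    (x : ℝ) : Tendsto (truncHilbert f x) (𝓝[>] 0) (𝓝 (symmHilbert f x)) := by
  obtain ⟨R, -, hR⟩ := hf.exists_pos_le_norm
  have hlim : Tendsto (fun ε : ℝ => 1 / 2 *
      ∫ s, {s : ℝ | ε < |s|}.indicator (fun s => (f (x - s) - f (x + s)) / s) s) (𝓝[>] 0)
      (𝓝 (symmHilbert f x)) := by
    refine Tendsto.const_mul _ (tendsto_integral_filter_of_dominated_convergence
      ((Icc (-(R + |x|)) (R + |x|)).indicator fun _ => (2 * K : ℝ)) (.of_forall fun ε =>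
        (aestronglyMeasurable_symm_quotient hK.continuous x).indicator (measurableSet_lt_abs ε))
      (.of_forall fun ε => .of_forall fun s => (norm_indicator_le_norm_self _ s).trans
        (norm_symm_quotient_le hK hR le_rfl s))
      (integrable_indicator_Icc_const _ _ _) (.of_forall fun s => ?_))
    rcases eq_or_ne s 0 with rfl | hs
    · simp [indicator]
    · refine tendsto_const_nhds.congr' ?_
      filter_upwards [Ioo_mem_nhdsGT (abs_pos.2 hs)] with ε hε
      rw [indicator_of_mem (show s ∈ {s : ℝ | ε < |s|} from hε.2)]
  refine hlim.congr' ?_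
  filter_upwards [self_mem_nhdsWithin] with ε hε
  rw [truncHilbert_eq_symm (hK.continuous.integrable_of_hasCompactSupport hf) x hε,
    integral_indicator (measurableSet_lt_abs ε)]

lemma Hil_eq_symmHilbert (hK : LipschitzWith K f) (hf : HasCompactSupport f) :
    Hil f = symmHilbert f :=
  funext fun x => Hil_eq_of_tendsto (tendsto_truncHilbert_symmHilbert hK hf x)

lemma continuous_Hil (hK : LipschitzWith K f) (hf : HasCompactSupport f) :
    Continuous (Hil f) := by
  obtain ⟨R, -, hR⟩ := hf.exists_pos_le_norm
  rw [Hil_eq_symmHilbert hK hf, continuous_iff_continuousAt]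
  intro x
  refine continuousAt_const.mul (continuousAt_of_dominated
    (bound := (Icc (-(R + (|x| + 1))) (R + (|x| + 1))).indicator fun _ => (2 * K : ℝ))
    (.of_forall fun y => aestronglyMeasurable_symm_quotient hK.continuous y) ?_
    (integrable_indicator_Icc_const _ _ _) (.of_forall fun s => ?_))
  · filter_upwards [Metric.ball_mem_nhds x one_pos] with y hy
    refine .of_forall fun s => norm_symm_quotient_le hK hR ?_ s
    rw [Metric.mem_ball, Real.dist_eq] at hy
    linarith [abs_sub_abs_le_abs_sub y x]
  · have := hK.continuous
    exact Continuous.continuousAt (by fun_prop)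

lemma tendsto_truncHilbert_of_eq_zero_near {δ : ℝ} (hδ : 0 < δ)
    (h0 : ∀ y, |x - y| < δ → f y = 0) :
    Tendsto (truncHilbert f x) (𝓝[>] 0) (𝓝 (∫ y, f y / (x - y))) := by
  refine tendsto_const_nhds.congr' ?_
  filter_upwards [Ioo_mem_nhdsGT hδ] with ε hε
  refine (setIntegral_eq_integral_of_forall_compl_eq_zero fun y hy => ?_).symm
  rw [h0 y ((not_lt.1 hy).trans_lt hε.2), zero_div]

end HilbertTransform

/-! ### `A₁` weights -/

/-- The measure `W dx`. -/
def weightMeasure (W : ℝ → ℝ) : Measure ℝ :=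
  volume.withDensity fun y => ENNReal.ofReal (W y)

instance (W : ℝ → ℝ) : SFinite (weightMeasure W) := by unfold weightMeasure; infer_instance

/-- `W ^ r` is an `A₁` weight with constant `C`: `M(W^r) ≤ C W^r`, imposed at every point rather
than almost everywhere, for a representative `W` that is measurable and nowhere zero. -/
structure IsA1Rpow (C r : ℝ) (W : ℝ → ℝ) : Prop where
  one_le : 1 ≤ C
  measurable : Measurable W
  pos : ∀ x, 0 < W x
  intervalMax_rpow_le : ∀ x, intervalMax volume (fun y => ENNReal.ofReal (W y) ^ r) x ≤
    ENNReal.ofReal C * ENNReal.ofReal (W x) ^ r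

lemma weightMeasure_apply (W : ℝ → ℝ) (s : Set ℝ) :
    weightMeasure W s = ∫⁻ x in s, ENNReal.ofReal (W x) :=
  withDensity_apply' _ s

lemma setLIntegral_weightMeasure {W : ℝ → ℝ} (hW : Measurable W) (g : ℝ → ℝ≥0∞) (s : Set ℝ) :
    ∫⁻ x in s, g x ∂weightMeasure W = ∫⁻ x in s, ENNReal.ofReal (W x) * g x := by
  rw [weightMeasure, restrict_withDensity']
  exact lintegral_withDensity_eq_lintegral_mul_non_measurable _ hW.ennreal_ofReal
    (.of_forall fun _ => ENNReal.ofReal_lt_top) g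

lemma lintegral_weightMeasure {W : ℝ → ℝ} (hW : Measurable W) (g : ℝ → ℝ≥0∞) :
    ∫⁻ x, g x ∂weightMeasure W = ∫⁻ x, ENNReal.ofReal (W x) * g x := by
  simpa using setLIntegral_weightMeasure hW g univ

lemma intervalMax_le_intervalMax_rpow {g : ℝ → ℝ≥0∞} (hg : AEMeasurable g volume) {r : ℝ}
    (hr : 1 ≤ r) (x : ℝ) :
    intervalMax volume g x ≤ intervalMax volume (fun y => g y ^ r) x ^ (1 / r) := by
  have hr0 : 0 < r := by linarith
  have hr1 : 1 / r ≤ 1 := (div_le_one hr0).2 hr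
  refine intervalMax_le fun a b hx => ?_
  have hV0 : volume (Ioo a b) ≠ 0 := by simpa using hx.1.trans hx.2
  have hVt : volume (Ioo a b) ≠ ⊤ := by simp
  have hHolder : ∫⁻ y in Ioo a b, g y ≤
      (∫⁻ y in Ioo a b, g y ^ r) ^ (1 / r) * volume (Ioo a b) ^ (1 - 1 / r) := by
    have h := ENNReal.lintegral_mul_norm_pow_le (μ := volume.restrict (Ioo a b))
      (hg.pow_const r).restrict (aemeasurable_const (b := (1 : ℝ≥0∞)))
      (by positivity : 0 ≤ 1 / r) (by linarith : 0 ≤ 1 - 1 / r) (by ring)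
    simpa [← ENNReal.rpow_mul, hr0.ne'] using h
  calc (volume (Ioo a b))⁻¹ * ∫⁻ y in Ioo a b, g y
      ≤ (volume (Ioo a b))⁻¹ *
          ((∫⁻ y in Ioo a b, g y ^ r) ^ (1 / r) * volume (Ioo a b) ^ (1 - 1 / r)) := by gcongr
    _ = ((volume (Ioo a b))⁻¹ * ∫⁻ y in Ioo a b, g y ^ r) ^ (1 / r) := by
        rw [ENNReal.mul_rpow_of_nonneg _ _ (by positivity), ENNReal.inv_rpow, ← ENNReal.rpow_neg,
          mul_left_comm, ← ENNReal.rpow_neg_one, ← ENNReal.rpow_add _ _ hV0 hVt, mul_comm]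
        ring_nf
    _ ≤ _ := by gcongr; exact average_le_intervalMax volume (fun y => g y ^ r) hx

namespace IsA1Rpow

variable {C r : ℝ} {W : ℝ → ℝ} {a b x : ℝ} {s : Set ℝ}

lemma Mr_le (hW : IsA1Rpow C r W) (hr : 1 ≤ r) (x : ℝ) : Mr r W x ≤ ENNReal.ofReal (C * W x) := by
  have hr0 : 0 < r := by linarith
  have hC : 1 ≤ ENNReal.ofReal C := by simpa using hW.one_le
  rw [Mr_eq_intervalMax (fun x => (hW.pos x).le) hr0.le,
    ENNReal.ofReal_mul (by linarith [hW.one_le])]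
  calc intervalMax volume (fun y => ENNReal.ofReal (W y) ^ r) x ^ (1 / r)
      ≤ (ENNReal.ofReal C * ENNReal.ofReal (W x) ^ r) ^ (1 / r) := by
        gcongr; exact hW.intervalMax_rpow_le x
    _ = ENNReal.ofReal C ^ (1 / r) * ENNReal.ofReal (W x) := by
        rw [ENNReal.mul_rpow_of_nonneg _ _ (by positivity), ← ENNReal.rpow_mul,
          mul_one_div_cancel hr0.ne', ENNReal.rpow_one]
    _ ≤ ENNReal.ofReal C * ENNReal.ofReal (W x) := by
        gcongr
        simpa using ENNReal.rpow_le_rpow_of_exponent_le hC ((div_le_one hr0).2 hr)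

lemma weightMeasure_Ioo_le (hW : IsA1Rpow C r W) (hr : 1 ≤ r) (hx : x ∈ Ioo a b) :
    weightMeasure W (Ioo a b) ≤ ENNReal.ofReal (C * W x) * ENNReal.ofReal (b - a) := by
  rw [weightMeasure_apply, ← Real.volume_Ioo]
  refine (setLIntegral_le_intervalMax_mul hx (by simp)).trans ?_
  gcongr
  refine (intervalMax_le_intervalMax_rpow hW.measurable.ennreal_ofReal.aemeasurable hr x).trans ?_
  rw [← Mr_eq_intervalMax (fun x => (hW.pos x).le) (by linarith)]
  exact hW.Mr_le hr x

lemma weightMeasure_Ioo_ne_top (hW : IsA1Rpow C r W) (hr : 1 ≤ r) (a b : ℝ) :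
    weightMeasure W (Ioo a b) ≠ ⊤ := by
  rcases (Ioo a b).eq_empty_or_nonempty with h | ⟨x, hx⟩
  · simp [h]
  · exact ne_top_of_le_ne_top (by finiteness) (hW.weightMeasure_Ioo_le hr hx)

lemma isWeight (hW : IsA1Rpow C r W) (hr : 1 ≤ r) : IsWeight W := by
  refine ⟨fun x => (hW.pos x).le, fun x => ⟨Ioo (x - 1) (x + 1),
    Ioo_mem_nhds (by linarith) (by linarith), hW.measurable.aestronglyMeasurable, ?_⟩⟩
  rw [hasFiniteIntegral_iff_ofReal (.of_forall fun x => (hW.pos x).le), ← weightMeasure_apply]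
  exact (hW.weightMeasure_Ioo_ne_top hr _ _).lt_top

lemma weightMeasure_Ioo_mul_setLIntegral_le (hW : IsA1Rpow C r W) (hr : 1 ≤ r)
    (hs : MeasurableSet s) (hsub : s ⊆ Ioo a b) (g : ℝ → ℝ≥0∞) :
    weightMeasure W (Ioo a b) * ∫⁻ y in s, g y ≤
      ENNReal.ofReal C * ENNReal.ofReal (b - a) * ∫⁻ y in s, g y ∂weightMeasure W := by
  rw [setLIntegral_weightMeasure hW.measurable,
    ← lintegral_const_mul' _ _ (hW.weightMeasure_Ioo_ne_top hr a b),
    ← lintegral_const_mul' _ _ (by finiteness)]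
  refine setLIntegral_mono' hs fun y hy => ?_
  have h := hW.weightMeasure_Ioo_le hr (hsub hy)
  rw [ENNReal.ofReal_mul (by linarith [hW.one_le]), mul_right_comm] at h
  rw [← mul_assoc]
  gcongr

lemma weightMeasure_Ioo_mul_volume_le (hW : IsA1Rpow C r W) (hr : 1 ≤ r)
    (hs : MeasurableSet s) (hsub : s ⊆ Ioo a b) :
    weightMeasure W (Ioo a b) * volume s ≤
      ENNReal.ofReal C * ENNReal.ofReal (b - a) * weightMeasure W s := by
  simpa using hW.weightMeasure_Ioo_mul_setLIntegral_le hr hs hsub 1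

lemma weightMeasure_Ioo_ne_zero (hW : IsA1Rpow C r W) (hab : a < b) :
    weightMeasure W (Ioo a b) ≠ 0 := by
  intro h
  have hac : volume ≪ weightMeasure W := withDensity_absolutelyContinuous'
    hW.measurable.ennreal_ofReal.aemeasurable (.of_forall fun x => by simpa using hW.pos x)
  simpa [hab.not_ge] using hac h

lemma intervalMax_volume_le (hW : IsA1Rpow C r W) (hr : 1 ≤ r) (g : ℝ → ℝ≥0∞) (x : ℝ) :
    intervalMax volume g x ≤ ENNReal.ofReal C * intervalMax (weightMeasure W) g x := by
  refine intervalMax_le fun a b hx => ?_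
  have h := hW.weightMeasure_Ioo_mul_setLIntegral_le hr (a := a) (b := b) (s := Ioo a b)
    measurableSet_Ioo subset_rfl g
  have hab : a < b := hx.1.trans hx.2
  calc (volume (Ioo a b))⁻¹ * ∫⁻ y in Ioo a b, g y
      ≤ ENNReal.ofReal C *
          ((weightMeasure W (Ioo a b))⁻¹ * ∫⁻ y in Ioo a b, g y ∂weightMeasure W) := by
        rw [← ENNReal.div_eq_inv_mul, ← ENNReal.div_eq_inv_mul, Real.volume_Ioo, ← mul_div_assoc]
        refine ENNReal.div_le_of_le_mul ?_
        rw [ENNReal.mul_comm_div, ← mul_div_assoc,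
          ENNReal.le_div_iff_mul_le (.inl (hW.weightMeasure_Ioo_ne_zero hab))
            (.inl (hW.weightMeasure_Ioo_ne_top hr a b))]
        calc _ = _ := mul_comm _ _
          _ ≤ _ := h
          _ = _ := by ring
    _ ≤ _ := by gcongr; exact average_le_intervalMax _ _ hx

lemma const_one (r : ℝ) : IsA1Rpow 1 r fun _ => 1 where
  one_le := le_rfl
  measurable := measurable_const
  pos _ := one_pos
  intervalMax_rpow_le x := by simpa using intervalMax_const_le volume 1 x

end IsA1Rpow

/-- The weak-type hypothesis `‖Hf‖_{L^{1,∞}(w)} ≤ A ‖f‖_{L¹(M_r w)}` for all weights `w`. -/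
def HilbertWeakBound (r A : ℝ) : Prop :=
  ∀ w f : ℝ → ℝ, IsWeight w → (∫⁻ x, ENNReal.ofReal |f x| * Mr r w x) < ⊤ →
    ∀ lam : ℝ, 0 < lam →
      ENNReal.ofReal lam * (∫⁻ x in {x : ℝ | lam < |Hil f x|}, ENNReal.ofReal (w x)) ≤
        ENNReal.ofReal A * ∫⁻ x, ENNReal.ofReal |f x| * Mr r w x

namespace HilbertWeakBound

variable {C r A : ℝ} {W f : ℝ → ℝ} {lam : ℝ}

lemma mul_weightMeasure_lt_abs_Hil_le (H : HilbertWeakBound r A) (hA : 0 < A) (hr : 1 ≤ r)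
    (hW : IsA1Rpow C r W) (f : ℝ → ℝ) (hl : 0 < lam) :
    ENNReal.ofReal lam * weightMeasure W {x | lam < |Hil f x|} ≤
      ENNReal.ofReal (A * C) * ∫⁻ x, ENNReal.ofReal |f x| ∂weightMeasure W := by
  have hC : 0 < C := by linarith [hW.one_le]
  set P := ∫⁻ x, ENNReal.ofReal |f x| ∂weightMeasure W with hP
  rcases eq_or_ne P ⊤ with hPt | hPt
  · rw [hPt, ENNReal.mul_top (by simpa using mul_pos hA hC)]
    exact le_top
  have hle : ∫⁻ x, ENNReal.ofReal |f x| * Mr r W x ≤ ENNReal.ofReal C * P := by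
    rw [hP, lintegral_weightMeasure hW.measurable, ← lintegral_const_mul' _ _ (by finiteness)]
    refine lintegral_mono fun x => ?_
    rw [mul_comm, ← mul_assoc, ← ENNReal.ofReal_mul hC.le]
    gcongr
    exact hW.Mr_le hr x
  rw [weightMeasure_apply, ENNReal.ofReal_mul hA.le, mul_assoc]
  exact (H W f (hW.isWeight hr) (hle.trans_lt (by finiteness)) lam hl).trans (by gcongr)

lemma mul_volume_lt_abs_Hil_le (H : HilbertWeakBound r A) (hA : 0 < A) (hr : 1 ≤ r) (f : ℝ → ℝ)
    (hl : 0 < lam) :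
    ENNReal.ofReal lam * volume {x | lam < |Hil f x|} ≤
      ENNReal.ofReal A * ∫⁻ x, ENNReal.ofReal |f x| := by
  simpa [weightMeasure] using H.mul_weightMeasure_lt_abs_Hil_le hA hr (IsA1Rpow.const_one r) f hl

end HilbertWeakBound

lemma inv_le_abs_Hil_indicator_Icc {x : ℝ} (hx : 1 < x) :
    1 / x ≤ |Hil ((Icc (0 : ℝ) 1).indicator fun _ => 1) x| := by
  have hnear (y : ℝ) (hy : |x - y| < x - 1) : (Icc (0 : ℝ) 1).indicator (fun _ => (1 : ℝ)) y = 0 :=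
    indicator_of_notMem (fun hy' => by linarith [(abs_lt.1 hy).2, hy'.2]) _
  have hpos (y : ℝ) (hy : y ∈ Icc (0 : ℝ) 1) : 0 < x - y := by linarith [hy.2]
  have hcont : ContinuousOn (fun y => 1 / (x - y)) (Icc (0 : ℝ) 1) :=
    continuousOn_const.div (by fun_prop) fun y hy => (hpos y hy).ne'
  have hint : ∫ y, (Icc (0 : ℝ) 1).indicator (fun _ => (1 : ℝ)) y / (x - y) =
      ∫ y in Icc (0 : ℝ) 1, 1 / (x - y) := by
    rw [← integral_indicator measurableSet_Icc]
    congr 1 with y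
    by_cases hy : y ∈ Icc (0 : ℝ) 1 <;> simp [hy]
  rw [Hil_eq_of_tendsto (tendsto_truncHilbert_of_eq_zero_near (sub_pos.2 hx) hnear), hint]
  refine le_trans ?_ (le_abs_self _)
  calc 1 / x = ∫ _ in Icc (0 : ℝ) 1, 1 / x := by simp
    _ ≤ ∫ y in Icc (0 : ℝ) 1, 1 / (x - y) := by
      refine setIntegral_mono_on (integrableOn_const (by simp))
        (hcont.integrableOn_compact isCompact_Icc) measurableSet_Icc fun y hy => ?_
      exact one_div_le_one_div_of_le (hpos y hy) (by linarith [hy.1])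

/-- Tested on `f = 1_{[0,1]}`, for which `|Hf| > 1/4` on `(1, 4)`. -/
lemma HilbertWeakBound.three_quarters_le {r A : ℝ} (H : HilbertWeakBound r A) (hA : 0 < A)
    (hr : 1 ≤ r) : 3 / 4 ≤ A := by
  set f : ℝ → ℝ := (Icc (0 : ℝ) 1).indicator fun _ => 1 with hf
  have hnorm : ∫⁻ x, ENNReal.ofReal |f x| = 1 := by
    have : (fun x => ENNReal.ofReal |f x|) = (Icc (0 : ℝ) 1).indicator fun _ => 1 := by
      funext x
      by_cases hx : x ∈ Icc (0 : ℝ) 1 <;> simp [hf, hx]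
    rw [this, lintegral_indicator_const measurableSet_Icc]
    simp
  have hsub : Ioo (1 : ℝ) 4 ⊆ {x | 1 / 4 < |Hil f x|} := fun x hx =>
    (one_div_lt_one_div_of_lt (by linarith [hx.1]) hx.2).trans_le
      (inv_le_abs_Hil_indicator_Icc hx.1)
  have h : ENNReal.ofReal (1 / 4) * volume (Ioo (1 : ℝ) 4) ≤ ENNReal.ofReal A := by
    have := H.mul_volume_lt_abs_Hil_le hA hr f (lam := 1 / 4) (by norm_num)
    rw [hnorm, mul_one] at this
    exact le_trans (by gcongr) this
  rw [Real.volume_Ioo, ← ENNReal.ofReal_mul (by norm_num), ENNReal.ofReal_le_ofReal_iff hA.le] at h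
  linarith

/-! ### The good-`λ` inequality -/

lemma mul_ofReal_one_div_sq_le_tsum (g : ℝ → ℝ≥0∞) {c y D : ℝ} (hD : 0 < D)
    (hy : D ≤ |y - c|) :
    g y * ENNReal.ofReal (1 / |y - c| ^ 2) ≤ ∑' k : ℕ, ENNReal.ofReal (1 / (2 ^ k * D) ^ 2) *
      (Ioo (c - 2 ^ (k + 1) * D) (c + 2 ^ (k + 1) * D)).indicator g y := by
  obtain ⟨k, hk, hk'⟩ := exists_nat_pow_near (x := |y - c| / D) (y := 2)
    ((one_le_div hD).2 hy) (by norm_num)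
  rw [le_div_iff₀ hD] at hk
  rw [div_lt_iff₀ hD, abs_sub_lt_iff] at hk'
  have hyk : y ∈ Ioo (c - 2 ^ (k + 1) * D) (c + 2 ^ (k + 1) * D) :=
    ⟨by linarith [hk'.2], by linarith [hk'.1]⟩
  refine le_trans ?_ (ENNReal.le_tsum k)
  rw [indicator_of_mem hyk, mul_comm]
  gcongr

lemma ofReal_mul_setLIntegral_Ioo_two_pow_le (g : ℝ → ℝ≥0∞) (c : ℝ) {D : ℝ} (hD : 0 < D)
    (k : ℕ) :
    ENNReal.ofReal (1 / (2 ^ k * D) ^ 2) *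
        ∫⁻ y in Ioo (c - 2 ^ (k + 1) * D) (c + 2 ^ (k + 1) * D), g y ≤
      ENNReal.ofReal (4 / D * (1 / 2) ^ k) * intervalMax volume g c := by
  have hc : c ∈ Ioo (c - 2 ^ (k + 1) * D) (c + 2 ^ (k + 1) * D) := by
    constructor <;> linarith [show 0 < 2 ^ (k + 1) * D by positivity]
  refine (mul_le_mul_right (setLIntegral_le_intervalMax_mul hc (by simp)) _).trans_eq ?_
  rw [Real.volume_Ioo, mul_left_comm, ← ENNReal.ofReal_mul (by positivity), mul_comm]
  congr 2
  rw [one_div_pow, pow_succ]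
  field_simp
  ring

lemma setLIntegral_mul_one_div_sq_le {g : ℝ → ℝ≥0∞} (hg : AEMeasurable g volume) (c : ℝ) {D : ℝ}
    (hD : 0 < D) :
    ∫⁻ y in {y : ℝ | D ≤ |y - c|}, g y * ENNReal.ofReal (1 / |y - c| ^ 2) ≤
      ENNReal.ofReal (8 / D) * intervalMax volume g c := by
  let B : ℕ → Set ℝ := fun k => Ioo (c - 2 ^ (k + 1) * D) (c + 2 ^ (k + 1) * D)
  calc ∫⁻ y in {y : ℝ | D ≤ |y - c|}, g y * ENNReal.ofReal (1 / |y - c| ^ 2)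
      ≤ ∫⁻ y in {y : ℝ | D ≤ |y - c|},
          ∑' k : ℕ, ENNReal.ofReal (1 / (2 ^ k * D) ^ 2) * (B k).indicator g y :=
        setLIntegral_mono' (measurableSet_le measurable_const (by fun_prop)) fun y hy =>
          mul_ofReal_one_div_sq_le_tsum g hD hy
    _ ≤ ∫⁻ y, ∑' k : ℕ, ENNReal.ofReal (1 / (2 ^ k * D) ^ 2) * (B k).indicator g y :=
        setLIntegral_le_lintegral _ _
    _ = ∑' k : ℕ, ENNReal.ofReal (1 / (2 ^ k * D) ^ 2) * ∫⁻ y in B k, g y := by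
        rw [lintegral_tsum fun k => (hg.indicator measurableSet_Ioo).const_mul _]
        refine tsum_congr fun k => ?_
        rw [lintegral_const_mul' _ _ ENNReal.ofReal_ne_top, lintegral_indicator measurableSet_Ioo]
    _ ≤ ∑' k : ℕ, ENNReal.ofReal (4 / D * (1 / 2) ^ k) * intervalMax volume g c :=
        ENNReal.tsum_le_tsum fun k => ofReal_mul_setLIntegral_Ioo_two_pow_le g c hD k
    _ = ENNReal.ofReal (8 / D) * intervalMax volume g c := by
        rw [ENNReal.tsum_mul_right, ← ENNReal.ofReal_tsum_of_nonneg (fun k => by positivity)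
          (summable_geometric_two.mul_left _), tsum_mul_left, tsum_geometric_two]
        congr 2
        ring

lemma abs_one_div_sub_one_div_le {c ρ x x' y : ℝ} (hx : |x - c| < ρ) (hx' : |x' - c| < 2 * ρ)
    (hy : 4 * ρ ≤ |y - c|) : |1 / (x - y) - 1 / (x' - y)| ≤ 8 * ρ * (1 / |y - c| ^ 2) := by
  have hρ : 0 < ρ := (abs_nonneg _).trans_lt hx
  have hyc : 0 < |y - c| := by linarith
  have hxy : 3 / 4 * |y - c| ≤ |x - y| := by
    rw [abs_sub_comm x y]
    linarith [abs_sub_le y x c]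
  have hxy' : 1 / 2 * |y - c| ≤ |x' - y| := by
    rw [abs_sub_comm x' y]
    linarith [abs_sub_le y x' c]
  have hxx' : |x' - x| ≤ 3 * ρ := by
    have := abs_sub_le x' c x
    rw [abs_sub_comm c x] at this
    linarith
  have hne : x - y ≠ 0 := abs_pos.1 (by linarith)
  have hne' : x' - y ≠ 0 := abs_pos.1 (by linarith)
  rw [show 1 / (x - y) - 1 / (x' - y) = (x' - x) / ((x - y) * (x' - y)) by field_simp; ring,
    abs_div, abs_mul]
  calc |x' - x| / (|x - y| * |x' - y|)
      ≤ 3 * ρ / (3 / 4 * |y - c| * (1 / 2 * |y - c|)) := by gcongr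
    _ = 8 * ρ * (1 / |y - c| ^ 2) := by field_simp; norm_num

lemma integrable_div_sub_of_eq_zero_near {f : ℝ → ℝ} (hf : Integrable f) {x δ : ℝ} (hδ : 0 < δ)
    (h0 : ∀ y, |x - y| < δ → f y = 0) : Integrable fun y => f y / (x - y) := by
  refine (integrableOn_iff_integrable_of_support_subset ?_).1
    (integrableOn_div_sub hf x (half_pos hδ))
  intro y hy
  by_contra hc
  exact hy (by simp only [h0 y ((not_lt.1 hc).trans_lt (half_lt_self hδ)), zero_div])

lemma ofReal_abs_integral_div_sub_le {f : ℝ → ℝ} (hf : Integrable f) {c ρ x x' : ℝ}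
    (h0 : ∀ y, |y - c| < 4 * ρ → f y = 0) (hx : |x - c| < ρ) (hx' : |x' - c| < 2 * ρ) :
    ENNReal.ofReal |(∫ y, f y / (x - y)) - ∫ y, f y / (x' - y)| ≤
      16 * intervalMax volume (fun y => ENNReal.ofReal |f y|) c := by
  have hρ : 0 < ρ := (abs_nonneg _).trans_lt hx
  have hint {u : ℝ} (hu : |u - c| < 2 * ρ) : Integrable fun y => f y / (u - y) :=
    integrable_div_sub_of_eq_zero_near hf (δ := 2 * ρ) (by linarith) fun y hy => h0 y <| by
      rw [abs_sub_comm] at hy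
      linarith [abs_sub_le y u c]
  have hkernel (y : ℝ) : ‖f y / (x - y) - f y / (x' - y)‖ₑ ≤ {y : ℝ | 4 * ρ ≤ |y - c|}.indicator
      (fun y => ENNReal.ofReal (8 * ρ) *
        (ENNReal.ofReal |f y| * ENNReal.ofReal (1 / |y - c| ^ 2))) y := by
    by_cases hy : y ∈ {y : ℝ | 4 * ρ ≤ |y - c|}
    · rw [indicator_of_mem hy, ← ENNReal.ofReal_mul (abs_nonneg _),
        ← ENNReal.ofReal_mul (by positivity), ← ofReal_norm, Real.norm_eq_abs]
      apply ENNReal.ofReal_le_ofReal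
      rw [div_eq_mul_one_div, div_eq_mul_one_div (f y) (x' - y), ← mul_sub, abs_mul,
        mul_left_comm]
      gcongr
      exact abs_one_div_sub_one_div_le hx hx' hy
    · simp [indicator_of_notMem hy, h0 y (not_le.1 hy)]
  rw [← integral_sub (hint (by linarith)) (hint hx'), ← Real.norm_eq_abs, ofReal_norm]
  calc _ ≤ ∫⁻ y, ‖f y / (x - y) - f y / (x' - y)‖ₑ := enorm_integral_le_lintegral_enorm _
    _ ≤ _ := lintegral_mono hkernel
    _ = ENNReal.ofReal (8 * ρ) * ∫⁻ y in {y : ℝ | 4 * ρ ≤ |y - c|},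
          ENNReal.ofReal |f y| * ENNReal.ofReal (1 / |y - c| ^ 2) := by
        rw [lintegral_indicator (measurableSet_le measurable_const (by fun_prop)),
          lintegral_const_mul' _ _ ENNReal.ofReal_ne_top]
    _ ≤ ENNReal.ofReal (8 * ρ) * (ENNReal.ofReal (8 / (4 * ρ)) *
          intervalMax volume (fun y => ENNReal.ofReal |f y|) c) := by
        gcongr
        exact setLIntegral_mul_one_div_sq_le hf.abs.aemeasurable.ennreal_ofReal c (by positivity)
    _ = _ := by
        rw [← mul_assoc, ← ENNReal.ofReal_mul (by positivity),
          show 8 * ρ * (8 / (4 * ρ)) = (16 : ℝ) by field_simp; norm_num, ENNReal.ofReal_ofNat]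

lemma exists_radius_half_density {E : Set ℝ} (hE : IsOpen E) (hfin : volume E ≠ ⊤) {c : ℝ}
    (hc : c ∈ E) :
    ∃ ρ > 0, ENNReal.ofReal ρ ≤ volume (E ∩ Ioo (c - ρ) (c + ρ)) ∧
      volume (E ∩ Ioo (c - 2 * ρ) (c + 2 * ρ)) < ENNReal.ofReal (2 * ρ) := by
  classical
  obtain ⟨ρ₀, hρ₀, hball⟩ := Metric.isOpen_iff.1 hE c hc
  rw [Real.ball_eq_Ioo] at hball
  let Sparse (n : ℕ) : Prop :=
    volume (E ∩ Ioo (c - 2 ^ n * ρ₀) (c + 2 ^ n * ρ₀)) < ENNReal.ofReal (2 ^ n * ρ₀)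
  have hex : ∃ n, Sparse n := by
    obtain ⟨n, hn⟩ := pow_unbounded_of_one_lt ((volume E).toReal / ρ₀) (one_lt_two (α := ℝ))
    refine ⟨n, (measure_mono inter_subset_left).trans_lt ?_⟩
    rwa [← ENNReal.ofReal_toReal hfin, ENNReal.ofReal_lt_ofReal_iff (by positivity),
      ← div_lt_iff₀ hρ₀]
  have h0 : ¬ Sparse 0 := by
    simp only [Sparse, pow_zero, one_mul, inter_eq_right.2 hball, Real.volume_Ioo, not_lt]
    exact ENNReal.ofReal_le_ofReal (by linarith)
  obtain ⟨n, hn⟩ : ∃ n, Nat.find hex = n + 1 :=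
    Nat.exists_eq_succ_of_ne_zero fun h => h0 (h ▸ Nat.find_spec hex)
  refine ⟨2 ^ n * ρ₀, by positivity, not_lt.1 (Nat.find_min hex (m := n) (by omega)), ?_⟩
  have := hn ▸ Nat.find_spec hex
  simpa only [Sparse, pow_succ', mul_assoc] using this

section GoodLambda

variable {C r A : ℝ} {W f : ℝ → ℝ} {K : NNReal} {c ρ lam : ℝ}

lemma Hil_indicator_Ioo_eq_sub (hK : LipschitzWith K f) (hf : HasCompactSupport f) (hρ : 0 < ρ)
    {u : ℝ} (hu : |u - c| < 2 * ρ) :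
    Hil ((Ioo (c - 4 * ρ) (c + 4 * ρ)).indicator f) u =
      Hil f u - ∫ y, (Ioo (c - 4 * ρ) (c + 4 * ρ))ᶜ.indicator f y / (u - y) := by
  set J := Ioo (c - 4 * ρ) (c + 4 * ρ)
  have hint : Integrable f := hK.continuous.integrable_of_hasCompactSupport hf
  have hlocal : ∀ y, |u - y| < 2 * ρ → Jᶜ.indicator f y = 0 := fun y hy => by
    rw [abs_sub_lt_iff] at hy hu
    exact indicator_of_notMem (notMem_compl_iff.2 (show y ∈ J from
      ⟨by linarith [hy.1, hu.2], by linarith [hy.2, hu.1]⟩)) _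
  have hfar := tendsto_truncHilbert_of_eq_zero_near (f := Jᶜ.indicator f) (by positivity) hlocal
  have htotal := tendsto_truncHilbert_symmHilbert hK hf u
  rw [Hil_eq_of_tendsto htotal]
  refine Hil_eq_of_tendsto ((htotal.sub hfar).congr' ?_)
  filter_upwards [self_mem_nhdsWithin] with ε hε
  have hsub := integral_sub (integrableOn_div_sub hint u hε)
    (integrableOn_div_sub (hint.indicator measurableSet_Ioo.compl : Integrable (Jᶜ.indicator f))
      u hε)
  rw [truncHilbert, truncHilbert, ← hsub, truncHilbert]
  congr 1 with y
  by_cases hy : y ∈ J <;> simp [hy]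

lemma lintegral_ofReal_abs_indicator (μ : Measure ℝ) {s : Set ℝ} (hs : MeasurableSet s)
    (f : ℝ → ℝ) :
    ∫⁻ x, ENNReal.ofReal |s.indicator f x| ∂μ = ∫⁻ x in s, ENNReal.ofReal |f x| ∂μ := by
  rw [← lintegral_indicator hs]
  congr 1 with x
  by_cases hx : x ∈ s <;> simp [hx]

lemma HilbertWeakBound.volume_lt_abs_Hil_indicator_Ioo_le (H : HilbertWeakBound r A) (hA : 0 < A)
    (hr : 1 ≤ r) (hl : 0 < lam) (hρ : 0 < ρ) {s : ℝ}
    (hM : intervalMax volume (fun y => ENNReal.ofReal |f y|) c ≤ ENNReal.ofReal s)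
    (hs : 4 * A * s ≤ lam) :
    volume {x | lam < |Hil ((Ioo (c - 4 * ρ) (c + 4 * ρ)).indicator f) x|} ≤
      ENNReal.ofReal (2 * ρ) := by
  set J := Ioo (c - 4 * ρ) (c + 4 * ρ)
  have hc : c ∈ J := ⟨by linarith, by linarith⟩
  refine (ENNReal.mul_le_mul_iff_right (ENNReal.ofReal_pos.2 hl).ne' ENNReal.ofReal_ne_top).1 ?_
  calc ENNReal.ofReal lam * volume {x | lam < |Hil (J.indicator f) x|}
      ≤ ENNReal.ofReal A * ∫⁻ x in J, ENNReal.ofReal |f x| :=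
        (H.mul_volume_lt_abs_Hil_le hA hr _ hl).trans_eq
          (by rw [lintegral_ofReal_abs_indicator _ measurableSet_Ioo])
    _ ≤ ENNReal.ofReal A * (ENNReal.ofReal s * volume J) := by
        gcongr
        exact (setLIntegral_le_intervalMax_mul hc (by simp)).trans (by gcongr)
    _ = ENNReal.ofReal (4 * A * s) * ENNReal.ofReal (2 * ρ) := by
        rw [Real.volume_Ioo, ← ENNReal.ofReal_mul' (by linarith), ← ENNReal.ofReal_mul hA.le,
          ← ENNReal.ofReal_mul' (by linarith)]
        ring_nf
    _ ≤ ENNReal.ofReal lam * ENNReal.ofReal (2 * ρ) := by gcongr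

/-- The part of `f` outside `Ioo (c - 4ρ) (c + 4ρ)` has nearly constant Hilbert transform near `c`,
and it is small at some point since `{|Hf| > λ}` does not fill `Ioo (c - 2ρ) (c + 2ρ)`. -/
lemma HilbertWeakBound.lt_abs_Hil_indicator_Ioo (H : HilbertWeakBound r A) (hA : 0 < A)
    (hr : 1 ≤ r) (hK : LipschitzWith K f) (hf : HasCompactSupport f) (hl : 0 < lam)
    {s : ℝ} (hM : intervalMax volume (fun y => ENNReal.ofReal |f y|) c ≤ ENNReal.ofReal s)
    (hs : 32 * A * s ≤ lam)
    (hsparse : volume ({x | lam < |Hil f x|} ∩ Ioo (c - 2 * ρ) (c + 2 * ρ)) <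
      ENNReal.ofReal (2 * ρ)) {x : ℝ} (hx : x ∈ Ioo (c - ρ) (c + ρ)) (hHx : 4 * lam < |Hil f x|) :
    lam < |Hil ((Ioo (c - 4 * ρ) (c + 4 * ρ)).indicator f) x| := by
  have hρ : 0 < ρ := by linarith [hx.1, hx.2]
  set J := Ioo (c - 4 * ρ) (c + 4 * ρ)
  have hnot : ¬ Ioo (c - 2 * ρ) (c + 2 * ρ) ⊆ {x | lam < |Hil f x|} ∩
      Ioo (c - 2 * ρ) (c + 2 * ρ) ∪ {x | lam < |Hil (J.indicator f) x|} := fun hsub => by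
    refine (measure_mono (μ := volume) hsub).not_gt ((measure_union_le _ _).trans_lt ?_)
    have hlocal := H.volume_lt_abs_Hil_indicator_Ioo_le hA hr hl hρ hM
      (by linarith)
    refine (ENNReal.add_lt_add_of_lt_of_le (ne_top_of_le_ne_top (by finiteness) hlocal)
      hsparse hlocal).trans_eq ?_
    rw [← ENNReal.ofReal_add (by positivity) (by positivity), Real.volume_Ioo]
    ring_nf
  obtain ⟨x', hx', hsmall⟩ := not_subset.1 hnot
  simp only [mem_union, mem_inter_iff, hx', and_true, mem_ofPred_eq, not_or, not_lt] at hsmall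
  have hxc : |x - c| < ρ := abs_sub_lt_iff.2 ⟨by linarith [hx.2], by linarith [hx.1]⟩
  have hxc' : |x' - c| < 2 * ρ := abs_sub_lt_iff.2 ⟨by linarith [hx'.2], by linarith [hx'.1]⟩
  have hfar : ∀ y, |y - c| < 4 * ρ → Jᶜ.indicator f y = 0 := fun y hy => by
    rw [abs_sub_lt_iff] at hy
    exact indicator_of_notMem (notMem_compl_iff.2 (show y ∈ J from
      ⟨by linarith [hy.2], by linarith [hy.1]⟩)) _
  have hosc : |(∫ y, Jᶜ.indicator f y / (x - y)) - ∫ y, Jᶜ.indicator f y / (x' - y)| ≤ lam := by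
    rw [← ENNReal.ofReal_le_ofReal_iff hl.le]
    refine (ofReal_abs_integral_div_sub_le ((hK.continuous.integrable_of_hasCompactSupport
      hf).indicator measurableSet_Ioo.compl) hfar hxc hxc').trans ?_
    calc _ ≤ 16 * ENNReal.ofReal s := by
          gcongr
          exact (intervalMax_mono (.of_forall fun y => ENNReal.ofReal_le_ofReal
            (norm_indicator_le_norm_self f y)) c).trans hM
      _ = ENNReal.ofReal (16 * s) := by rw [ENNReal.ofReal_mul (by norm_num), ENNReal.ofReal_ofNat]
      _ ≤ ENNReal.ofReal lam := ENNReal.ofReal_le_ofReal <| by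
          nlinarith [H.three_quarters_le hA hr]
  rw [Hil_indicator_Ioo_eq_sub hK hf hρ hxc', abs_le, abs_le] at hsmall
  rw [abs_le] at hosc
  rw [Hil_indicator_Ioo_eq_sub hK hf hρ (by linarith), lt_abs]
  refine (lt_abs.1 hHx).imp (fun h => ?_) fun h => ?_ <;>
    linarith [hsmall.1.1, hsmall.1.2, hsmall.2.1, hsmall.2.2, hosc.1, hosc.2]

lemma IsA1Rpow.weightMeasure_Ioo_le_of_half_density (hW : IsA1Rpow C r W) (hr : 1 ≤ r) {E : Set ℝ}
    (hE : MeasurableSet E) (hρ : 0 < ρ)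
    (hdense : ENNReal.ofReal ρ ≤ volume (E ∩ Ioo (c - ρ) (c + ρ))) :
    weightMeasure W (Ioo (c - 4 * ρ) (c + 4 * ρ)) ≤
      ENNReal.ofReal (8 * C) * weightMeasure W (E ∩ Ioo (c - ρ) (c + ρ)) := by
  have hsub : E ∩ Ioo (c - ρ) (c + ρ) ⊆ Ioo (c - 4 * ρ) (c + 4 * ρ) :=
    inter_subset_right.trans (Ioo_subset_Ioo (by linarith) (by linarith))
  have h := hW.weightMeasure_Ioo_mul_volume_le hr (hE.inter measurableSet_Ioo) hsub
  refine (ENNReal.mul_le_mul_iff_left (ENNReal.ofReal_pos.2 hρ).ne' ENNReal.ofReal_ne_top).1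
    ((mul_le_mul_right hdense _).trans (h.trans_eq ?_))
  rw [← ENNReal.ofReal_mul (by linarith [hW.one_le]), mul_right_comm,
    ← ENNReal.ofReal_mul (by linarith [hW.one_le])]
  ring_nf

lemma HilbertWeakBound.weightMeasure_lt_abs_Hil_indicator_Ioo_le (H : HilbertWeakBound r A)
    (hA : 0 < A) (hr : 1 ≤ r) (hW : IsA1Rpow C r W) (hl : 0 < lam) {γ : ℝ} (hρ : 0 < ρ)
    (hM : intervalMax (weightMeasure W) (fun y => ENNReal.ofReal |f y|) c ≤
      ENNReal.ofReal (γ * lam)) :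
    weightMeasure W {x | lam < |Hil ((Ioo (c - 4 * ρ) (c + 4 * ρ)).indicator f) x|} ≤
      ENNReal.ofReal (A * C * γ) * weightMeasure W (Ioo (c - 4 * ρ) (c + 4 * ρ)) := by
  have hC : 0 < C := by linarith [hW.one_le]
  set J := Ioo (c - 4 * ρ) (c + 4 * ρ)
  set m := weightMeasure W
  have hc : c ∈ J := ⟨by linarith, by linarith⟩
  refine (ENNReal.mul_le_mul_iff_right (ENNReal.ofReal_pos.2 hl).ne' ENNReal.ofReal_ne_top).1 ?_
  calc ENNReal.ofReal lam * m {x | lam < |Hil (J.indicator f) x|}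
      ≤ ENNReal.ofReal (A * C) * ∫⁻ x in J, ENNReal.ofReal |f x| ∂m :=
        (H.mul_weightMeasure_lt_abs_Hil_le hA hr hW _ hl).trans_eq
          (by rw [lintegral_ofReal_abs_indicator _ measurableSet_Ioo])
    _ ≤ ENNReal.ofReal (A * C) * (ENNReal.ofReal (γ * lam) * m J) := by
        gcongr
        exact (setLIntegral_le_intervalMax_mul hc (hW.weightMeasure_Ioo_ne_top hr _ _)).trans
          (by gcongr)
    _ = ENNReal.ofReal lam * (ENNReal.ofReal (A * C * γ) * m J) := by
        rw [← mul_assoc, ← mul_assoc, ← ENNReal.ofReal_mul (by positivity),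
          ← ENNReal.ofReal_mul hl.le]
        ring_nf

lemma HilbertWeakBound.weightMeasure_inter_Ioo_le (H : HilbertWeakBound r A) (hA : 0 < A)
    (hr : 1 ≤ r) (hW : IsA1Rpow C r W) (hK : LipschitzWith K f) (hf : HasCompactSupport f)
    (hl : 0 < lam) {γ : ℝ} (hγ : 0 < γ) (hγ' : 32 * A * C * γ ≤ 1) (hρ : 0 < ρ)
    (hM : intervalMax (weightMeasure W) (fun y => ENNReal.ofReal |f y|) c ≤
      ENNReal.ofReal (γ * lam))
    (hdense : ENNReal.ofReal ρ ≤ volume ({x | lam < |Hil f x|} ∩ Ioo (c - ρ) (c + ρ)))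
    (hsparse : volume ({x | lam < |Hil f x|} ∩ Ioo (c - 2 * ρ) (c + 2 * ρ)) <
      ENNReal.ofReal (2 * ρ)) :
    weightMeasure W ({x | 4 * lam < |Hil f x|} ∩ Ioo (c - ρ) (c + ρ)) ≤
      ENNReal.ofReal (8 * A * C ^ 2 * γ) *
        weightMeasure W ({x | lam < |Hil f x|} ∩ Ioo (c - ρ) (c + ρ)) := by
  have hC : 0 < C := by linarith [hW.one_le]
  have hE : MeasurableSet {x | lam < |Hil f x|} :=
    (isOpen_lt continuous_const (continuous_Hil hK hf).abs).measurableSet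
  set J := Ioo (c - 4 * ρ) (c + 4 * ρ)
  set m := weightMeasure W
  have hMvol : intervalMax volume (fun y => ENNReal.ofReal |f y|) c ≤
      ENNReal.ofReal (C * (γ * lam)) := by
    rw [ENNReal.ofReal_mul hC.le]
    exact (hW.intervalMax_volume_le hr _ c).trans (by gcongr)
  have hsub : {x | 4 * lam < |Hil f x|} ∩ Ioo (c - ρ) (c + ρ) ⊆
      {x | lam < |Hil (J.indicator f) x|} := by
    rintro x ⟨hx, hxc⟩
    exact H.lt_abs_Hil_indicator_Ioo hA hr hK hf hl hMvol (by nlinarith) hsparse hxc hx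
  calc m ({x | 4 * lam < |Hil f x|} ∩ Ioo (c - ρ) (c + ρ))
      ≤ ENNReal.ofReal (A * C * γ) * m J := (measure_mono hsub).trans
        (H.weightMeasure_lt_abs_Hil_indicator_Ioo_le hA hr hW hl hρ hM)
    _ ≤ ENNReal.ofReal (A * C * γ) *
          (ENNReal.ofReal (8 * C) * m ({x | lam < |Hil f x|} ∩ Ioo (c - ρ) (c + ρ))) := by
        gcongr
        exact hW.weightMeasure_Ioo_le_of_half_density hr hE hρ hdense
    _ = _ := by
        rw [← mul_assoc, ← ENNReal.ofReal_mul (by positivity)]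
        ring_nf

lemma HilbertWeakBound.weightMeasure_inter_le (H : HilbertWeakBound r A) (hA : 0 < A)
    (hr : 1 ≤ r) (hW : IsA1Rpow C r W) (hK : LipschitzWith K f) (hf : HasCompactSupport f)
    (hl : 0 < lam) {γ : ℝ} (hγ : 0 < γ) (hγ' : 32 * A * C * γ ≤ 1) :
    weightMeasure W ({x | 4 * lam < |Hil f x|} ∩
        {x | intervalMax (weightMeasure W) (fun y => ENNReal.ofReal |f y|) x ≤
          ENNReal.ofReal (γ * lam)}) ≤
      ENNReal.ofReal (16 * A * C ^ 2 * γ) * weightMeasure W {x | lam < |Hil f x|} := by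
  set m := weightMeasure W
  set E := {x | lam < |Hil f x|} with hEdef
  set F := {x | 4 * lam < |Hil f x|} ∩ {x | intervalMax m (fun y => ENNReal.ofReal |f y|) x ≤
    ENNReal.ofReal (γ * lam)}
  have hEopen : IsOpen E := isOpen_lt continuous_const (continuous_Hil hK hf).abs
  have hEfin : volume E ≠ ⊤ := by
    have hint : ∫⁻ x, ENNReal.ofReal |f x| ≠ ⊤ :=
      (hK.continuous.integrable_of_hasCompactSupport hf : Integrable f).abs.lintegral_lt_top.ne
    intro htop
    refine (H.mul_volume_lt_abs_Hil_le hA hr f hl).not_gt ?_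
    rw [← hEdef, htop, ENNReal.mul_top (by simpa using hl)]
    exact (by finiteness : _ ≠ _).lt_top
  have hradius (c : F) := exists_radius_half_density hEopen hEfin
    (c := c) (show lam < |Hil f c| by linarith [show 4 * lam < |Hil f c| from c.2.1])
  choose ρ hρ hdense hsparse using hradius
  have hcover := measure_iUnion_Ioo_le_two_mul (μ := m.restrict F)
    (ν := ENNReal.ofReal (8 * A * C ^ 2 * γ) • m.restrict E)
    (a := fun c : F => (c : ℝ) - ρ c) (b := fun c : F => (c : ℝ) + ρ c) fun c => by
      rw [Measure.smul_apply, smul_eq_mul, Measure.restrict_apply measurableSet_Ioo,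
        Measure.restrict_apply measurableSet_Ioo, inter_comm, inter_comm _ E]
      refine (measure_mono (inter_subset_inter_left _ inter_subset_left)).trans ?_
      exact H.weightMeasure_inter_Ioo_le hA hr hW hK hf hl hγ hγ' (hρ c) c.2.2 (hdense c)
        (hsparse c)
  calc m F ≤ (m.restrict F) (⋃ c : F, Ioo ((c : ℝ) - ρ c) (c + ρ c)) := by
        rw [Measure.restrict_apply (isOpen_iUnion fun _ => isOpen_Ioo).measurableSet]
        refine measure_mono fun x hx => ⟨mem_iUnion.2 ⟨⟨x, hx⟩, ?_⟩, hx⟩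
        constructor <;> linarith [hρ ⟨x, hx⟩]
    _ ≤ _ := hcover
    _ = _ := by
        rw [Measure.smul_apply, smul_eq_mul, Measure.restrict_apply_univ, ← mul_assoc,
          ← ENNReal.ofReal_ofNat 2, ← ENNReal.ofReal_mul (by norm_num)]
        ring_nf

end GoodLambda

section WeakTwoTwo

variable {C r A : ℝ} {W f : ℝ → ℝ} {K : NNReal} {lam : ℝ}

lemma ofReal_sq_mul_measure_lt_intervalMax_le (μ : Measure ℝ) [SFinite μ] {h : ℝ → ℝ≥0∞}
    (hh : AEMeasurable h μ) {t : ℝ} (ht : 0 ≤ t) :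
    ENNReal.ofReal (t ^ 2) * μ {x | ENNReal.ofReal t < intervalMax μ h x} ≤
      16 * ∫⁻ x, h x ^ (2 : ℝ) ∂μ := by
  have hsub : {x | ENNReal.ofReal t < intervalMax μ h x} ⊆
      {x | ENNReal.ofReal (t ^ 2) ≤ intervalMax μ h x ^ (2 : ℝ)} := fun x hx => by
    rw [mem_ofPred_eq, ENNReal.ofReal_pow ht, ENNReal.rpow_two]
    exact pow_le_pow_left' (le_of_lt hx) 2
  calc ENNReal.ofReal (t ^ 2) * μ {x | ENNReal.ofReal t < intervalMax μ h x}
      ≤ ENNReal.ofReal (t ^ 2) * μ {x | ENNReal.ofReal (t ^ 2) ≤ intervalMax μ h x ^ (2 : ℝ)} := by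
        gcongr
    _ ≤ ∫⁻ x, intervalMax μ h x ^ (2 : ℝ) ∂μ := mul_meas_ge_le_lintegral (by fun_prop) _
    _ ≤ ENNReal.ofReal (2 * 2 ^ ((2 : ℝ) + 1) / (2 - 1)) * ∫⁻ x, h x ^ (2 : ℝ) ∂μ :=
        lintegral_intervalMax_rpow_le one_lt_two μ hh
    _ = 16 * ∫⁻ x, h x ^ (2 : ℝ) ∂μ := by norm_num

lemma HilbertWeakBound.ofReal_sq_mul_weightMeasure_le_add (H : HilbertWeakBound r A) (hA : 0 < A)
    (hr : 1 ≤ r) (hW : IsA1Rpow C r W) (hK : LipschitzWith K f) (hf : HasCompactSupport f)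
    (hl : 0 < lam) :
    ENNReal.ofReal ((4 * lam) ^ 2) * weightMeasure W {x | 4 * lam < |Hil f x|} ≤
      ENNReal.ofReal (2 ^ 26 * C ^ 4 * A ^ 2) *
          ∫⁻ x, ENNReal.ofReal |f x| ^ (2 : ℝ) ∂weightMeasure W +
        2⁻¹ * (ENNReal.ofReal (lam ^ 2) * weightMeasure W {x | lam < |Hil f x|}) := by
  have hC := hW.one_le
  set m := weightMeasure W
  set X := ∫⁻ x, ENNReal.ofReal |f x| ^ (2 : ℝ) ∂m
  set γ := 1 / (512 * A * C ^ 2) with hγdef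
  have hγ : 0 < γ := by positivity
  have hγ' : 32 * A * C * γ ≤ 1 := by
    rw [hγdef, mul_one_div, div_le_one (by positivity)]
    nlinarith [mul_pos hA (one_pos.trans_le hC)]
  set M := intervalMax m fun y => ENNReal.ofReal |f y|
  have hsplit : {x | 4 * lam < |Hil f x|} ⊆
      {x | ENNReal.ofReal (γ * lam) < M x} ∪
        ({x | 4 * lam < |Hil f x|} ∩ {x | M x ≤ ENNReal.ofReal (γ * lam)}) := fun x hx =>
    (lt_or_ge (ENNReal.ofReal (γ * lam)) (M x)).imp_right fun h => ⟨hx, h⟩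
  have hmax : ENNReal.ofReal ((γ * lam) ^ 2) * m {x | ENNReal.ofReal (γ * lam) < M x} ≤ 16 * X :=
    ofReal_sq_mul_measure_lt_intervalMax_le m
      (hK.continuous.abs.measurable.ennreal_ofReal.aemeasurable) (by positivity)
  calc ENNReal.ofReal ((4 * lam) ^ 2) * m {x | 4 * lam < |Hil f x|}
      ≤ ENNReal.ofReal ((4 * lam) ^ 2) * (m {x | ENNReal.ofReal (γ * lam) < M x} +
          ENNReal.ofReal (16 * A * C ^ 2 * γ) * m {x | lam < |Hil f x|}) := by
        gcongr
        exact (measure_mono hsplit).trans <| (measure_union_le _ _).trans <| by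
          gcongr
          exact H.weightMeasure_inter_le hA hr hW hK hf hl hγ hγ'
    _ = ENNReal.ofReal (16 / γ ^ 2) *
            (ENNReal.ofReal ((γ * lam) ^ 2) * m {x | ENNReal.ofReal (γ * lam) < M x}) +
          ENNReal.ofReal 2⁻¹ * (ENNReal.ofReal (lam ^ 2) * m {x | lam < |Hil f x|}) := by
        rw [mul_add, ← mul_assoc, ← mul_assoc, ← mul_assoc, ← ENNReal.ofReal_mul (by positivity),
          ← ENNReal.ofReal_mul (by positivity), ← ENNReal.ofReal_mul (by positivity), hγdef]
        congr 3 <;> field_simp <;> norm_num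
    _ ≤ ENNReal.ofReal (16 / γ ^ 2) * (16 * X) +
          ENNReal.ofReal 2⁻¹ * (ENNReal.ofReal (lam ^ 2) * m {x | lam < |Hil f x|}) := by gcongr
    _ = _ := by
        rw [← mul_assoc, ← ENNReal.ofReal_ofNat 16, ← ENNReal.ofReal_mul (by positivity), hγdef,
          ENNReal.ofReal_inv_of_pos two_pos, ENNReal.ofReal_ofNat]
        congr 3
        field_simp
        norm_num

lemma le_two_mul_of_le_add_half {y a : ℝ≥0∞} (hy : y ≠ ⊤) (h : y ≤ a + 2⁻¹ * y) : y ≤ 2 * a := by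
  have hhalf : 2⁻¹ * y + 2⁻¹ * y = y := by rw [← add_mul, ENNReal.inv_two_add_inv_two, one_mul]
  have : 2⁻¹ * y ≤ a := by
    rw [← ENNReal.add_le_add_iff_right (a := 2⁻¹ * y) (by finiteness), hhalf]
    exact h
  calc y = 2⁻¹ * y + 2⁻¹ * y := hhalf.symm
    _ ≤ 2 * a := by rw [two_mul]; gcongr

lemma IsA1Rpow.lintegral_weightMeasure_ne_top (hr : 1 ≤ r) (hW : IsA1Rpow C r W)
    (hcont : Continuous f) (hf : HasCompactSupport f) :
    ∫⁻ x, ENNReal.ofReal |f x| ∂weightMeasure W ≠ ⊤ := by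
  have : IsLocallyFiniteMeasure (weightMeasure W) := ⟨fun x => ⟨Ioo (x - 1) (x + 1),
    Ioo_mem_nhds (by linarith) (by linarith), (hW.weightMeasure_Ioo_ne_top hr _ _).lt_top⟩⟩
  exact (hcont.integrable_of_hasCompactSupport hf : Integrable f _).abs.lintegral_lt_top.ne

lemma HilbertWeakBound.sq_mul_weightMeasure_lt_abs_Hil_le_of_lipschitz (H : HilbertWeakBound r A)
    (hA : 0 < A) (hr : 1 ≤ r) (hW : IsA1Rpow C r W) (hK : LipschitzWith K f)
    (hf : HasCompactSupport f) (hl : 0 < lam) :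
    ENNReal.ofReal (lam ^ 2) * weightMeasure W {x | lam < |Hil f x|} ≤
      ENNReal.ofReal (2 ^ 27 * C ^ 4 * A ^ 2) *
        ∫⁻ x, ENNReal.ofReal |f x| ^ (2 : ℝ) ∂weightMeasure W := by
  set m := weightMeasure W
  set Q : ℝ → ℝ≥0∞ := fun t => ENNReal.ofReal (t ^ 2) * m {x | t < |Hil f x|}
  set Y := ⨆ t ∈ Ioc 0 lam, Q t
  have hQ {t : ℝ} (ht : t ∈ Ioc 0 lam) : Q t ≤ Y := le_iSup₂ (f := fun t _ => Q t) t ht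
  have hYfin : Y ≠ ⊤ := by
    have hint := hW.lintegral_weightMeasure_ne_top hr hK.continuous hf
    refine ne_top_of_le_ne_top (b := ENNReal.ofReal lam *
      (ENNReal.ofReal (A * C) * ∫⁻ x, ENNReal.ofReal |f x| ∂m)) (by finiteness) ?_
    refine iSup₂_le fun t ht => ?_
    calc Q t = ENNReal.ofReal t * (ENNReal.ofReal t * m {x | t < |Hil f x|}) := by
          rw [← mul_assoc, ← ENNReal.ofReal_mul ht.1.le, ← pow_two]
      _ ≤ _ := mul_le_mul' (ENNReal.ofReal_le_ofReal ht.2)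
          (H.mul_weightMeasure_lt_abs_Hil_le hA hr hW f ht.1)
  refine (hQ ⟨hl, le_rfl⟩).trans
    ((le_two_mul_of_le_add_half hYfin (iSup₂_le fun t ht => ?_)).trans_eq
      (b := 2 * (ENNReal.ofReal (2 ^ 26 * C ^ 4 * A ^ 2) *
        ∫⁻ x, ENNReal.ofReal |f x| ^ (2 : ℝ) ∂m)) ?_)
  · have hquarter : t / 4 ∈ Ioc 0 lam := ⟨by linarith [ht.1], by linarith [ht.1, ht.2]⟩
    have hgood := H.ofReal_sq_mul_weightMeasure_le_add hA hr hW hK hf hquarter.1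
    rw [mul_div_cancel₀ t four_ne_zero] at hgood
    refine hgood.trans ?_
    gcongr
    exact hQ hquarter
  · rw [← mul_assoc, ← ENNReal.ofReal_ofNat 2, ← ENNReal.ofReal_mul (by norm_num)]
    ring_nf

end WeakTwoTwo

/-! ### Approximation by Lipschitz functions -/

lemma exists_isBounded_setLIntegral_compl_le {f : ℝ → ℝ} (hf : AEMeasurable f) {h : ℝ → ℝ≥0∞}
    (hfin : ∫⁻ x, h x ≠ ⊤) {ε : ℝ≥0∞} (hε : 0 < ε) :
    ∃ (s : Set ℝ) (M : ℝ), MeasurableSet s ∧ Bornology.IsBounded s ∧ 0 ≤ M ∧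
      (∀ᵐ x, x ∈ s → |f x| ≤ M) ∧ ∫⁻ x in sᶜ, h x ≤ ε := by
  set s : ℕ → Set ℝ := fun m => Icc (-m) m ∩ {x | |hf.mk f x| ≤ m}
  have hs (m : ℕ) : MeasurableSet (s m) := measurableSet_Icc.inter
    (measurableSet_le (continuous_abs.measurable.comp hf.measurable_mk) measurable_const)
  have hmono : Monotone s := fun i j hij => by
    have hij' : (i : ℝ) ≤ j := mod_cast hij
    exact inter_subset_inter (Icc_subset_Icc (neg_le_neg hij') hij') fun x hx => le_trans hx hij'
  have hexhaust : ⋂ m, (s m)ᶜ = ∅ := by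
    rw [← compl_iUnion, compl_empty_iff, eq_univ_iff_forall]
    intro x
    obtain ⟨m, hm⟩ := exists_nat_ge (max |x| |hf.mk f x|)
    exact mem_iUnion.2 ⟨m, abs_le.1 ((le_max_left _ _).trans hm), (le_max_right _ _).trans hm⟩
  have htendsto := tendsto_measure_iInter_atTop (μ := volume.withDensity h)
    (fun m => (hs m).compl.nullMeasurableSet) (fun i j hij => compl_subset_compl.2 (hmono hij))
    ⟨0, ne_top_of_le_ne_top (by simpa using hfin) (measure_mono (subset_univ _))⟩
  rw [hexhaust, measure_empty] at htendsto
  obtain ⟨m, hm⟩ := (htendsto.eventually (eventually_le_nhds hε)).exists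
  refine ⟨s m, m, hs m, (Metric.isBounded_Icc _ _).subset inter_subset_left, m.cast_nonneg, ?_,
    (withDensity_apply h (hs m).compl).symm.trans_le hm⟩
  filter_upwards [hf.ae_eq_mk] with x hx hxs
  rw [hx]
  exact hxs.2

lemma exists_lipschitzWith_abs_le_lintegral_sub_le {g : ℝ → ℝ} (hg : Integrable g) {M : ℝ}
    (hM : 0 ≤ M) (hgM : ∀ᵐ x, |g x| ≤ M) {ε : ℝ} (hε : 0 < ε) :
    ∃ (φ : ℝ → ℝ) (K : NNReal), LipschitzWith K φ ∧ HasCompactSupport φ ∧ (∀ x, |φ x| ≤ M) ∧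
      ∫⁻ x, ENNReal.ofReal |g x - φ x| ≤ ENNReal.ofReal ε := by
  obtain ⟨ψ, hψc, hψs, hψ⟩ :=
    (memLp_one_iff_integrable.2 hg).exist_eLpNorm_sub_le (by simp) le_rfl hε
  obtain ⟨K, hK⟩ := ContDiff.lipschitzWith_of_hasCompactSupport (𝕂 := ℝ) hψc hψs (by simp)
  have hMM : -M ≤ M := neg_le_self hM
  refine ⟨fun x => projIcc (-M) M hMM (ψ x), _,
    (LipschitzWith.subtype_val _).comp ((LipschitzWith.projIcc hMM).comp hK),
    hψc.comp_left (g := fun t => (projIcc (-M) M hMM t : ℝ)) ?_,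
    fun x => abs_le.2 (projIcc (-M) M hMM (ψ x)).2, ?_⟩
  · rw [projIcc_of_mem hMM ⟨neg_nonpos.2 hM, hM⟩]
  · rw [eLpNorm_one_eq_lintegral_enorm] at hψ
    refine (lintegral_mono_ae ?_).trans hψ
    filter_upwards [hgM] with x hx
    rw [Pi.sub_apply, Real.enorm_eq_ofReal_abs]
    refine ENNReal.ofReal_le_ofReal ?_
    simpa [projIcc_of_mem hMM (abs_le.1 hx)] using abs_projIcc_sub_projIcc hMM (c := g x) (d := ψ x)

lemma lintegral_mul_sq_le_add {φ g : ℝ → ℝ} {W : ℝ → ℝ≥0∞} {M b : ℝ} (hM : 0 ≤ M) (hb : 0 ≤ b)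
    (hW : ∀ x, W x ≤ ENNReal.ofReal b) (hφ : Measurable φ) (hφM : ∀ x, |φ x| ≤ M)
    (hg : AEMeasurable g) (hgM : ∀ᵐ x, |g x| ≤ M) :
    ∫⁻ x, W x * ENNReal.ofReal |φ x| ^ (2 : ℝ) ≤
      (∫⁻ x, W x * ENNReal.ofReal |g x| ^ (2 : ℝ)) +
        ENNReal.ofReal (b * (2 * M)) * ∫⁻ x, ENNReal.ofReal |g x - φ x| := by
  rw [← lintegral_const_mul' _ _ ENNReal.ofReal_ne_top, ← lintegral_add_right' _ (by fun_prop)]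
  refine lintegral_mono_ae ?_
  filter_upwards [hgM] with x hgx
  have hsq : |φ x| ^ 2 ≤ |g x| ^ 2 + 2 * M * |g x - φ x| := by
    have hdiff : |φ x| - |g x| ≤ |g x - φ x| := by
      rw [abs_sub_comm]; exact abs_sub_abs_le_abs_sub _ _
    have hsum : |φ x| + |g x| ≤ 2 * M := by linarith [hφM x]
    nlinarith [abs_nonneg (φ x), abs_nonneg (g x), abs_nonneg (g x - φ x)]
  calc W x * ENNReal.ofReal |φ x| ^ (2 : ℝ)
      ≤ W x * (ENNReal.ofReal |g x| ^ (2 : ℝ) + ENNReal.ofReal (2 * M * |g x - φ x|)) := by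
        rw [ENNReal.rpow_two, ENNReal.rpow_two, ← ENNReal.ofReal_pow (abs_nonneg _),
          ← ENNReal.ofReal_pow (abs_nonneg _), ← ENNReal.ofReal_add (by positivity) (by positivity)]
        gcongr
    _ ≤ W x * ENNReal.ofReal |g x| ^ (2 : ℝ) +
          ENNReal.ofReal b * ENNReal.ofReal (2 * M * |g x - φ x|) := by
        rw [mul_add]
        gcongr
        exact hW x
    _ = _ := by rw [← ENNReal.ofReal_mul hb, ← ENNReal.ofReal_mul (by positivity), mul_assoc b]

lemma lintegral_abs_sub_mul_le_add {f g φ : ℝ → ℝ} {N : ℝ → ℝ≥0∞} {b : ℝ}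
    (hN : ∀ x, N x ≤ ENNReal.ofReal b) (hg : AEMeasurable g) (hφ : Measurable φ) :
    ∫⁻ x, ENNReal.ofReal |f x - φ x| * N x ≤ (∫⁻ x, ENNReal.ofReal |f x - g x| * N x) +
      ENNReal.ofReal b * ∫⁻ x, ENNReal.ofReal |g x - φ x| := by
  rw [← lintegral_const_mul' _ _ ENNReal.ofReal_ne_top, ← lintegral_add_right' _ (by fun_prop)]
  refine lintegral_mono fun x => ?_
  calc ENNReal.ofReal |f x - φ x| * N x
      ≤ (ENNReal.ofReal |f x - g x| + ENNReal.ofReal |g x - φ x|) * N x := by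
        gcongr
        rw [← ENNReal.ofReal_add (abs_nonneg _) (abs_nonneg _)]
        exact ENNReal.ofReal_le_ofReal (abs_sub_le _ _ _)
    _ ≤ _ := by
        rw [add_mul, mul_comm (ENNReal.ofReal |g x - φ x|)]
        gcongr
        exact hN x

lemma lintegral_abs_sub_indicator_mul {s : Set ℝ} (hs : MeasurableSet s) (f : ℝ → ℝ)
    (N : ℝ → ℝ≥0∞) :
    ∫⁻ x, ENNReal.ofReal |f x - s.indicator f x| * N x =
      ∫⁻ x in sᶜ, ENNReal.ofReal |f x| * N x := by
  rw [← lintegral_indicator hs.compl]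
  congr 1 with x
  by_cases hxs : x ∈ s <;> simp [hxs]

lemma exists_lipschitzWith_lintegral_sub_mul_le {f : ℝ → ℝ} (hf : AEMeasurable f)
    {N W : ℝ → ℝ≥0∞} {b : ℝ} (hb : 0 ≤ b) (hN : ∀ x, N x ≤ ENNReal.ofReal b)
    (hW : ∀ x, W x ≤ ENNReal.ofReal b) (hfin : ∫⁻ x, ENNReal.ofReal |f x| * N x ≠ ⊤)
    {ε : ℝ} (hε : 0 < ε) :
    ∃ (φ : ℝ → ℝ) (K : NNReal), LipschitzWith K φ ∧ HasCompactSupport φ ∧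
      ∫⁻ x, ENNReal.ofReal |f x - φ x| * N x ≤ ENNReal.ofReal (2 * ε) ∧
      ∫⁻ x, W x * ENNReal.ofReal |φ x| ^ (2 : ℝ) ≤
        (∫⁻ x, W x * ENNReal.ofReal |f x| ^ (2 : ℝ)) + ENNReal.ofReal ε := by
  obtain ⟨s, M, hs, hsb, hM, hsM, hsε⟩ :=
    exists_isBounded_setLIntegral_compl_le hf hfin (ENNReal.ofReal_pos.2 hε)
  set g := s.indicator f
  have hg : AEMeasurable g := hf.indicator hs
  have hgM : ∀ᵐ x, |g x| ≤ M := hsM.mono fun x hx => by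
    by_cases hxs : x ∈ s <;> simp [g, hxs, hx, hM]
  have hgint : Integrable g := (integrable_indicator_iff hs).2 <|
    Measure.integrableOn_of_bounded hsb.measure_lt_top.ne hf.aestronglyMeasurable
      ((ae_restrict_iff' hs).2 hsM)
  have hden : 0 < b * (2 * M + 1) + 1 := by positivity
  obtain ⟨φ, K, hK, hφs, hφM, hφ⟩ := exists_lipschitzWith_abs_le_lintegral_sub_le hgint hM hgM
    (ε := ε / (b * (2 * M + 1) + 1)) (by positivity)
  have hsmall {t : ℝ} (ht0 : 0 ≤ t) (ht : t ≤ b * (2 * M + 1) + 1) :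
      ENNReal.ofReal t * ∫⁻ x, ENNReal.ofReal |g x - φ x| ≤ ENNReal.ofReal ε := by
    refine (mul_le_mul_right hφ _).trans ?_
    rw [← ENNReal.ofReal_mul ht0]
    refine ENNReal.ofReal_le_ofReal ?_
    rw [mul_div_assoc', div_le_iff₀ hden, mul_comm ε]
    gcongr
  have hbM : 0 ≤ b * M := mul_nonneg hb hM
  refine ⟨φ, K, hK, hφs, ?_, ?_⟩
  · refine (lintegral_abs_sub_mul_le_add hN hg hK.continuous.measurable).trans ?_
    rw [lintegral_abs_sub_indicator_mul hs, two_mul, ENNReal.ofReal_add hε.le hε.le]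
    exact add_le_add hsε (hsmall hb (by nlinarith))
  · refine (lintegral_mul_sq_le_add hM hb hW hK.continuous.measurable hφM hg hgM).trans ?_
    refine add_le_add (lintegral_mono fun x => ?_) (hsmall (by positivity) (by nlinarith))
    gcongr W x * ENNReal.ofReal ?_ ^ (2 : ℝ)
    exact norm_indicator_le_norm_self f x

/-! ### Weak type `(2, 2)` with two weights -/

section TwoWeights

variable {C r A : ℝ} {W u f φ : ℝ → ℝ} {K : NNReal} {lam : ℝ}

lemma setOf_lt_abs_Hil_subset (hK : LipschitzWith K φ) (hφ : HasCompactSupport φ) :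
    {x | lam < |Hil f x|} ⊆
      {x | lam / 2 < |Hil φ x|} ∪ {x | lam / 2 < |Hil (fun y => f y - φ y) x|} := by
  intro x (hx : lam < |Hil f x|)
  have hint : Integrable φ := hK.continuous.integrable_of_hasCompactSupport hφ
  have hadd := abs_Hil_le_add (f := f) (fun ε hε => integrableOn_div_sub hint x hε)
    (tendsto_truncHilbert_symmHilbert hK hφ x)
  rw [← Hil_eq_symmHilbert hK hφ] at hadd
  rw [mem_union, mem_ofPred_eq, mem_ofPred_eq]
  by_contra! hcon
  linarith [hcon.1, hcon.2]

lemma HilbertWeakBound.sq_mul_setLIntegral_lt_abs_Hil_le_add (H : HilbertWeakBound r A)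
    (hA : 0 < A) (hr : 1 ≤ r) (hW : IsA1Rpow C r W) (hu : IsWeight u) (huW : ∀ᵐ x, u x ≤ W x)
    (hK : LipschitzWith K φ) (hφ : HasCompactSupport φ)
    (hfin : ∫⁻ x, ENNReal.ofReal |f x - φ x| * Mr r u x < ⊤) (hl : 0 < lam) :
    ENNReal.ofReal (lam ^ 2) * ∫⁻ x in {x | lam < |Hil f x|}, ENNReal.ofReal (u x) ≤
      ENNReal.ofReal (2 ^ 29 * C ^ 4 * A ^ 2) *
          ∫⁻ x, ENNReal.ofReal |φ x| ^ (2 : ℝ) ∂weightMeasure W +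
        ENNReal.ofReal (2 * lam * A) * ∫⁻ x, ENNReal.ofReal |f x - φ x| * Mr r u x := by
  set S := {x | lam / 2 < |Hil φ x|}
  set T := {x | lam / 2 < |Hil (fun y => f y - φ y) x|}
  have hS : ∫⁻ x in S, ENNReal.ofReal (u x) ≤ weightMeasure W S := by
    rw [weightMeasure_apply]
    exact lintegral_mono_ae (ae_restrict_of_ae (huW.mono fun _ => ENNReal.ofReal_le_ofReal))
  have : 1 ≤ C := hW.one_le
  calc ENNReal.ofReal (lam ^ 2) * ∫⁻ x in {x | lam < |Hil f x|}, ENNReal.ofReal (u x)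
      ≤ ENNReal.ofReal (lam ^ 2) * (weightMeasure W S + ∫⁻ x in T, ENNReal.ofReal (u x)) := by
        gcongr
        exact (lintegral_mono_set (setOf_lt_abs_Hil_subset hK hφ)).trans
          ((lintegral_union_le _ _ _).trans (by gcongr))
    _ = 4 * (ENNReal.ofReal ((lam / 2) ^ 2) * weightMeasure W S) +
          ENNReal.ofReal (2 * lam) *
            (ENNReal.ofReal (lam / 2) * ∫⁻ x in T, ENNReal.ofReal (u x)) := by
        rw [mul_add, ← mul_assoc, ← mul_assoc, ← ENNReal.ofReal_ofNat 4,
          ← ENNReal.ofReal_mul (by norm_num), ← ENNReal.ofReal_mul (by positivity)]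
        ring_nf
    _ ≤ 4 * (ENNReal.ofReal (2 ^ 27 * C ^ 4 * A ^ 2) *
            ∫⁻ x, ENNReal.ofReal |φ x| ^ (2 : ℝ) ∂weightMeasure W) +
          ENNReal.ofReal (2 * lam) *
            (ENNReal.ofReal A * ∫⁻ x, ENNReal.ofReal |f x - φ x| * Mr r u x) :=
        add_le_add (mul_le_mul_right (H.sq_mul_weightMeasure_lt_abs_Hil_le_of_lipschitz hA hr hW hK
          hφ (half_pos hl)) _) (mul_le_mul_right (H u _ hu hfin _ (half_pos hl)) _)
    _ = _ := by
        rw [← mul_assoc, ← mul_assoc, ← ENNReal.ofReal_ofNat 4,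
          ← ENNReal.ofReal_mul (by norm_num), ← ENNReal.ofReal_mul (by positivity)]
        ring_nf

lemma HilbertWeakBound.sq_mul_setLIntegral_lt_abs_Hil_le (H : HilbertWeakBound r A) (hA : 0 < A)
    (hr : 1 ≤ r) (hW : IsA1Rpow C r W) {b : ℝ} (hWb : ∀ x, W x ≤ b) (hu : IsWeight u)
    (huW : ∀ᵐ x, u x ≤ W x) (hf : AEMeasurable f)
    (hfin : ∫⁻ x, ENNReal.ofReal |f x| * Mr r u x ≠ ⊤) (hl : 0 < lam) :
    ENNReal.ofReal (lam ^ 2) * ∫⁻ x in {x | lam < |Hil f x|}, ENNReal.ofReal (u x) ≤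
      ENNReal.ofReal (2 ^ 29 * C ^ 4 * A ^ 2) *
        ∫⁻ x, ENNReal.ofReal |f x| ^ (2 : ℝ) ∂weightMeasure W := by
  have hC : 0 < C := one_pos.trans_le hW.one_le
  have hb : 0 < b := (hW.pos 0).trans_le (hWb 0)
  set k := 2 ^ 29 * C ^ 4 * A ^ 2
  have hk : 0 < k + 4 * lam * A := by positivity
  have hN (x : ℝ) : Mr r u x ≤ ENNReal.ofReal (C * b) :=
    (Mr_mono_ae hu.1 (fun x => (hW.pos x).le) (one_pos.le.trans hr) huW x).trans
      ((hW.Mr_le hr x).trans (ENNReal.ofReal_le_ofReal (by gcongr; exact hWb x)))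
  have hWC (x : ℝ) : ENNReal.ofReal (W x) ≤ ENNReal.ofReal (C * b) :=
    ENNReal.ofReal_le_ofReal ((hWb x).trans (le_mul_of_one_le_left hb.le hW.one_le))
  refine ENNReal.le_of_forall_pos_le_add fun ε (hε : (0 : ℝ) < ε) _ => ?_
  set δ : ℝ := ε / (k + 4 * lam * A)
  have hδ : 0 < δ := by positivity
  obtain ⟨φ, K, hK, hφ, hφf, hφ2⟩ :=
    exists_lipschitzWith_lintegral_sub_mul_le hf (by positivity) hN hWC hfin hδ
  rw [← lintegral_weightMeasure hW.measurable, ← lintegral_weightMeasure hW.measurable] at hφ2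
  calc ENNReal.ofReal (lam ^ 2) * ∫⁻ x in {x | lam < |Hil f x|}, ENNReal.ofReal (u x)
      ≤ ENNReal.ofReal k * ∫⁻ x, ENNReal.ofReal |φ x| ^ (2 : ℝ) ∂weightMeasure W +
          ENNReal.ofReal (2 * lam * A) * ∫⁻ x, ENNReal.ofReal |f x - φ x| * Mr r u x :=
        H.sq_mul_setLIntegral_lt_abs_Hil_le_add hA hr hW hu huW hK hφ
          (hφf.trans_lt ENNReal.ofReal_lt_top) hl
    _ ≤ ENNReal.ofReal k * ((∫⁻ x, ENNReal.ofReal |f x| ^ (2 : ℝ) ∂weightMeasure W) +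
          ENNReal.ofReal δ) + ENNReal.ofReal (2 * lam * A) * ENNReal.ofReal (2 * δ) := by gcongr
    _ = _ := by
        rw [mul_add, add_assoc, ← ENNReal.ofReal_mul (by positivity),
          ← ENNReal.ofReal_mul (by positivity),
          ← ENNReal.ofReal_add (by positivity) (by positivity),
          show k * δ + 2 * lam * A * (2 * δ) = (k + 4 * lam * A) * δ by ring,
          mul_div_cancel₀ _ hk.ne', ENNReal.ofReal_coe_nnreal]

end TwoWeights

/-! ### The maximal function as a majorant weight -/

lemma le_rpow_add_one_mul_rpow_neg {m v : ℝ≥0∞} (hv : v ≠ ⊤) (hvm : v ≤ m) {α : ℝ} (hα : 0 < α) :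
    m ≤ m ^ (α + 1) * v ^ (-α) := by
  rcases eq_or_ne m 0 with rfl | h0
  · exact zero_le
  rcases eq_or_ne m ⊤ with rfl | ht
  · rw [ENNReal.top_rpow_of_pos (by positivity),
      ENNReal.top_mul (by simp [ENNReal.rpow_neg, hα.le, hv])]
  · calc m = m ^ (α + 1) * m ^ (-α) := by rw [← ENNReal.rpow_add _ _ h0 ht]; simp
      _ ≤ _ := by
        rw [ENNReal.rpow_neg, ENNReal.rpow_neg]
        gcongr

lemma lintegral_rpow_eq_zero_iff {X : Type*} [MeasurableSpace X] {μ : Measure X} {g : X → ℝ≥0∞}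
    (hg : AEMeasurable g μ) {α : ℝ} (hα : 0 < α) : ∫⁻ x, g x ^ α ∂μ = 0 ↔ ∫⁻ x, g x ∂μ = 0 := by
  rw [lintegral_eq_zero_iff' hg, lintegral_eq_zero_iff' (hg.pow_const α)]
  simp [EventuallyEq, ENNReal.rpow_eq_zero_iff_of_pos hα]

section MajorantWeight

variable {r α A b lam : ℝ} {u w f : ℝ → ℝ} {D : Set ℝ}

lemma isA1Rpow_toReal_Mr (hum : AEMeasurable u volume) (hu : ∀ x, 0 ≤ u x) (hr : 0 < r)
    (hα : r < α) (hint : ∫⁻ x, ENNReal.ofReal (u x) ^ α ≠ 0) (hfin : ∀ x, Mr α u x ≠ ⊤) :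
    IsA1Rpow (6 / (1 - r / α)) r fun x => (Mr α u x).toReal := by
  have hα0 : 0 < α := hr.trans hα
  have hθ : r / α < 1 := (div_lt_one hα0).2 hα
  have hθ0 : 0 < r / α := by positivity
  refine ⟨?_, (measurable_Mr hu hα0.le).ennreal_toReal,
    fun x => ENNReal.toReal_pos (Mr_pos hu hα0.le hint x).ne' (hfin x), fun x => ?_⟩
  · rw [one_le_div (by linarith)]
    linarith
  · have hpow (y : ℝ) : ENNReal.ofReal (Mr α u y).toReal ^ r =
        intervalMax volume (fun z => ENNReal.ofReal (u z) ^ α) y ^ (r / α) := by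
      rw [ENNReal.ofReal_toReal (hfin y), Mr_eq_intervalMax hu hα0.le, ← ENNReal.rpow_mul,
        one_div_mul_eq_div]
    simp only [hpow]
    exact intervalMax_intervalMax_rpow_le (hum.ennreal_ofReal.pow_const α) hθ0 hθ x

lemma lintegral_weightMeasure_toReal_Mr_le_dualNormSq (hr : 0 < r) (hr2 : r < 2)
    (hu : ∀ x, 0 ≤ u x) (hwm : AEMeasurable w volume) (hw : ∀ x, 0 ≤ w x) (huw : ∀ x, u x ≤ w x) :
    ∫⁻ x, ENNReal.ofReal |f x| ^ (2 : ℝ) ∂weightMeasure (fun x => (Mr (r / (2 - r)) u x).toReal) ≤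
      dualNormSq r w f := by
  have h2r : 2 - r ≠ 0 := by linarith
  have hα : 0 < r / (2 - r) := div_pos hr (by linarith)
  have hexp : 2 * (r / (2 - r)) / r = r / (2 - r) + 1 := by field_simp; ring
  rw [lintegral_weightMeasure (measurable_Mr hu hα.le).ennreal_toReal, dualNormSq, hexp]
  refine lintegral_mono_ae ?_
  filter_upwards [ae_ofReal_le_Mr hwm hw hα] with x hx
  rw [ofReal_sq_eq_ofReal_abs_sq, ENNReal.rpow_two, mul_comm, mul_assoc]
  gcongr
  exact ENNReal.ofReal_toReal_le.trans ((Mr_mono_ae hu hw hα.le (.of_forall huw) x).trans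
    (le_rpow_add_one_mul_rpow_neg ENNReal.ofReal_ne_top hx hα))

lemma HilbertWeakBound.sq_mul_setLIntegral_indicator_le_of_ae_le (H : HilbertWeakBound r A)
    (hA : 0 < A) (hr : 1 < r) (hr2 : r < 2) (hw : IsWeight w) (hf : AEMeasurable f volume)
    (hfin : dualNormSq r w f ≠ ⊤) (hD : MeasurableSet D)
    (hwD : ∫⁻ x in D, ENNReal.ofReal (w x) ≠ ⊤) (hb : 0 ≤ b)
    (hDb : ∀ᵐ x, D.indicator w x ≤ b) (hl : 0 < lam) :
    ENNReal.ofReal (lam ^ 2) *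
        ∫⁻ x in {x | lam < |Hil f x|}, ENNReal.ofReal (D.indicator w x) ≤
      ENNReal.ofReal (2 ^ 29 * (6 / (r - 1)) ^ 4 * A ^ 2) * dualNormSq r w f := by
  set u := D.indicator w
  set α := r / (2 - r) with hα_def
  have h2r : 0 < 2 - r := by linarith
  have hα : 0 < α := by positivity
  have hr_lt_α : r < α := by rw [hα_def, lt_div_iff₀ h2r]; nlinarith
  have hC : 6 / (1 - r / α) = 6 / (r - 1) := by
    rw [hα_def, div_div_cancel₀ (by linarith)]; ring_nf
  have hwm : AEMeasurable w volume := hw.2.aestronglyMeasurable.aemeasurable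
  have hu : IsWeight u := ⟨indicator_nonneg fun x _ => hw.1 x, hw.2.indicator hD⟩
  have hum : AEMeasurable u volume := hwm.indicator hD
  have huM : ∀ x, Mr α u x ≤ ENNReal.ofReal b := Mr_le_ofReal hu.1 hα hDb
  have huM_ne (x : ℝ) : Mr α u x ≠ ⊤ := ne_top_of_le_ne_top ENNReal.ofReal_ne_top (huM x)
  by_cases hint : ∫⁻ x, ENNReal.ofReal (u x) ^ α = 0
  · rw [lintegral_rpow_eq_zero_iff hum.ennreal_ofReal hα] at hint
    rw [le_zero_iff.1 ((setLIntegral_le_lintegral _ _).trans hint.le), mul_zero]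
    exact zero_le
  have hPfin : ∫⁻ x, ENNReal.ofReal |f x| * Mr r u x ≠ ⊤ :=
    ne_top_of_le_ne_top (by finiteness)
      (lintegral_abs_mul_Mr_indicator_le hr hr2 hwm hw.1 hf hD hfin)
  have huW : ∀ᵐ x, u x ≤ (Mr α u x).toReal := (ae_ofReal_le_Mr hum hu.1 hα).mono fun x hx =>
    (ENNReal.ofReal_le_iff_le_toReal (huM_ne x)).1 hx
  have hW := isA1Rpow_toReal_Mr hum hu.1 (one_pos.trans hr) hr_lt_α hint huM_ne
  rw [hC] at hW
  refine (H.sq_mul_setLIntegral_lt_abs_Hil_le hA hr.le hW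
    (fun x => ENNReal.toReal_le_of_le_ofReal hb (huM x)) hu huW hf hPfin hl).trans ?_
  gcongr
  exact lintegral_weightMeasure_toReal_Mr_le_dualNormSq (one_pos.trans hr) hr2 hu.1 hwm hw.1
    (indicator_le_self' fun x _ => hw.1 x)

end MajorantWeight

/-! ### The duality argument, for small `r` -/

section SmallExponent

variable {r A lam : ℝ} {w f : ℝ → ℝ} {D : Set ℝ}

lemma sq_mul_le_of_mul_le_sqrt_mul_sqrt {l a c J k : ℝ≥0∞} (ha : a ≠ ⊤)
    (h : l * a ≤ c * (J ^ (1 / 2 : ℝ) * (k * a) ^ (1 / 2 : ℝ))) : l ^ 2 * a ≤ k * c ^ 2 * J := by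
  rcases eq_or_ne a 0 with rfl | ha0
  · simp
  have hsqrt (t : ℝ≥0∞) : (t ^ (1 / 2 : ℝ)) ^ 2 = t := by
    rw [← ENNReal.rpow_natCast, ← ENNReal.rpow_mul]; norm_num
  rw [← ENNReal.mul_le_mul_iff_left ha0 ha]
  calc l ^ 2 * a * a = (l * a) ^ 2 := by ring
    _ ≤ (c * (J ^ (1 / 2 : ℝ) * (k * a) ^ (1 / 2 : ℝ))) ^ 2 := by gcongr
    _ = _ := by rw [mul_pow, mul_pow, hsqrt, hsqrt]; ring

lemma setLIntegral_indicator_toMeasurable_inter (S : Set ℝ) (hD : MeasurableSet D) :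
    ∫⁻ x in S, ENNReal.ofReal (D.indicator w x) =
      ∫⁻ x in toMeasurable volume S ∩ D, ENNReal.ofReal (w x) := by
  rw [← Measure.restrict_toMeasurable_of_sFinite, inter_comm, ← setLIntegral_indicator hD]
  refine lintegral_congr fun x => ?_
  by_cases hx : x ∈ D <;> simp [hx]

lemma HilbertWeakBound.sq_mul_setLIntegral_indicator_le_of_duality (H : HilbertWeakBound r A)
    (hA : 0 < A) (hr : 1 < r) (hr2 : r < 2) (hw : IsWeight w) (hf : AEMeasurable f volume)
    (hfin : dualNormSq r w f ≠ ⊤) (hD : MeasurableSet D)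
    (hwD : ∫⁻ x in D, ENNReal.ofReal (w x) ≠ ⊤) (hl : 0 < lam) :
    ENNReal.ofReal (lam ^ 2) *
        ∫⁻ x in {x | lam < |Hil f x|}, ENNReal.ofReal (D.indicator w x) ≤
      ENNReal.ofReal (2 / r * 2 ^ (2 / r + 1) / (2 / r - 1) * A ^ 2) * dualNormSq r w f := by
  set S := {x | lam < |Hil f x|}
  set F := toMeasurable volume S ∩ D
  have hF : MeasurableSet F := (measurableSet_toMeasurable _ _).inter hD
  have hwF : ∫⁻ x in F, ENNReal.ofReal (w x) ≠ ⊤ :=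
    ne_top_of_le_ne_top hwD (lintegral_mono_set inter_subset_right)
  have hdual := lintegral_abs_mul_Mr_indicator_le hr hr2
    hw.2.aestronglyMeasurable.aemeasurable hw.1 hf hF hfin
  have hweak := H (F.indicator w) f ⟨indicator_nonneg fun x _ => hw.1 x, hw.2.indicator hF⟩
    (hdual.trans_lt (by finiteness)) lam hl
  rw [setLIntegral_indicator_toMeasurable_inter _ hF,
    inter_eq_self_of_subset_right inter_subset_left] at hweak
  rw [setLIntegral_indicator_toMeasurable_inter _ hD, ENNReal.ofReal_pow hl.le,
    ENNReal.ofReal_mul' (by positivity), ENNReal.ofReal_pow hA.le]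
  exact sq_mul_le_of_mul_le_sqrt_mul_sqrt hwF (hweak.trans (by gcongr))

end SmallExponent

/-! ### Exhaustion by bounded pieces of the weight -/

section Exhaustion

variable {r A lam : ℝ} {w f : ℝ → ℝ} {D : Set ℝ}

lemma exists_exhaustion_indicator_le (hw : IsWeight w) :
    ∃ D : ℕ → Set ℝ, Monotone D ∧ (∀ x, ∃ n, x ∈ D n) ∧ ∀ n, MeasurableSet (D n) ∧
      ∫⁻ x in D n, ENNReal.ofReal (w x) ≠ ⊤ ∧ ∀ᵐ x, (D n).indicator w x ≤ n := by
  have hwm : AEMeasurable w volume := hw.2.aestronglyMeasurable.aemeasurable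
  have hcast {i j : ℕ} (hij : i ≤ j) : (i : ℝ) ≤ j := by exact_mod_cast hij
  refine ⟨fun n => Icc (-n : ℝ) n ∩ {x | hwm.mk w x ≤ n}, fun i j hij => ?_, fun x => ?_,
    fun n => ⟨measurableSet_Icc.inter (measurableSet_le hwm.measurable_mk measurable_const),
      ?_, ?_⟩⟩
  · exact inter_subset_inter (Icc_subset_Icc (neg_le_neg (hcast hij)) (hcast hij))
      fun x (hx : hwm.mk w x ≤ i) => hx.trans (hcast hij)
  · obtain ⟨n, hn⟩ := exists_nat_ge (max |x| (hwm.mk w x))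
    exact ⟨n, abs_le.1 ((le_max_left _ _).trans hn), (le_max_right _ _).trans hn⟩
  · have hint := hw.2.integrableOn_isCompact (isCompact_Icc (a := -(n : ℝ)) (b := n))
    exact (hint.mono_set inter_subset_left).lintegral_lt_top.ne
  · filter_upwards [hwm.ae_eq_mk] with x hx
    exact indicator_apply_le' (fun h => hx.trans_le h.2) fun _ => n.cast_nonneg

lemma lintegral_ofReal_eq_iSup_indicator {μ : Measure ℝ} (hwm : AEMeasurable w μ)
    (hw : ∀ x, 0 ≤ w x) {D : ℕ → Set ℝ} (hmono : Monotone D) (hD : ∀ n, MeasurableSet (D n))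
    (hcov : ∀ x, ∃ n, x ∈ D n) :
    ∫⁻ x, ENNReal.ofReal (w x) ∂μ = ⨆ n, ∫⁻ x, ENNReal.ofReal ((D n).indicator w x) ∂μ := by
  have hmono' (x : ℝ) : Monotone fun n => ENNReal.ofReal ((D n).indicator w x) := fun i j hij =>
    ENNReal.ofReal_le_ofReal (indicator_le_indicator_of_subset (hmono hij) hw x)
  rw [← lintegral_iSup' (fun n => (hwm.indicator (hD n)).ennreal_ofReal) (.of_forall hmono')]
  refine lintegral_congr fun x => le_antisymm ?_ (iSup_le fun n =>
    ENNReal.ofReal_le_ofReal (indicator_le_self' (fun y _ => hw y) x))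
  obtain ⟨n, hn⟩ := hcov x
  exact le_iSup_of_le n (by rw [indicator_of_mem hn])

lemma two_div_mul_rpow_div_le (hr : 1 < r) (hr' : r ≤ 3 / 2) :
    2 / r * 2 ^ (2 / r + 1) / (2 / r - 1) ≤ 48 := by
  have hlow : 4 / 3 ≤ 2 / r := by rw [le_div_iff₀ (by linarith)]; linarith
  have hup : 2 / r ≤ 2 := div_le_self (by norm_num) hr.le
  have hpow : (2 : ℝ) ^ (2 / r + 1) ≤ 8 := by
    calc (2 : ℝ) ^ (2 / r + 1) ≤ 2 ^ (3 : ℝ) :=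
          Real.rpow_le_rpow_of_exponent_le (by norm_num) (by linarith)
      _ = 8 := by norm_num
  rw [div_le_iff₀ (by linarith)]
  calc 2 / r * 2 ^ (2 / r + 1) ≤ 2 * 8 := by gcongr
    _ ≤ _ := by linarith

/-- The `A₁` constant `6 / (r - 1)` degenerates as `r → 1`, the duality constant as `r → 2`. -/
lemma HilbertWeakBound.sq_mul_setLIntegral_indicator_le (H : HilbertWeakBound r A)
    (hA : 0 < A) (hr : 1 < r) (hr2 : r < 2) (hw : IsWeight w) (hf : AEMeasurable f volume)
    (hfin : dualNormSq r w f ≠ ⊤) (hD : MeasurableSet D)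
    (hwD : ∫⁻ x in D, ENNReal.ofReal (w x) ≠ ⊤) {b : ℝ} (hb : 0 ≤ b)
    (hDb : ∀ᵐ x, D.indicator w x ≤ b) (hl : 0 < lam) :
    ENNReal.ofReal (lam ^ 2) *
        ∫⁻ x in {x | lam < |Hil f x|}, ENNReal.ofReal (D.indicator w x) ≤
      ENNReal.ofReal ((2 ^ 15 * 12 ^ 2 * A) ^ 2) * dualNormSq r w f := by
  rcases le_total r (3 / 2) with h | h
  · refine (H.sq_mul_setLIntegral_indicator_le_of_duality hA hr hr2 hw hf hfin hD hwD hl).trans ?_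
    rw [mul_pow]
    gcongr
    exact (two_div_mul_rpow_div_le hr h).trans (by norm_num)
  · refine (H.sq_mul_setLIntegral_indicator_le_of_ae_le
      hA hr hr2 hw hf hfin hD hwD hb hDb hl).trans ?_
    have hC : 6 / (r - 1) ≤ 12 := by rw [div_le_iff₀ (by linarith)]; linarith
    rw [mul_pow]
    gcongr
    calc 2 ^ 29 * (6 / (r - 1)) ^ 4 ≤ 2 ^ 29 * 12 ^ 4 := by gcongr
      _ ≤ (2 ^ 15 * 12 ^ 2) ^ 2 := by norm_num

theorem HilbertWeakBound.sq_mul_setLIntegral_le_dualNormSq (H : HilbertWeakBound r A)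
    (hA : 0 < A) (hr : 1 < r) (hr2 : r < 2) (hw : IsWeight w) (hf : AEMeasurable f volume)
    (hfin : dualNormSq r w f ≠ ⊤) (hl : 0 < lam) :
    ENNReal.ofReal (lam ^ 2) * ∫⁻ x in {x | lam < |Hil f x|}, ENNReal.ofReal (w x) ≤
      ENNReal.ofReal ((2 ^ 15 * 12 ^ 2 * A) ^ 2) * dualNormSq r w f := by
  obtain ⟨D, hmono, hcov, hD⟩ := exists_exhaustion_indicator_le hw
  have hwm : AEMeasurable w volume := hw.2.aestronglyMeasurable.aemeasurable
  rw [lintegral_ofReal_eq_iSup_indicator hwm.restrict hw.1 hmono (fun n => (hD n).1) hcov,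
    ENNReal.mul_iSup]
  refine iSup_le fun n => ?_
  obtain ⟨hDm, hwD, hDn⟩ := hD n
  exact H.sq_mul_setLIntegral_indicator_le hA hr hr2 hw hf hfin hDm hwD n.cast_nonneg hDn hl

end Exhaustion

lemma mul_sqrt_le_of_sq_mul_le {a b : ℝ} (ha : 0 ≤ a) (hb : 0 ≤ b) {x y : ℝ≥0∞}
    (h : ENNReal.ofReal (a ^ 2) * x ≤ ENNReal.ofReal (b ^ 2) * y) :
    ENNReal.ofReal a * x ^ (1 / 2 : ℝ) ≤ ENNReal.ofReal b * y ^ (1 / 2 : ℝ) := by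
  have hsqrt {t : ℝ} (ht : 0 ≤ t) : ENNReal.ofReal (t ^ 2) ^ (1 / 2 : ℝ) = ENNReal.ofReal t := by
    rw [ENNReal.ofReal_rpow_of_nonneg (by positivity) (by norm_num), ← Real.sqrt_eq_rpow,
      Real.sqrt_sq ht]
  simpa only [ENNReal.mul_rpow_of_nonneg _ _ (by norm_num : (0 : ℝ) ≤ 1 / 2), hsqrt ha, hsqrt hb]
    using ENNReal.rpow_le_rpow h (by norm_num : (0 : ℝ) ≤ 1 / 2)

/-- Under the same weak `(1,1)`-type assumption as in the
extrapolation lemma, there is an absolute constant `c > 0` such that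
`‖Hf‖_{L^{2,∞}(w)} ≤ c A_r ‖f‖_{L^2((M_{α_r} w)^{2α_r/r}/w^{α_r})}` for every
weight `w` and every `f`, where `α_r = r/(2−r)`. -/
theorem statement9 :
    ∃ c : ℝ, 0 < c ∧ ∀ r A : ℝ, 1 < r → r < 2 → 0 < A →
      (∀ w f : ℝ → ℝ, IsWeight w →
          (∫⁻ x, ENNReal.ofReal |f x| * Mr r w x) < ⊤ →
          ∀ lam : ℝ, 0 < lam →
            ENNReal.ofReal lam *
                (∫⁻ x in {x : ℝ | lam < |Hil f x|}, ENNReal.ofReal (w x))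
              ≤ ENNReal.ofReal A * ∫⁻ x, ENNReal.ofReal |f x| * Mr r w x) →
      ∀ w f : ℝ → ℝ, IsWeight w → ∀ lam : ℝ, 0 < lam →
        ENNReal.ofReal lam *
            (∫⁻ x in {x : ℝ | lam < |Hil f x|}, ENNReal.ofReal (w x)) ^ ((1:ℝ)/2)
          ≤ ENNReal.ofReal (c * A) *
              (∫⁻ x, ENNReal.ofReal (f x ^ 2) *
                  Mr (r / (2 - r)) w x ^ (2 * (r / (2 - r)) / r) *
                  ENNReal.ofReal (w x) ^ (-(r / (2 - r)))) ^ ((1:ℝ)/2) := by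
  refine ⟨2 ^ 15 * 12 ^ 2, by norm_num, fun r A hr hr2 hA H w f hw lam hl => ?_⟩
  change _ ≤ _ * dualNormSq r w f ^ ((1 : ℝ) / 2)
  by_cases hf : AEMeasurable f volume
  · rcases eq_or_ne (dualNormSq r w f) ⊤ with htop | hfin
    · rw [htop, ENNReal.top_rpow_of_pos (by norm_num),
        ENNReal.mul_top (ENNReal.ofReal_pos.2 (by positivity)).ne']
      exact le_top
    · have hH : HilbertWeakBound r A := H
      exact mul_sqrt_le_of_sq_mul_le hl.le (by positivity)
        (hH.sq_mul_setLIntegral_le_dualNormSq hA hr hr2 hw hf hfin hl)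
  · have hHil (x : ℝ) : Hil f x = 0 := by
      by_contra hx
      exact hf (aemeasurable_of_Hil_ne_zero hx)
    simp [hHil, hl.not_gt]

end RT

end
end

section
/- Let Φ be a Young function and r > 1. Then for every locally integrable f and every x ∈ ℝ: M_Φ f(x) ≤ ( 2·sup_{t ≥ Φ^{−1}(1/2)} Φ(t)/t^r )^{1/r} · M_r f(x), where Φ^{−1}(1/2) = inf{t > 0 : Φ(t) ≥ 1/2}. -/
open MeasureTheory Set Filter Topology
open scoped ENNReal

noncomputable section

namespace RT

/-!
Below the level `Φ⁻¹(c)` the function `Φ` is less than `c`, and above it `Φ(t) ≤ S t^r` with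
`S = sup_{t ≥ Φ⁻¹(c)} Φ(t)/t^r`, so `Φ(t) ≤ c + S t^r` for all `t ≥ 0`. Averaging this over an
interval with `t = |f|/λ` shows that the mean of `Φ(|f|/λ)` is at most `1` as soon as the second
term has mean at most `1 - c`, that is, as soon as `λ^r` is at least `S / (1 - c)` times the mean
of `|f|^r`. The theorem is the case `c = 1/2`.
-/

section PowerDomination

variable {Φ : ℝ → ℝ} {r c t : ℝ}

/-- The generalized inverse `Φ⁻¹(c) = inf {s > 0 : Φ(s) ≥ c}`, equal to `0` if `Φ` stays
below `c` on the positive axis. -/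
def generalizedInv (Φ : ℝ → ℝ) (c : ℝ) : ℝ :=
  sInf {s : ℝ | 0 < s ∧ c ≤ Φ s}

/-- The supremum of `Φ(t) / t^r` over `t ≥ Φ⁻¹(c)`: the best constant dominating `Φ` by a multiple
of `t^r` above the level `c`. -/
def powerRatioSup (Φ : ℝ → ℝ) (r c : ℝ) : ℝ≥0∞ :=
  ⨆ (t : ℝ) (_ : generalizedInv Φ c ≤ t), ENNReal.ofReal (Φ t / t ^ r)

lemma lt_of_lt_generalizedInv (ht : 0 < t) (h : t < generalizedInv Φ c) : Φ t < c := by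
  contrapose! h
  exact csInf_le ⟨0, fun _ hs => hs.1.le⟩ ⟨ht, h⟩

lemma ofReal_le_powerRatioSup_mul_rpow (ht : 0 < t) (h : generalizedInv Φ c ≤ t) :
    ENNReal.ofReal (Φ t) ≤ powerRatioSup Φ r c * ENNReal.ofReal (t ^ r) := by
  have hpow : 0 < t ^ r := Real.rpow_pos_of_pos ht r
  calc ENNReal.ofReal (Φ t)
      = ENNReal.ofReal (Φ t / t ^ r) * ENNReal.ofReal (t ^ r) := by
        rw [← ENNReal.ofReal_mul' hpow.le, div_mul_cancel₀ _ hpow.ne']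
    _ ≤ powerRatioSup Φ r c * ENNReal.ofReal (t ^ r) := by
        gcongr
        exact le_iSup₂ (f := fun t (_ : generalizedInv Φ c ≤ t) => ENNReal.ofReal (Φ t / t ^ r)) t h

lemma ofReal_le_add_powerRatioSup_mul_rpow (hΦ : Φ 0 ≤ c) (ht : 0 ≤ t) :
    ENNReal.ofReal (Φ t) ≤
      ENNReal.ofReal c + powerRatioSup Φ r c * ENNReal.ofReal (t ^ r) := by
  rcases ht.eq_or_lt with rfl | ht
  · exact le_add_right (ENNReal.ofReal_le_ofReal hΦ)
  rcases lt_or_ge t (generalizedInv Φ c) with h | h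
  · exact le_add_right (ENNReal.ofReal_le_ofReal (lt_of_lt_generalizedInv ht h).le)
  · exact le_add_left (ofReal_le_powerRatioSup_mul_rpow ht h)

end PowerDomination

section LuxemburgMean

variable {α : Type*} [MeasurableSpace α] {μ : Measure α} {Φ : ℝ → ℝ} {f : α → ℝ} {r c l : ℝ}

/-- The averaged Luxemburg norm `inf {λ > 0 : ⨍ Φ(|f|/λ) dμ ≤ 1}`, whose supremum over the intervals
containing a point is the Orlicz maximal function. As in `MOrlicz`, the total mass is kept on the
right of the inequality instead of dividing by it. -/
def luxemburgMean (Φ : ℝ → ℝ) (f : α → ℝ) (μ : Measure α) : ℝ≥0∞ :=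
  sInf {lam : ℝ≥0∞ | ∃ l : ℝ, 0 < l ∧ lam = ENNReal.ofReal l ∧
    ∫⁻ y, ENNReal.ofReal (Φ (|f y| / l)) ∂μ ≤ μ univ}

lemma luxemburgMean_le_ofReal (hl : 0 < l)
    (h : ∫⁻ y, ENNReal.ofReal (Φ (|f y| / l)) ∂μ ≤ μ univ) :
    luxemburgMean Φ f μ ≤ ENNReal.ofReal l :=
  sInf_le ⟨l, hl, rfl, h⟩

lemma lintegral_comp_abs_div_le (hΦ : Φ 0 ≤ c) (hf : AEMeasurable f μ) (hl : 0 < l) :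
    ∫⁻ y, ENNReal.ofReal (Φ (|f y| / l)) ∂μ ≤
      ENNReal.ofReal c * μ univ +
        powerRatioSup Φ r c * ((∫⁻ y, ENNReal.ofReal (|f y| ^ r) ∂μ) / ENNReal.ofReal (l ^ r)) := by
  have hpow : AEMeasurable (fun y => ENNReal.ofReal ((|f y| / l) ^ r)) μ :=
    ((hf.abs.div_const l).pow_const r).ennreal_ofReal
  have hscale (y : α) : ENNReal.ofReal ((|f y| / l) ^ r) =
      ENNReal.ofReal (|f y| ^ r) * (ENNReal.ofReal (l ^ r))⁻¹ := by
    rw [Real.div_rpow (abs_nonneg _) hl.le, ENNReal.ofReal_div_of_pos (Real.rpow_pos_of_pos hl r),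
      div_eq_mul_inv]
  have hinv : (ENNReal.ofReal (l ^ r))⁻¹ ≠ ∞ :=
    ENNReal.inv_ne_top.2 (ENNReal.ofReal_pos.2 (Real.rpow_pos_of_pos hl r)).ne'
  calc ∫⁻ y, ENNReal.ofReal (Φ (|f y| / l)) ∂μ
      ≤ ∫⁻ y, (ENNReal.ofReal c +
          powerRatioSup Φ r c * ENNReal.ofReal ((|f y| / l) ^ r)) ∂μ :=
        lintegral_mono fun y => ofReal_le_add_powerRatioSup_mul_rpow hΦ (by positivity)
    _ = ENNReal.ofReal c * μ univ +
          powerRatioSup Φ r c * ∫⁻ y, ENNReal.ofReal ((|f y| / l) ^ r) ∂μ := by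
        rw [lintegral_add_left measurable_const, lintegral_const, lintegral_const_mul'' _ hpow]
    _ = ENNReal.ofReal c * μ univ +
          powerRatioSup Φ r c *
            ((∫⁻ y, ENNReal.ofReal (|f y| ^ r) ∂μ) / ENNReal.ofReal (l ^ r)) := by
        simp only [hscale]
        rw [lintegral_mul_const' _ _ hinv, div_eq_mul_inv]

lemma lintegral_comp_abs_div_le_measure_univ [IsFiniteMeasure μ] (hc₀ : 0 ≤ c) (hc₁ : c < 1)
    (hΦ : Φ 0 ≤ c) (hf : AEMeasurable f μ) (hl : 0 < l)
    (h : (ENNReal.ofReal (1 - c))⁻¹ * powerRatioSup Φ r c * ⨍⁻ y, ENNReal.ofReal (|f y| ^ r) ∂μ ≤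
      ENNReal.ofReal (l ^ r)) :
    ∫⁻ y, ENNReal.ofReal (Φ (|f y| / l)) ∂μ ≤ μ univ := by
  have hc : ENNReal.ofReal (1 - c) ≠ 0 := (ENNReal.ofReal_pos.2 (sub_pos.2 hc₁)).ne'
  have hmean : powerRatioSup Φ r c * (⨍⁻ y, ENNReal.ofReal (|f y| ^ r) ∂μ) /
      ENNReal.ofReal (l ^ r) ≤ ENNReal.ofReal (1 - c) := by
    rw [mul_assoc, mul_comm, ← div_eq_mul_inv, ENNReal.div_le_iff hc ENNReal.ofReal_ne_top] at h
    exact ENNReal.div_le_of_le_mul' h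
  calc ∫⁻ y, ENNReal.ofReal (Φ (|f y| / l)) ∂μ
      ≤ ENNReal.ofReal c * μ univ + powerRatioSup Φ r c *
          ((∫⁻ y, ENNReal.ofReal (|f y| ^ r) ∂μ) / ENNReal.ofReal (l ^ r)) :=
        lintegral_comp_abs_div_le hΦ hf hl
    _ = ENNReal.ofReal c * μ univ + powerRatioSup Φ r c *
          (⨍⁻ y, ENNReal.ofReal (|f y| ^ r) ∂μ) / ENNReal.ofReal (l ^ r) * μ univ := by
        rw [← measure_mul_laverage μ fun y => ENNReal.ofReal (|f y| ^ r)]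
        simp only [div_eq_mul_inv]
        ring
    _ ≤ ENNReal.ofReal c * μ univ + ENNReal.ofReal (1 - c) * μ univ := by gcongr
    _ = μ univ := by
        rw [← add_mul, ← ENNReal.ofReal_add hc₀ (sub_pos.2 hc₁).le, add_sub_cancel,
          ENNReal.ofReal_one, one_mul]

lemma luxemburgMean_le_rpow_laverage [IsFiniteMeasure μ] (hc₀ : 0 ≤ c) (hc₁ : c < 1)
    (hΦ : Φ 0 ≤ c) (hr : 0 < r) (hf : AEMeasurable f μ) :
    luxemburgMean Φ f μ ≤
      ((ENNReal.ofReal (1 - c))⁻¹ * powerRatioSup Φ r c *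
        ⨍⁻ y, ENNReal.ofReal (|f y| ^ r) ∂μ) ^ (1 / r) := by
  refine le_of_forall_gt_imp_ge_of_dense fun lam hlam => ?_
  rcases eq_or_ne lam ∞ with rfl | htop
  · exact le_top
  have hl : 0 < lam.toReal := ENNReal.toReal_pos (ne_bot_of_gt hlam) htop
  rw [← ENNReal.ofReal_toReal htop]
  refine luxemburgMean_le_ofReal hl
    (lintegral_comp_abs_div_le_measure_univ (r := r) hc₀ hc₁ hΦ hf hl ?_)
  rw [← ENNReal.ofReal_rpow_of_pos hl, ENNReal.ofReal_toReal htop]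
  exact (ENNReal.rpow_inv_le_iff hr).1 (one_div r ▸ hlam.le)

end LuxemburgMean

section MaximalOperators

variable {a b r x : ℝ} {f : ℝ → ℝ}

lemma MOrlicz_eq_iSup_luxemburgMean (Φ f : ℝ → ℝ) (x : ℝ) :
    MOrlicz Φ f x = ⨆ (a : ℝ) (b : ℝ) (_ : a < b) (_ : x ∈ Icc a b),
      luxemburgMean Φ f (volume.restrict (Ioo a b)) := by
  simp only [MOrlicz, luxemburgMean, Measure.restrict_apply_univ, Real.volume_Ioo]

lemma laverage_Ioo_le_HLMax (hab : a < b) (hx : x ∈ Icc a b) :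
    ⨍⁻ y in Ioo a b, ENNReal.ofReal |f y| ∂volume ≤ HLMax f x := by
  rw [setLAverage_eq, Real.volume_Ioo, ENNReal.div_eq_inv_mul]
  exact le_iSup₂_of_le a b (le_iSup₂_of_le hab hx le_rfl)

lemma rpow_laverage_Ioo_le_Mr (hr : 0 ≤ r) (hab : a < b) (hx : x ∈ Icc a b) :
    (⨍⁻ y in Ioo a b, ENNReal.ofReal (|f y| ^ r) ∂volume) ^ (1 / r) ≤ Mr r f x := by
  refine ENNReal.rpow_le_rpow ?_ (one_div_nonneg.2 hr)
  simpa only [abs_of_nonneg (Real.rpow_nonneg (abs_nonneg _) r)] using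
    laverage_Ioo_le_HLMax (f := fun y => |f y| ^ r) hab hx

end MaximalOperators

lemma inv_ofReal_one_sub_half : (ENNReal.ofReal (1 - 1 / 2))⁻¹ = 2 := by
  rw [← ENNReal.ofReal_inv_of_pos (by norm_num)]
  norm_num

theorem statement11_general {Φ : ℝ → ℝ} {c r : ℝ} (hc₀ : 0 ≤ c) (hc₁ : c < 1) (hΦ : Φ 0 ≤ c)
    (hr : 0 < r) {f : ℝ → ℝ} (hf : AEMeasurable f) (x : ℝ) :
    MOrlicz Φ f x ≤
      ((ENNReal.ofReal (1 - c))⁻¹ * powerRatioSup Φ r c) ^ (1 / r) * Mr r f x := by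
  rw [MOrlicz_eq_iSup_luxemburgMean]
  refine iSup₂_le fun a b => iSup₂_le fun hab hx => ?_
  calc luxemburgMean Φ f (volume.restrict (Ioo a b))
      ≤ ((ENNReal.ofReal (1 - c))⁻¹ * powerRatioSup Φ r c *
          ⨍⁻ y in Ioo a b, ENNReal.ofReal (|f y| ^ r) ∂volume) ^ (1 / r) :=
        luxemburgMean_le_rpow_laverage hc₀ hc₁ hΦ hr hf.restrict
    _ = ((ENNReal.ofReal (1 - c))⁻¹ * powerRatioSup Φ r c) ^ (1 / r) *
          (⨍⁻ y in Ioo a b, ENNReal.ofReal (|f y| ^ r) ∂volume) ^ (1 / r) :=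
        ENNReal.mul_rpow_of_nonneg _ _ (one_div_nonneg.2 hr.le)
    _ ≤ ((ENNReal.ofReal (1 - c))⁻¹ * powerRatioSup Φ r c) ^ (1 / r) * Mr r f x := by
        gcongr
        exact rpow_laverage_Ioo_le_Mr hr.le hab hx

/-- **Lemma 4.1.** For a Young function `Φ` and `r > 1`,
`M_Φ f(x) ≤ (2 sup_{t ≥ Φ^{-1}(1/2)} Φ(t)/t^r)^{1/r} M_r f(x)`, where
`Φ^{-1}(1/2) = inf {t > 0 : Φ(t) ≥ 1/2}`. -/
theorem statement11 (Φ : ℝ → ℝ) (hΦ : IsYoung Φ) (r : ℝ) (hr : 1 < r)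
    (f : ℝ → ℝ) (hf : LocallyIntegrable f volume) (x : ℝ) :
    MOrlicz Φ f x
      ≤ (2 * ⨆ (t : ℝ) (_ : sInf {s : ℝ | 0 < s ∧ 1/2 ≤ Φ s} ≤ t),
            ENNReal.ofReal (Φ t / t ^ r)) ^ (1 / r) * Mr r f x := by
  rw [← inv_ofReal_one_sub_half]
  exact statement11_general one_half_pos.le one_half_lt_one (by norm_num [hΦ.map_zero])
    (zero_lt_one.trans hr) hf.aestronglyMeasurable.aemeasurable x

end RT

end
end

section
/- Let Φ be a Young function. Then there exists a constant c > 0, depending only on Φ and not on r, such that for every r ∈ (1,2), every locally integrable f, and every x ∈ ℝ: M_Φ f(x) ≤ c·( sup_{t ≥ 1} Φ(t)^{1/r}/t )·M_r f(x). -/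
/-!
Normalise Lebesgue measure on an interval to a probability measure `μ`. With
`S = sup_{t ≥ 1} Φ(t)^{1/r}/t`, monotonicity of `Φ` below `1` and the definition of `S` above `1`
give `Φ(u) ≤ Φ(1) + (S u)^r` for every `u ≥ 0`. Taking `u = |f|/l` and integrating,
`∫ Φ(|f|/l) dμ ≤ Φ(1) + 1` whenever `l ≥ S ‖f‖_{L^r(μ)}`. Convexity gives `Φ(u/K) ≤ Φ(u)/K` for
`K = Φ(1) + 1 ≥ 1`, so the Luxemburg norm of `f` is at most `K S ‖f‖_{L^r(μ)}`, and it remains to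
take the supremum over the intervals containing `x`. All of this takes place in `[0, ∞]`, where
`0 · ∞ = 0` makes the estimates valid for `S = ∞` as well.
-/

open MeasureTheory Set Filter Topology
open scoped ENNReal

noncomputable section

namespace RT

/-- The constant `sup_{t ≥ 1} Φ(t)^{1/r}/t`, which compares the growth of `Φ` with that of `t^r`.
It is `∞` when `Φ` grows faster than every multiple of `t^r`. -/
def growthSup (Φ : ℝ → ℝ) (r : ℝ) : ℝ≥0∞ :=
  ⨆ (t : ℝ) (_ : 1 ≤ t), ENNReal.ofReal (Φ t ^ (1 / r) / t)

/-- The Luxemburg norm `inf {l > 0 : ∫ Φ(‖f‖/l) dμ ≤ 1}` of the Orlicz space of `Φ`. It takes the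
value `∞` when no `l` is admissible. -/
def luxemburgNorm {α E : Type*} [MeasurableSpace α] [Norm E]
    (Φ : ℝ → ℝ) (f : α → E) (μ : Measure α) : ℝ≥0∞ :=
  ⨅ (l : ℝ) (_ : 0 < l) (_ : ∫⁻ y, ENNReal.ofReal (Φ (‖f y‖ / l)) ∂μ ≤ 1), ENNReal.ofReal l

section YoungFunction

variable {Φ : ℝ → ℝ}

theorem nonneg_of_monotoneOn_of_map_zero (hmono : MonotoneOn Φ (Ici 0)) (hzero : Φ 0 = 0)
    {t : ℝ} (ht : 0 ≤ t) : 0 ≤ Φ t :=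
  hzero ▸ hmono self_mem_Ici ht ht

theorem map_div_le_div_of_convexOn (hconv : ConvexOn ℝ (Ici 0) Φ) (hzero : Φ 0 = 0)
    {t K : ℝ} (ht : 0 ≤ t) (hK : 1 ≤ K) : Φ (t / K) ≤ Φ t / K := by
  have hK_inv : K⁻¹ ≤ 1 := inv_le_one_of_one_le₀ hK
  have h := hconv.2 (mem_Ici.2 ht) self_mem_Ici (by positivity) (sub_nonneg.2 hK_inv)
    (add_sub_cancel _ _)
  simpa only [smul_eq_mul, mul_zero, add_zero, hzero, ← div_eq_inv_mul] using h

theorem ofReal_map_le_growthSup_mul_rpow {r t : ℝ} (hr : 0 < r) (hΦt : 0 ≤ Φ t) (ht : 1 ≤ t) :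
    ENNReal.ofReal (Φ t) ≤ (growthSup Φ r * ENNReal.ofReal t) ^ r := by
  have ht₀ : 0 < t := by positivity
  have hroot : ENNReal.ofReal (Φ t ^ (1 / r)) ≤ growthSup Φ r * ENNReal.ofReal t :=
    calc ENNReal.ofReal (Φ t ^ (1 / r))
        = ENNReal.ofReal (Φ t ^ (1 / r) / t) * ENNReal.ofReal t := by
          rw [← ENNReal.ofReal_mul' ht₀.le, div_mul_cancel₀ _ ht₀.ne']
      _ ≤ growthSup Φ r * ENNReal.ofReal t := by
          gcongr
          exact le_iSup₂ (f := fun t (_ : 1 ≤ t) => ENNReal.ofReal (Φ t ^ (1 / r) / t)) t ht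
  calc ENNReal.ofReal (Φ t) = ENNReal.ofReal (Φ t ^ (1 / r)) ^ r := by
        rw [ENNReal.ofReal_rpow_of_nonneg (by positivity) hr.le, one_div,
          Real.rpow_inv_rpow hΦt hr.ne']
    _ ≤ (growthSup Φ r * ENNReal.ofReal t) ^ r := by gcongr

theorem ofReal_map_le_map_one_add_growthSup_mul_rpow (hmono : MonotoneOn Φ (Ici 0))
    (hzero : Φ 0 = 0) {r t : ℝ} (hr : 0 < r) (ht : 0 ≤ t) :
    ENNReal.ofReal (Φ t) ≤ ENNReal.ofReal (Φ 1) + (growthSup Φ r * ENNReal.ofReal t) ^ r := by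
  rcases le_total t 1 with ht₁ | ht₁
  · have hΦ : Φ t ≤ Φ 1 := hmono ht (mem_Ici.2 zero_le_one) ht₁
    exact le_add_right (ENNReal.ofReal_le_ofReal hΦ)
  · have hΦt := nonneg_of_monotoneOn_of_map_zero hmono hzero ht
    exact le_add_left (ofReal_map_le_growthSup_mul_rpow hr hΦt ht₁)

end YoungFunction

section LuxemburgNorm

variable {α E : Type*} [MeasurableSpace α] {μ : Measure α} [SeminormedAddCommGroup E]
  {Φ : ℝ → ℝ} {f : α → E}

theorem luxemburgNorm_le_ofReal {l : ℝ} (hl : 0 < l)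
    (h : ∫⁻ y, ENNReal.ofReal (Φ (‖f y‖ / l)) ∂μ ≤ 1) :
    luxemburgNorm Φ f μ ≤ ENNReal.ofReal l :=
  iInf_le_of_le l <| iInf₂_le hl h

theorem luxemburgNorm_le_mul_of_lintegral_le (hconv : ConvexOn ℝ (Ici 0) Φ) (hzero : Φ 0 = 0)
    {K l : ℝ} (hK : 1 ≤ K) (hl : 0 < l)
    (h : ∫⁻ y, ENNReal.ofReal (Φ (‖f y‖ / l)) ∂μ ≤ ENNReal.ofReal K) :
    luxemburgNorm Φ f μ ≤ ENNReal.ofReal K * ENNReal.ofReal l := by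
  have hK₀ : 0 < K := by positivity
  have hpoint (y : α) : ENNReal.ofReal (Φ (‖f y‖ / (K * l))) ≤
      (ENNReal.ofReal K)⁻¹ * ENNReal.ofReal (Φ (‖f y‖ / l)) := by
    rw [← ENNReal.ofReal_inv_of_pos hK₀, ← ENNReal.ofReal_mul (by positivity), ← div_eq_inv_mul,
      mul_comm K, ← div_div]
    exact ENNReal.ofReal_le_ofReal
      (map_div_le_div_of_convexOn hconv hzero (by positivity) hK)
  have hK_inv_ne_top : (ENNReal.ofReal K)⁻¹ ≠ ∞ := by simpa using hK₀
  rw [← ENNReal.ofReal_mul hK₀.le]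
  refine luxemburgNorm_le_ofReal (by positivity) ?_
  calc ∫⁻ y, ENNReal.ofReal (Φ (‖f y‖ / (K * l))) ∂μ
      ≤ ∫⁻ y, (ENNReal.ofReal K)⁻¹ * ENNReal.ofReal (Φ (‖f y‖ / l)) ∂μ := lintegral_mono hpoint
    _ = (ENNReal.ofReal K)⁻¹ * ∫⁻ y, ENNReal.ofReal (Φ (‖f y‖ / l)) ∂μ :=
        lintegral_const_mul' _ _ hK_inv_ne_top
    _ ≤ (ENNReal.ofReal K)⁻¹ * ENNReal.ofReal K := by gcongr
    _ ≤ 1 := ENNReal.inv_mul_le_one _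

theorem lintegral_ofReal_map_norm_div_le (hmono : MonotoneOn Φ (Ici 0)) (hzero : Φ 0 = 0)
    {r l : ℝ} (hr : 0 < r) (hl : 0 < l) (hf : AEStronglyMeasurable f μ) :
    ∫⁻ y, ENNReal.ofReal (Φ (‖f y‖ / l)) ∂μ ≤
      ENNReal.ofReal (Φ 1) * μ univ + (growthSup Φ r * eLpNorm' f r μ / ENNReal.ofReal l) ^ r := by
  set S := growthSup Φ r
  have hpoint (y : α) : ENNReal.ofReal (Φ (‖f y‖ / l)) ≤
      ENNReal.ofReal (Φ 1) + (S / ENNReal.ofReal l) ^ r * ‖f y‖ₑ ^ r := by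
    have h := ofReal_map_le_map_one_add_growthSup_mul_rpow hmono hzero hr
      (show 0 ≤ ‖f y‖ / l by positivity)
    rwa [ENNReal.ofReal_div_of_pos hl, ofReal_norm, ← mul_div_assoc, ENNReal.mul_div_right_comm,
      ENNReal.mul_rpow_of_nonneg _ _ hr.le] at h
  calc ∫⁻ y, ENNReal.ofReal (Φ (‖f y‖ / l)) ∂μ
      ≤ ∫⁻ y, (ENNReal.ofReal (Φ 1) + (S / ENNReal.ofReal l) ^ r * ‖f y‖ₑ ^ r) ∂μ :=
        lintegral_mono hpoint
    _ = ENNReal.ofReal (Φ 1) * μ univ + (S / ENNReal.ofReal l) ^ r * ∫⁻ y, ‖f y‖ₑ ^ r ∂μ := by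
        rw [lintegral_add_left measurable_const, lintegral_const,
          lintegral_const_mul'' _ (hf.enorm.pow_const r)]
    _ = ENNReal.ofReal (Φ 1) * μ univ + (S * eLpNorm' f r μ / ENNReal.ofReal l) ^ r := by
        rw [lintegral_rpow_enorm_eq_rpow_eLpNorm' hr, ← ENNReal.mul_rpow_of_nonneg _ _ hr.le,
          ENNReal.mul_div_right_comm]

theorem luxemburgNorm_le_growthSup_mul_eLpNorm' [IsZeroOrProbabilityMeasure μ]
    (hconv : ConvexOn ℝ (Ici 0) Φ) (hmono : MonotoneOn Φ (Ici 0)) (hzero : Φ 0 = 0)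
    {r : ℝ} (hr : 0 < r) (hf : AEStronglyMeasurable f μ) :
    luxemburgNorm Φ f μ ≤ ENNReal.ofReal (Φ 1 + 1) * (growthSup Φ r * eLpNorm' f r μ) := by
  have hΦ₁ : 0 ≤ Φ 1 := nonneg_of_monotoneOn_of_map_zero hmono hzero zero_le_one
  set N := growthSup Φ r * eLpNorm' f r μ
  have hadmissible (l : ℝ) (hl : 0 < l) (hN : N ≤ ENNReal.ofReal l) :
      luxemburgNorm Φ f μ ≤ ENNReal.ofReal (Φ 1 + 1) * ENNReal.ofReal l := by
    refine luxemburgNorm_le_mul_of_lintegral_le hconv hzero (by linarith) hl ?_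
    calc ∫⁻ y, ENNReal.ofReal (Φ (‖f y‖ / l)) ∂μ
        ≤ ENNReal.ofReal (Φ 1) * μ univ + (N / ENNReal.ofReal l) ^ r :=
          lintegral_ofReal_map_norm_div_le hmono hzero hr hl hf
      _ ≤ ENNReal.ofReal (Φ 1) * 1 + 1 ^ r := by
          gcongr
          · exact prob_le_one
          · exact ENNReal.div_le_of_le_mul (by rwa [one_mul])
      _ = ENNReal.ofReal (Φ 1 + 1) := by
          rw [mul_one, ENNReal.one_rpow, ENNReal.ofReal_add hΦ₁ zero_le_one, ENNReal.ofReal_one]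
  have hK : ENNReal.ofReal (Φ 1 + 1) ≠ 0 := by
    rw [ENNReal.ofReal_ne_zero_iff]
    positivity
  rw [← ENNReal.div_le_iff' hK ENNReal.ofReal_ne_top]
  refine le_of_forall_gt_imp_ge_of_dense fun l hl => ?_
  rcases eq_or_ne l ∞ with rfl | hl_top
  · exact le_top
  · rw [ENNReal.div_le_iff' hK ENNReal.ofReal_ne_top, ← ENNReal.ofReal_toReal hl_top]
    refine hadmissible l.toReal (ENNReal.toReal_pos hl.ne_bot hl_top) ?_
    rw [ENNReal.ofReal_toReal hl_top]
    exact hl.le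

end LuxemburgNorm

section MaximalFunctions

open scoped ProbabilityTheory

theorem lintegral_cond {α : Type*} [MeasurableSpace α] (μ : Measure α) (s : Set α)
    (g : α → ℝ≥0∞) : ∫⁻ y, g y ∂μ[|s] = (μ s)⁻¹ * ∫⁻ y in s, g y ∂μ := by
  rw [ProbabilityTheory.cond, lintegral_smul_measure, smul_eq_mul]

theorem MOrlicz_eq_iSup_luxemburgNorm (Φ : ℝ → ℝ) (f : ℝ → ℝ) (x : ℝ) :
    MOrlicz Φ f x = ⨆ (a : ℝ) (b : ℝ) (_ : a < b) (_ : x ∈ Icc a b),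
      luxemburgNorm Φ f (volume[|Ioo a b]) := by
  refine iSup_congr fun a => iSup_congr fun b => iSup_congr fun hab => iSup_congr fun _ => ?_
  have hlen : ENNReal.ofReal (b - a) ≠ 0 := by simpa using hab
  simp only [luxemburgNorm, lintegral_cond, Real.volume_Ioo, Real.norm_eq_abs,
    ENNReal.inv_mul_le_iff hlen ENNReal.ofReal_ne_top, mul_one]
  simp only [sInf_eq_iInf, mem_ofPred_eq, iInf_exists, iInf_and]
  rw [iInf_comm]
  refine iInf_congr fun l => ?_
  rw [iInf_comm]
  simp only [iInf_iInf_eq_left]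

theorem Mr_eq_iSup_eLpNorm' {r : ℝ} (hr : 0 < r) (f : ℝ → ℝ) (x : ℝ) :
    Mr r f x = ⨆ (a : ℝ) (b : ℝ) (_ : a < b) (_ : x ∈ Icc a b),
      eLpNorm' f r (volume[|Ioo a b]) := by
  have henorm (y : ℝ) : ENNReal.ofReal |(|f y| ^ r)| = ‖f y‖ₑ ^ r := by
    rw [abs_of_nonneg (by positivity), ← ENNReal.ofReal_rpow_of_nonneg (abs_nonneg _) hr.le,
      ← Real.enorm_eq_ofReal_abs]
  simp only [Mr, HLMax, henorm, eLpNorm'_eq_lintegral_enorm, lintegral_cond, Real.volume_Ioo]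
  simp only [← ENNReal.orderIsoRpow_apply _ (one_div_pos.2 hr), OrderIso.map_iSup]

end MaximalFunctions

theorem statement12_general {Φ : ℝ → ℝ} (hconv : ConvexOn ℝ (Ici 0) Φ)
    (hmono : MonotoneOn Φ (Ici 0)) (hzero : Φ 0 = 0) {r : ℝ} (hr : 0 < r) {f : ℝ → ℝ}
    (hf : AEStronglyMeasurable f volume) (x : ℝ) :
    MOrlicz Φ f x ≤ ENNReal.ofReal (Φ 1 + 1) * growthSup Φ r * Mr r f x := by
  rw [MOrlicz_eq_iSup_luxemburgNorm, Mr_eq_iSup_eLpNorm' hr]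
  simp only [ENNReal.mul_iSup, mul_assoc]
  gcongr with a b
  refine luxemburgNorm_le_growthSup_mul_eLpNorm' hconv hmono hzero hr ?_
  exact hf.mono_ac ProbabilityTheory.cond_absolutelyContinuous

/-- **inequality (4.2).** For a Young function `Φ` there is
`c > 0`, depending only on `Φ` and not on `r`, such that for all `r ∈ (1,2)`,
all locally integrable `f` and all `x`:
`M_Φ f(x) ≤ c (sup_{t ≥ 1} Φ(t)^{1/r}/t) M_r f(x)`. -/
theorem statement12 (Φ : ℝ → ℝ) (hΦ : IsYoung Φ) :
    ∃ c : ℝ, 0 < c ∧ ∀ r : ℝ, 1 < r → r < 2 →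
      ∀ f : ℝ → ℝ, LocallyIntegrable f volume → ∀ x : ℝ,
        MOrlicz Φ f x
          ≤ ENNReal.ofReal c *
              (⨆ (t : ℝ) (_ : 1 ≤ t), ENNReal.ofReal (Φ t ^ (1 / r) / t)) *
              Mr r f x := by
  have hΦ₁ : 0 ≤ Φ 1 := nonneg_of_monotoneOn_of_map_zero hΦ.mono hΦ.map_zero zero_le_one
  exact ⟨Φ 1 + 1, by positivity, fun r hr _ f hf x =>
    statement12_general hΦ.convexOn hΦ.mono hΦ.map_zero (by positivity) hf.aestronglyMeasurable x⟩

end RT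

end
end
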